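/- Every decomposable 7-dimensional real nilpotent Lie algebra is an Einstein nilradical; that is, if μ is a nilpotent Lie algebra law on ℝ⁷ such that (ℝ⁷, μ) is isomorphic to a direct sum of two nonzero nilpotent Lie algebras, then μ is an Einstein nilradical. -/

import Mathlib

open Matrix BigOperators Polynomial

noncomputable section

abbrev Law (n : ℕ) := (Fin n → ℝ) → (Fin n → ℝ) → (Fin n → ℝ)

/-- `i`-th canonical basis vector of `ℝ^n`. -/
def bVec {n : ℕ} (i : Fin n) : Fin n → ℝ := Pi.single i 1

def IsBilin {n : ℕ} (μ : Law n) : Prop :=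
  (∀ X, IsLinearMap ℝ (μ X)) ∧ (∀ Y, IsLinearMap ℝ (fun X => μ X Y))

def IsSkew {n : ℕ} (μ : Law n) : Prop := ∀ X Y, μ X Y = - μ Y X

def IsJacobi {n : ℕ} (μ : Law n) : Prop :=
  ∀ X Y Z, μ (μ X Y) Z + μ (μ Y Z) X + μ (μ Z X) Y = 0

def IsLieLaw {n : ℕ} (μ : Law n) : Prop := IsBilin μ ∧ IsSkew μ ∧ IsJacobi μ

/-- lower central series of the law `μ`. -/
def lcs {n : ℕ} (μ : Law n) : ℕ → Submodule ℝ (Fin n → ℝ)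
  | 0 => ⊤
  | k + 1 => Submodule.span ℝ {z | ∃ x y, y ∈ lcs μ k ∧ z = μ x y}

def IsNilpotentLaw {n : ℕ} (μ : Law n) : Prop :=
  IsLieLaw μ ∧ ∃ k, lcs μ k = ⊥

/-- the action of `GL_n(ℝ)` on laws: `(g·μ)(X,Y) = g μ(g⁻¹X, g⁻¹Y)`. -/
def act {n : ℕ} (g : GL (Fin n) ℝ) (μ : Law n) : Law n :=
  fun X Y =>
    (g : Matrix (Fin n) (Fin n) ℝ).mulVec
      (μ (((g⁻¹ : GL (Fin n) ℝ) : Matrix (Fin n) (Fin n) ℝ).mulVec X)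
         (((g⁻¹ : GL (Fin n) ℝ) : Matrix (Fin n) (Fin n) ℝ).mulVec Y))

def IsDerivation {n : ℕ} (μ : Law n) (ψ : Matrix (Fin n) (Fin n) ℝ) : Prop :=
  ∀ X Y, ψ.mulVec (μ X Y) = μ (ψ.mulVec X) Y + μ X (ψ.mulVec Y)

/-- the unnormalized moment map `m(μ) = 4 Ric_μ`, as a matrix in the canonical basis. -/
def momentMap {n : ℕ} (μ : Law n) : Matrix (Fin n) (Fin n) ℝ :=
  Matrix.of fun k l =>
    4 * (-(1/2) * ∑ i, ∑ j, μ (bVec k) (bVec i) j * μ (bVec l) (bVec i) j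
      + (1/4) * ∑ i, ∑ j, μ (bVec i) (bVec j) k * μ (bVec i) (bVec j) l)

def IsEinsteinNilradical {n : ℕ} (μ : Law n) : Prop :=
  ∃ g : GL (Fin n) ℝ, ∃ c : ℝ, ∃ φ : Matrix (Fin n) (Fin n) ℝ,
    c < 0 ∧ φ.IsSymm ∧ IsDerivation (act g μ) φ ∧
    momentMap (act g μ) = c • (1 : Matrix (Fin n) (Fin n) ℝ) + φ

/-- build a (bilinear) law from a table `c` of structure constants on the
canonical basis, antisymmetrized: `[e_i, e_j] = c i j - c j i`. -/
def mkLaw {n : ℕ} (c : Fin n → Fin n → Fin n → ℝ) : Law n :=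
  fun X Y k => ∑ i, ∑ j, X i * Y j * (c i j k - c j i k)


/-! ### Solitons in terms of structure constants -/

/-- moment map of structure constants -/
def mmC {ι : Type} [Fintype ι] (C : ι → ι → ι → ℝ) (k l : ι) : ℝ :=
  -2 * ∑ i, ∑ j, C k i j * C l i j + ∑ i, ∑ j, C i j k * C i j l

/-- the soliton equation with constant `-1` -/
def SolC {ι : Type} [Fintype ι] [DecidableEq ι] (C : ι → ι → ι → ℝ) : Prop :=
  ∀ i j l, ∑ k, (mmC C l k + if l = k then 1 else 0) * C i j k
    = ∑ k, (mmC C k i + if k = i then 1 else 0) * C k j l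
      + ∑ k, (mmC C k j + if k = j then 1 else 0) * C i k l

def Good (L : Type) [LieRing L] [LieAlgebra ℝ L] : Prop :=
  ∃ (ι : Type) (_ : Fintype ι) (_ : DecidableEq ι) (b : Module.Basis ι ℝ L) (C : ι → ι → ι → ℝ),
    (∀ i j, ⁅b i, b j⁆ = ∑ k, C i j k • b k) ∧ SolC C

lemma SolC.reindex {ι κ : Type} [Fintype ι] [DecidableEq ι] [Fintype κ] [DecidableEq κ]
    (e : κ ≃ ι) (C : ι → ι → ι → ℝ) (h : SolC C) :
    SolC (fun i j k => C (e i) (e j) (e k)) := by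
  have hm : ∀ k l, mmC (fun i j k => C (e i) (e j) (e k)) k l = mmC C (e k) (e l) := by
    intro k l
    simp only [mmC]
    congr 1
    · congr 1
      rw [← e.sum_comp (fun i => ∑ j, C (e k) i j * C (e l) i j)]
      refine Finset.sum_congr rfl fun i _ => ?_
      rw [← e.sum_comp (fun j => C (e k) (e i) j * C (e l) (e i) j)]
    · rw [← e.sum_comp (fun i => ∑ j, C i j (e k) * C i j (e l))]
      refine Finset.sum_congr rfl fun i _ => ?_
      rw [← e.sum_comp (fun j => C (e i) j (e k) * C (e i) j (e l))]
  intro i j l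
  have := h (e i) (e j) (e l)
  rw [← e.sum_comp, ← e.sum_comp, ← e.sum_comp] at this
  simpa [hm] using this

/-- block structure constants -/
def sumC {ι κ : Type} (C : ι → ι → ι → ℝ) (E : κ → κ → κ → ℝ) : ι ⊕ κ → ι ⊕ κ → ι ⊕ κ → ℝ
  | .inl i, .inl j, .inl k => C i j k
  | .inr i, .inr j, .inr k => E i j k
  | _, _, _ => 0

section
variable {ι κ : Type} (C : ι → ι → ι → ℝ) (E : κ → κ → κ → ℝ)
@[simp] lemma sumC_1 (i j k) : sumC C E (.inl i) (.inl j) (.inl k) = C i j k := rfl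
@[simp] lemma sumC_2 (i j k) : sumC C E (.inr i) (.inr j) (.inr k) = E i j k := rfl
@[simp] lemma sumC_3 (i j k) : sumC C E (.inl i) (.inl j) (.inr k) = 0 := rfl
@[simp] lemma sumC_4 (i j k) : sumC C E (.inr i) (.inr j) (.inl k) = 0 := rfl
@[simp] lemma sumC_5 (i j k) : sumC C E (.inl i) (.inr j) k = 0 := by cases k <;> rfl
@[simp] lemma sumC_6 (i j k) : sumC C E (.inr i) (.inl j) k = 0 := by cases k <;> rfl
variable [Fintype ι] [Fintype κ]
lemma mm_sumC_1 (i j) : mmC (sumC C E) (.inl i) (.inl j) = mmC C i j := by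
  simp [mmC, Fintype.sum_sum_type]
lemma mm_sumC_2 (i j) : mmC (sumC C E) (.inr i) (.inr j) = mmC E i j := by
  simp [mmC, Fintype.sum_sum_type]
lemma mm_sumC_3 (i j) : mmC (sumC C E) (.inl i) (.inr j) = 0 := by
  simp [mmC, Fintype.sum_sum_type]
lemma mm_sumC_4 (i j) : mmC (sumC C E) (.inr i) (.inl j) = 0 := by
  simp [mmC, Fintype.sum_sum_type]
end

lemma mmC_sum_aux {ι κ : Type} [Fintype ι] [Fintype κ] [DecidableEq ι] [DecidableEq κ]
    (C : ι → ι → ι → ℝ) (E : κ → κ → κ → ℝ) (hC : SolC C) (hE : SolC E) :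
    SolC (sumC C E) := by
  intro i j l
  have h1 := fun i j l => hC i j l
  have h2 := fun i j l => hE i j l
  rcases i with i | i <;> rcases j with j | j <;> rcases l with l | l <;>
    simp only [Fintype.sum_sum_type, mm_sumC_1, mm_sumC_2, mm_sumC_3, mm_sumC_4, sumC_1, sumC_2,
      sumC_3, sumC_4, sumC_5, sumC_6, Sum.inl.injEq, Sum.inr.injEq, reduceCtorEq, if_false,
      mul_zero, zero_mul, add_zero, zero_add, Finset.sum_const_zero, h1, h2]

lemma good_of_sum {L L₁ L₂ : Type} [LieRing L] [LieAlgebra ℝ L] [LieRing L₁] [LieAlgebra ℝ L₁]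
    [LieRing L₂] [LieAlgebra ℝ L₂] (h₁ : Good L₁) (h₂ : Good L₂)
    (T : L ≃ₗ[ℝ] L₁ × L₂) (hT : ∀ x y, T ⁅x, y⁆ = (⁅(T x).1, (T y).1⁆, ⁅(T x).2, (T y).2⁆)) :
    Good L := by
  obtain ⟨ι, _, _, b, C, hb, hC⟩ := h₁
  obtain ⟨κ, _, _, d, E, hd, hE⟩ := h₂
  refine ⟨ι ⊕ κ, inferInstance, inferInstance, (b.prod d).map T.symm, _, ?_, mmC_sum_aux C E hC hE⟩
  intro x y
  apply T.injective
  rw [hT]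
  rcases x with x | x <;> rcases y with y | y <;>
    simp [Fintype.sum_sum_type, hb, hd, map_sum, Prod.ext_iff, Prod.fst_sum, Prod.snd_sum]

/-- Lie algebra attached to a law. -/
def LA {n : ℕ} (_μ : Law n) : Type := Fin n → ℝ

instance {n : ℕ} (μ : Law n) : AddCommGroup (LA μ) := inferInstanceAs (AddCommGroup (Fin n → ℝ))
instance {n : ℕ} (μ : Law n) : Module ℝ (LA μ) := inferInstanceAs (Module ℝ (Fin n → ℝ))
instance {n : ℕ} (μ : Law n) : Module.Finite ℝ (LA μ) :=
  inferInstanceAs (Module.Finite ℝ (Fin n → ℝ))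

lemma LA_finrank {n : ℕ} (μ : Law n) : Module.finrank ℝ (LA μ) = n := by
  have : Module.finrank ℝ (Fin n → ℝ) = n := by simp
  exact this

@[reducible] def laRing {n : ℕ} (μ : Law n) (h : IsLieLaw μ) : LieRing (LA μ) where
  bracket := μ
  add_lie x y z := (h.1.2 z).map_add x y
  lie_add x y z := (h.1.1 x).map_add y z
  lie_self x := by
    have := h.2.1 x x
    have h2 : (2:ℝ) • μ x x = 0 := by
      rw [two_smul]; nth_rewrite 1 [this]; simp
    exact (smul_eq_zero.mp h2).resolve_left two_ne_zero
  leibniz_lie x y z := by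
    have hJ := h.2.2 x y z
    have e1 : μ (μ y z) x = - μ x (μ y z) := h.2.1 _ _
    have e2 : μ (μ z x) y = μ y (μ x z) := by
      rw [h.2.1 (μ z x) y, h.2.1 z x, ← neg_one_smul ℝ (μ x z), (h.1.1 y).map_smul]
      simp
    rw [e1, e2] at hJ
    change μ x (μ y z) = μ (μ x y) z + μ y (μ x z)
    have : μ x (μ y z) = μ (μ x y) z + μ y (μ x z) - (μ (μ x y) z + -μ x (μ y z) + μ y (μ x z)) := by
      abel
    rw [this, hJ]
    simp

@[reducible] def laAlg {n : ℕ} (μ : Law n) (h : IsLieLaw μ) :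
    @LieAlgebra ℝ (LA μ) _ (laRing μ h) :=
  letI := laRing μ h
  { (inferInstance : Module ℝ (LA μ)) with
    lie_smul := fun t x y => (h.1.1 x).map_smul t y }

lemma einstein_of_good {n : ℕ} (μ : Law n) (h : IsLieLaw μ)
    (hg : @Good (LA μ) (laRing μ h) (laAlg μ h)) : IsEinsteinNilradical μ := by
  let _ := laRing μ h
  let _ := laAlg μ h
  obtain ⟨ι, _, _, b₀, C₀, hb₀, hC₀⟩ := hg
  have hcard : Fintype.card ι = n := by
    rw [← Module.finrank_eq_card_basis b₀]; exact LA_finrank μ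
  let e : Fin n ≃ ι := (Fintype.equivFinOfCardEq hcard).symm
  obtain ⟨b, C, hb, hC⟩ : ∃ (b : Module.Basis (Fin n) ℝ (Fin n → ℝ)) (C : Fin n → Fin n → Fin n → ℝ),
      (∀ i j, μ (b i) (b j) = ∑ k, C i j k • b k) ∧ SolC C := by
    refine ⟨b₀.reindex e.symm, fun i j k => C₀ (e i) (e j) (e k), ?_, hC₀.reindex e⟩
    intro i j
    have := hb₀ (e i) (e j)
    rw [← e.sum_comp] at this
    have hr : ∀ i, (b₀.reindex e.symm) i = b₀ (e i) := fun i => by simp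
    simp only [← hr] at this
    exact this
  -- matrix of b
  let P : Matrix (Fin n) (Fin n) ℝ := Matrix.of fun i j => b j i
  let Q : Matrix (Fin n) (Fin n) ℝ := Matrix.of fun i j => b.repr (bVec j) i
  have hP : ∀ j, P *ᵥ bVec j = b j := by
    intro j; ext i; simp [P, bVec]
  have hQ : ∀ j, Q *ᵥ b j = bVec j := by
    intro j
    have hQlin : ∀ v, Q *ᵥ v = fun i => b.repr v i := by
      intro v
      have hv : v = ∑ j, v j • (bVec j : Fin n → ℝ) := by
        ext i; simp [bVec, Pi.single_apply]
      ext i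
      conv_rhs => rw [hv]
      simp [Q, Matrix.mulVec, dotProduct, map_sum, mul_comm]
    rw [hQlin]; ext i; simp [bVec, Finsupp.single_apply, Pi.single_apply, eq_comm]
  have hext : ∀ M : Matrix (Fin n) (Fin n) ℝ, (∀ j, M *ᵥ bVec j = bVec j) → M = 1 := by
    intro M hM
    ext i j
    have := congrFun (hM j) i
    simpa [bVec, Pi.single_apply, Matrix.one_apply] using this
  have hQP : Q * P = 1 := hext _ fun j => by rw [← Matrix.mulVec_mulVec, hP, hQ]
  have hPQ : P * Q = 1 := mul_eq_one_comm.mp hQP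
  let g : GL (Fin n) ℝ := ⟨Q, P, hQP, hPQ⟩
  have hact : ∀ i j, act g μ (bVec i) (bVec j) = fun k => C i j k := by
    intro i j
    change Q *ᵥ μ (P *ᵥ bVec i) (P *ᵥ bVec j) = _
    rw [hP, hP, hb, Matrix.mulVec_sum]
    simp only [Matrix.mulVec_smul, hQ]
    ext k; simp [bVec, Pi.single_apply]
  have hmm : momentMap (act g μ) = Matrix.of (mmC C) := by
    ext k l
    simp only [momentMap, mmC, Matrix.of_apply, hact]
    ring
  have hactbil : ∀ X Y, act g μ X Y = ∑ i, ∑ j, (X i * Y j) • (fun k => C i j k) := by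
    intro X Y
    have hv : ∀ v : Fin n → ℝ, v = ∑ j, v j • (bVec j : Fin n → ℝ) := by
      intro v; ext i; simp [bVec, Pi.single_apply]
    let B : (Fin n → ℝ) →ₗ[ℝ] (Fin n → ℝ) →ₗ[ℝ] (Fin n → ℝ) :=
      LinearMap.mk₂ ℝ (act g μ)
        (by intro a b c; simp [act, Matrix.mulVec_add, (h.1.2 _).map_add])
        (by intro a b c; simp [act, Matrix.mulVec_smul, (h.1.2 _).map_smul])
        (by intro a b c; simp [act, Matrix.mulVec_add, (h.1.1 _).map_add])
        (by intro a b c; simp [act, Matrix.mulVec_smul, (h.1.1 _).map_smul])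
    have hB : ∀ X Y, act g μ X Y = B X Y := fun _ _ => rfl
    rw [hB]
    conv_lhs => rw [hv X, hv Y]
    simp only [map_sum, LinearMap.sum_apply, map_smul, LinearMap.smul_apply, ← hB, hact]
    simp only [Finset.smul_sum]
    rw [Finset.sum_comm]
    refine Finset.sum_congr rfl fun i _ => Finset.sum_congr rfl fun j _ => ?_
    rw [smul_smul, mul_comm]
  refine ⟨g, -1, Matrix.of (mmC C) + 1, by norm_num, ?_, ?_, ?_⟩
  · ext i j
    simp only [Matrix.transpose_apply, Matrix.add_apply, Matrix.of_apply, mmC, Matrix.one_apply,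
      mul_comm, eq_comm (a := i)]
  · intro X Y
    set φ : Matrix (Fin n) (Fin n) ℝ := Matrix.of (mmC C) + 1 with hφ
    have hφ' : ∀ i j, φ i j = mmC C i j + if i = j then 1 else 0 := by
      intro i j; simp [hφ, Matrix.one_apply]
    have hS : ∀ i j l, ∑ k, φ l k * C i j k = ∑ k, φ k i * C k j l + ∑ k, φ k j * C i k l := by
      intro i j l; simpa [hφ'] using hC i j l
    rw [hactbil, hactbil, hactbil]
    ext l
    simp only [Matrix.mulVec, dotProduct, Finset.sum_apply, Pi.smul_apply, Pi.add_apply, smul_eq_mul]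
    have h1 : ∑ x, φ l x * ∑ i, ∑ j, X i * Y j * C i j x
        = ∑ i, ∑ j, X i * Y j * ∑ k, φ l k * C i j k := by
      simp only [Finset.mul_sum]
      rw [Finset.sum_comm]
      refine Finset.sum_congr rfl fun i _ => ?_
      rw [Finset.sum_comm]
      refine Finset.sum_congr rfl fun j _ => Finset.sum_congr rfl fun k _ => ?_
      ring
    have h2 : ∑ x, ∑ j, (∑ i, φ x i * X i) * Y j * C x j l
        = ∑ i, ∑ j, X i * Y j * ∑ k, φ k i * C k j l := by
      simp only [Finset.mul_sum, Finset.sum_mul]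
      calc _ = ∑ j, ∑ x, ∑ i, φ x i * X i * Y j * C x j l := Finset.sum_comm
        _ = ∑ j, ∑ i, ∑ x, φ x i * X i * Y j * C x j l :=
            Finset.sum_congr rfl fun j _ => Finset.sum_comm
        _ = ∑ i, ∑ j, ∑ x, φ x i * X i * Y j * C x j l := Finset.sum_comm
        _ = _ := Finset.sum_congr rfl fun i _ => Finset.sum_congr rfl fun j _ =>
            Finset.sum_congr rfl fun k _ => by ring
    have h3 : ∑ i, ∑ x, X i * (∑ j, φ x j * Y j) * C i x l
        = ∑ i, ∑ j, X i * Y j * ∑ k, φ k j * C i k l := by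
      simp only [Finset.mul_sum, Finset.sum_mul]
      refine Finset.sum_congr rfl fun i _ => ?_
      rw [Finset.sum_comm]
      refine Finset.sum_congr rfl fun j _ => Finset.sum_congr rfl fun k _ => ?_
      ring
    rw [h1, h2, h3]
    simp only [hS, mul_add, Finset.sum_add_distrib]
  · rw [hmm]; simp

/-! ### Nice tables -/

def rowE {n m : ℕ} (I J K : Fin m → Fin n) (r : Fin m) (i j k : Fin n) : ℝ :=
  (if I r = i ∧ J r = j ∧ K r = k then 1 else 0) - (if I r = j ∧ J r = i ∧ K r = k then 1 else 0)

def tabC {n m : ℕ} (I J K : Fin m → Fin n) (s : Fin m → ℝ) (i j k : Fin n) : ℝ :=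
  ∑ r, s r * rowE I J K r i j k

def Nice {n m : ℕ} (I J K : Fin m → Fin n) : Prop :=
  (∀ r, I r < J r) ∧ ∀ r r', r ≠ r' → (I r ≠ I r' ∨ J r ≠ J r') ∧
    (K r = K r' → I r ≠ I r' ∧ I r ≠ J r' ∧ J r ≠ I r' ∧ J r ≠ J r')

instance {n m : ℕ} (I J K : Fin m → Fin n) : Decidable (Nice I J K) := by
  unfold Nice; infer_instance

/-- root matrix -/
def rootA {n m : ℕ} (I J K : Fin m → Fin n) (r : Fin m) (k : Fin n) : ℤ :=
  (if I r = k then 1 else 0) + (if J r = k then 1 else 0) - (if K r = k then 1 else 0)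

lemma sum_prod_rows {n m : ℕ} (F G : Fin m → Fin n → Fin n → ℝ) (s : Fin m → ℝ)
    (h : ∀ r r', r ≠ r' → ∀ i j, F r i j * G r' i j = 0) :
    ∑ i, ∑ j, (∑ r, s r * F r i j) * (∑ r, s r * G r i j)
      = ∑ r, s r ^ 2 * ∑ i, ∑ j, F r i j * G r i j := by
  have : ∀ i j, (∑ r, s r * F r i j) * (∑ r, s r * G r i j) = ∑ r, s r ^ 2 * (F r i j * G r i j) := by
    intro i j
    rw [Finset.sum_mul_sum]
    refine Finset.sum_congr rfl fun r _ => ?_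
    rw [Finset.sum_eq_single r]
    · ring
    · intro r' _ hr
      have := h r r' (Ne.symm hr) i j
      linear_combination (s r * s r') * this
    · simp
  simp only [this, Finset.mul_sum]
  calc _ = ∑ i, ∑ r, ∑ j, s r ^ 2 * (F r i j * G r i j) :=
        Finset.sum_congr rfl fun i _ => Finset.sum_comm
    _ = _ := Finset.sum_comm

lemma rowE_same1 {n m : ℕ} (I J K : Fin m → Fin n) (hN : Nice I J K) (r : Fin m) (k l : Fin n) :
    ∑ i, ∑ j, rowE I J K r k i j * rowE I J K r l i j
      = if k = l then ((if I r = k then 1 else 0) + (if J r = k then 1 else 0)) else 0 := by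
  have hIJ : I r ≠ J r := (hN.1 r).ne
  have : ∀ i j, rowE I J K r k i j * rowE I J K r l i j =
      (if J r = i then (if K r = j then (if I r = k ∧ I r = l then (1:ℝ) else 0) else 0) else 0)
      + (if I r = i then (if K r = j then (if J r = k ∧ J r = l then (1:ℝ) else 0) else 0) else 0) := by
    intro i j
    unfold rowE
    split_ifs <;> first | (exfalso; grind) | norm_num
  simp only [this, Finset.sum_add_distrib]
  by_cases hkl : k = l
  · subst hkl
    simp [Finset.sum_ite_irrel]
  · rw [if_neg hkl]
    have h1 : ¬ (I r = k ∧ I r = l) := by grind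
    have h2 : ¬ (J r = k ∧ J r = l) := by grind
    simp [h1, h2]

lemma rowE_same2 {n m : ℕ} (I J K : Fin m → Fin n) (hN : Nice I J K) (r : Fin m) (k l : Fin n) :
    ∑ i, ∑ j, rowE I J K r i j k * rowE I J K r i j l
      = if k = l then 2 * (if K r = k then 1 else 0) else 0 := by
  have hIJ : I r ≠ J r := (hN.1 r).ne
  have : ∀ i j, rowE I J K r i j k * rowE I J K r i j l =
      (if I r = i then (if J r = j then (if K r = k ∧ K r = l then (1:ℝ) else 0) else 0) else 0)
      + (if J r = i then (if I r = j then (if K r = k ∧ K r = l then (1:ℝ) else 0) else 0) else 0) := by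
    intro i j
    unfold rowE
    split_ifs <;> first | (exfalso; grind) | norm_num
  simp only [this, Finset.sum_add_distrib]
  by_cases hkl : k = l
  · subst hkl
    simp [Finset.sum_ite_irrel]
    split_ifs <;> norm_num
  · rw [if_neg hkl]
    have h1 : ¬ (K r = k ∧ K r = l) := by grind
    simp [h1]

lemma mm_tabC {n m : ℕ} (I J K : Fin m → Fin n) (hN : Nice I J K) (s : Fin m → ℝ) (k l : Fin n) :
    mmC (tabC I J K s) k l = if k = l then -2 * ∑ r, s r ^ 2 * (rootA I J K r k : ℝ) else 0 := by
  unfold mmC tabC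
  rw [sum_prod_rows (fun r i j => rowE I J K r k i j) (fun r i j => rowE I J K r l i j),
    sum_prod_rows (fun r i j => rowE I J K r i j k) (fun r i j => rowE I J K r i j l)]
  · simp only [rowE_same1 I J K hN, rowE_same2 I J K hN]
    by_cases hkl : k = l
    · subst hkl
      simp only [if_true, Finset.mul_sum, ← Finset.sum_add_distrib]
      refine Finset.sum_congr rfl fun r _ => ?_
      unfold rootA
      push_cast
      ring
    · simp [hkl]
  · intro r r' hr i j
    have h1 := hN.2 r r' hr
    have h2 := hN.1 r
    have h3 := hN.1 r'
    unfold rowE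
    split_ifs <;> first | (simp; done) | (exfalso; grind)
  · intro r r' hr i j
    have h1 := hN.2 r r' hr
    have h2 := hN.1 r
    have h3 := hN.1 r'
    unfold rowE
    split_ifs <;> first | (simp; done) | (exfalso; grind)

lemma sol_tabC {n m : ℕ} (I J K : Fin m → Fin n) (hN : Nice I J K) (s : Fin m → ℝ)
    (h : ∀ r, 2 * ∑ r', s r' ^ 2 * (∑ k, (rootA I J K r k : ℝ) * rootA I J K r' k) = 1) :
    SolC (tabC I J K s) := by
  let D : Fin n → ℝ := fun k => -2 * (∑ r, s r ^ 2 * (rootA I J K r k : ℝ)) + 1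
  have hD : ∀ r, D (I r) + D (J r) = D (K r) := by
    intro r
    have h1 := h r
    have h2 : ∀ r', ∑ k, (rootA I J K r k : ℝ) * rootA I J K r' k
        = rootA I J K r' (I r) + rootA I J K r' (J r) - rootA I J K r' (K r) := by
      intro r'
      have : ∀ k, (rootA I J K r k : ℝ) * rootA I J K r' k =
        (if I r = k then (rootA I J K r' k : ℝ) else 0) + (if J r = k then (rootA I J K r' k : ℝ) else 0)
         - (if K r = k then (rootA I J K r' k : ℝ) else 0) := by
        intro k
        conv_lhs => rw [rootA]
        push_cast
        split_ifs <;> ring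
      simp [this, Finset.sum_add_distrib, Finset.sum_sub_distrib]
    simp only [h2, mul_add, mul_sub, Finset.sum_add_distrib, Finset.sum_sub_distrib] at h1
    simp only [D]
    linarith
  have hDC : ∀ i j l, D l * tabC I J K s i j l = (D i + D j) * tabC I J K s i j l := by
    intro i j l
    unfold tabC
    simp only [Finset.mul_sum]
    refine Finset.sum_congr rfl fun r _ => ?_
    have := hD r
    unfold rowE
    split_ifs with h1 h2 h2
    · ring
    · obtain ⟨rfl, rfl, rfl⟩ := h1; rw [this]
    · obtain ⟨rfl, rfl, rfl⟩ := h2; rw [add_comm (D (J r)), this]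
    · ring
  have hφ : ∀ l k, (mmC (tabC I J K s) l k + if l = k then 1 else 0) = if l = k then D k else 0 := by
    intro l k
    rw [mm_tabC I J K hN]
    by_cases h : l = k
    · subst h; simp [D]
    · simp [h]
  intro i j l
  simp only [hφ, ite_mul, zero_mul, Finset.sum_ite_eq, Finset.sum_ite_eq', Finset.mem_univ, if_true]
  rw [hDC]; ring

/-- spanning family, in elimination form -/
def Sp {L : Type} [AddCommGroup L] [Module ℝ L] {n : ℕ} (x : Fin n → L) : Prop :=
  ∀ S : Submodule ℝ L, (∀ i, x i ∈ S) → S = ⊤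

section
variable {L : Type} [LieRing L] [LieAlgebra ℝ L]

lemma Sp.basis {n : ℕ} {x : Fin n → L} (hx : Sp x) (hn : Module.finrank ℝ L = n) :
    ∃ b : Module.Basis (Fin n) ℝ L, ∀ i, b i = x i := by
  have h : ⊤ ≤ Submodule.span ℝ (Set.range x) := by
    rw [hx (Submodule.span ℝ (Set.range x)) fun i => Submodule.subset_span ⟨i, rfl⟩]
  refine ⟨basisOfTopLeSpanOfCardEqFinrank x h (by simp [hn]), fun i => ?_⟩
  simp

/-- value of the bracket according to the table -/
def tabV {n m : ℕ} (I J K : Fin m → Fin n) (c : Fin m → ℝ) (x : Fin n → L) (i j : Fin n) : L :=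
  ∑ r, if I r = i ∧ J r = j then c r • x (K r) else 0

lemma good_of_table_t {n m : ℕ} (I J K : Fin m → Fin n) (hN : Nice I J K) (c : Fin m → ℝ)
    (q : Fin m → ℤ) (N : ℤ) (hN0 : 0 < N)
    (hq : ∀ r, 2 * ∑ r', q r' * (∑ k, rootA I J K r k * rootA I J K r' k) = N)
    (x : Fin n → L) (hx : Sp x) (hn : Module.finrank ℝ L = n)
    (hb : ∀ i j, i < j → ⁅x i, x j⁆ = tabV I J K c x i j)
    (t : Fin n → ℝ) (ht : ∀ i, t i ≠ 0)
    (htq : ∀ r, (c r * t (I r) * t (J r) / t (K r)) ^ 2 = (q r : ℝ) / N) : Good L := by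
  obtain ⟨b, hbx⟩ := hx.basis hn
  let s : Fin m → ℝ := fun r => c r * t (I r) * t (J r) / t (K r)
  let b' := Module.Basis.isUnitSMul b (w := t) (fun i => (ht i).isUnit)
  have hb' : ∀ i, b' i = t i • x i := by intro i; simp [b', Module.Basis.isUnitSMul_apply, hbx]
  refine ⟨Fin n, inferInstance, inferInstance, b', tabC I J K s, ?_, sol_tabC I J K hN s ?_⟩
  · have hlt : ∀ i j, i < j → ⁅b' i, b' j⁆ = ∑ k, tabC I J K s i j k • b' k := by
      intro i j hij
      simp only [hb', smul_lie, lie_smul, hb i j hij, tabV, tabC, Finset.sum_smul, Finset.smul_sum]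
      rw [Finset.sum_comm]
      refine Finset.sum_congr rfl fun r _ => ?_
      have hr := hN.1 r
      have h0 : ¬ (I r = j ∧ J r = i) := by
        rintro ⟨rfl, rfl⟩; exact lt_asymm hij hr
      by_cases h1 : I r = i ∧ J r = j
      · obtain ⟨rfl, rfl⟩ := h1
        rw [Finset.sum_eq_single (K r)]
        · have : rowE I J K r (I r) (J r) (K r) = 1 := by
            unfold rowE; simp [hr.ne]
          simp only [and_self, if_true, this, s, smul_smul]
          congr 1
          field_simp [ht (K r)]
        · intro k _ hk
          have : rowE I J K r (I r) (J r) k = 0 := by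
            unfold rowE; simp [hr.ne, Ne.symm hk]
          simp [this]
        · simp
      · have : ∀ k, rowE I J K r i j k = 0 := by
          intro k
          unfold rowE
          rw [if_neg (fun h => h1 ⟨h.1, h.2.1⟩), if_neg (fun h => h0 ⟨h.1, h.2.1⟩)]; simp
        simp [h1, this]
    have hskew : ∀ i j k, tabC I J K s j i k = - tabC I J K s i j k := by
      intro i j k
      unfold tabC rowE
      rw [← Finset.sum_neg_distrib]
      exact Finset.sum_congr rfl fun r _ => by ring
    intro i j
    rcases lt_trichotomy i j with h | h | h
    · exact hlt i j h
    · subst h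
      have : ∀ k, tabC I J K s i i k = 0 := fun k => by linarith [hskew i i k]
      simp [this]
    · rw [← lie_skew, hlt j i h, ← Finset.sum_neg_distrib]
      exact Finset.sum_congr rfl fun k _ => by rw [hskew j i k, neg_smul]
  · intro r
    have h1 : ((2 * ∑ r', q r' * (∑ k, rootA I J K r k * rootA I J K r' k) : ℤ) : ℝ) = N := by
      rw [hq r]
    push_cast at h1
    have hNR : (N : ℝ) ≠ 0 := by exact_mod_cast hN0.ne'
    simp only [s, htq]
    have : ∀ r', (q r' : ℝ) / N * ∑ k, (rootA I J K r k : ℝ) * rootA I J K r' k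
        = (q r' * ∑ k, (rootA I J K r k : ℝ) * rootA I J K r' k) / N := fun r' => by ring
    simp only [this, ← Finset.sum_div]
    rw [← mul_div_assoc, h1, div_self hNR]

lemma exists_scale {n m : ℕ} (I J K : Fin m → Fin n)
    (B : Fin n → Fin m → ℤ) (d : ℤ) (hd : 0 < d)
    (hB : ∀ r r', ∑ k, rootA I J K r k * B k r' = if r = r' then d else 0)
    (a : Fin m → ℝ) (ha : ∀ r, 0 < a r) :
    ∃ t : Fin n → ℝ, (∀ i, 0 < t i) ∧ ∀ r, t (I r) * t (J r) / t (K r) = a r := by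
  refine ⟨fun i => Real.exp (∑ r', (B i r' : ℝ) * Real.log (a r') / d), fun i => Real.exp_pos _, ?_⟩
  intro r
  rw [← Real.exp_add, ← Real.exp_sub, ← Finset.sum_add_distrib, ← Finset.sum_sub_distrib]
  have h1 : ∀ r', (B (I r) r' : ℝ) + B (J r) r' - B (K r) r' = if r = r' then (d : ℝ) else 0 := by
    intro r'
    have := hB r r'
    have h2 : ∀ k, rootA I J K r k * B k r' =
        (if I r = k then B k r' else 0) + (if J r = k then B k r' else 0)
         - (if K r = k then B k r' else 0) := by
      intro k
      rw [rootA]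
      split_ifs <;> ring
    simp only [h2, Finset.sum_add_distrib, Finset.sum_sub_distrib, Finset.sum_ite_eq,
      Finset.mem_univ, if_true] at this
    exact_mod_cast this
  have hdR : (d : ℝ) ≠ 0 := by exact_mod_cast hd.ne'
  have : ∀ r', (B (I r) r' : ℝ) * Real.log (a r') / d + (B (J r) r' : ℝ) * Real.log (a r') / d
      - (B (K r) r' : ℝ) * Real.log (a r') / d = if r = r' then Real.log (a r') else 0 := by
    intro r'
    have := h1 r'
    split_ifs with h
    · rw [if_pos h] at this
      field_simp
      linear_combination Real.log (a r') * this
    · rw [if_neg h] at this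
      field_simp
      linear_combination Real.log (a r') * this
  simp only [this, Finset.sum_ite_eq, Finset.mem_univ, if_true]
  exact Real.exp_log (ha r)

lemma good_of_table {n m : ℕ} (I J K : Fin m → Fin n) (hN : Nice I J K)
    (q : Fin m → ℤ) (N : ℤ) (hN0 : 0 < N) (hq0 : ∀ r, 0 < q r)
    (hq : ∀ r, 2 * ∑ r', q r' * (∑ k, rootA I J K r k * rootA I J K r' k) = N)
    (B : Fin n → Fin m → ℤ) (d : ℤ) (hd : 0 < d)
    (hB : ∀ r r', ∑ k, rootA I J K r k * B k r' = if r = r' then d else 0)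
    (hn : Module.finrank ℝ L = n)
    (c : Fin m → ℝ) (hc : ∀ r, c r ≠ 0)
    (x : Fin n → L) (hx : Sp x)
    (hb : ∀ i j, i < j → ⁅x i, x j⁆ = tabV I J K c x i j) : Good L := by
  have hNR : (0:ℝ) < N := by exact_mod_cast hN0
  have hqR : ∀ r, (0:ℝ) < q r := fun r => by exact_mod_cast hq0 r
  obtain ⟨t, ht, htr⟩ := exists_scale I J K B d hd hB (fun r => √((q r : ℝ) / N) / |c r|)
    (fun r => div_pos (Real.sqrt_pos.mpr (div_pos (hqR r) hNR)) (abs_pos.mpr (hc r)))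
  refine good_of_table_t I J K hN c q N hN0 hq x hx hn hb t (fun i => (ht i).ne') ?_
  intro r
  have h1 : c r * t (I r) * t (J r) / t (K r) = c r * (t (I r) * t (J r) / t (K r)) := by ring
  rw [h1, htr, mul_pow, div_pow, sq_abs, Real.sq_sqrt (div_pos (hqR r) hNR).le]
  have := hc r
  field_simp

end

/-- certificate for a nice table with independent roots -/
def Cert {n m : ℕ} (I J K : Fin m → Fin n) (q : Fin m → ℤ) (N : ℤ) (B : Fin n → Fin m → ℤ)
    (d : ℤ) : Prop :=
  Nice I J K ∧ 0 < N ∧ (∀ r, 0 < q r) ∧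
    (∀ r, 2 * ∑ r', q r' * (∑ k, rootA I J K r k * rootA I J K r' k) = N) ∧ 0 < d ∧
    ∀ r r', ∑ k, rootA I J K r k * B k r' = if r = r' then d else 0

instance {n m : ℕ} (I J K : Fin m → Fin n) (q : Fin m → ℤ) (N : ℤ) (B : Fin n → Fin m → ℤ)
    (d : ℤ) : Decidable (Cert I J K q N B d) := by
  unfold Cert; infer_instance

section
variable {L : Type} [LieRing L] [LieAlgebra ℝ L]

lemma good_cert {n m : ℕ} (I J K : Fin m → Fin n)
    (q : Fin m → ℤ) (N : ℤ) (B : Fin n → Fin m → ℤ) (d : ℤ) (h : Cert I J K q N B d)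
    (hn : Module.finrank ℝ L = n)
    (c : Fin m → ℝ) (hc : ∀ r, c r ≠ 0)
    (x : Fin n → L) (hx : Sp x)
    (hb : ∀ i j, i < j → ⁅x i, x j⁆ = tabV I J K c x i j) : Good L :=
  good_of_table I J K h.1 q N h.2.1 h.2.2.1 h.2.2.2.1 B d h.2.2.2.2.1 h.2.2.2.2.2 hn c hc x hx hb

lemma br6 {P : Fin 6 → Fin 6 → Prop} (h01 : P 0 1) (h02 : P 0 2) (h03 : P 0 3) (h04 : P 0 4)
    (h05 : P 0 5) (h12 : P 1 2) (h13 : P 1 3) (h14 : P 1 4) (h15 : P 1 5) (h23 : P 2 3)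
    (h24 : P 2 4) (h25 : P 2 5) (h34 : P 3 4) (h35 : P 3 5) (h45 : P 4 5) :
    ∀ i j, i < j → P i j := by
  intro i j hij
  fin_cases i <;> fin_cases j <;> first | assumption | (exact absurd hij (by decide))

lemma br5 {P : Fin 5 → Fin 5 → Prop} (h01 : P 0 1) (h02 : P 0 2) (h03 : P 0 3) (h04 : P 0 4)
    (h12 : P 1 2) (h13 : P 1 3) (h14 : P 1 4) (h23 : P 2 3)
    (h24 : P 2 4) (h34 : P 3 4) :
    ∀ i j, i < j → P i j := by
  intro i j hij
  fin_cases i <;> fin_cases j <;> first | assumption | (exact absurd hij (by decide))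

lemma br4 {P : Fin 4 → Fin 4 → Prop} (h01 : P 0 1) (h02 : P 0 2) (h03 : P 0 3)
    (h12 : P 1 2) (h13 : P 1 3) (h23 : P 2 3) :
    ∀ i j, i < j → P i j := by
  intro i j hij
  fin_cases i <;> fin_cases j <;> first | assumption | (exact absurd hij (by decide))

lemma br3 {P : Fin 3 → Fin 3 → Prop} (h01 : P 0 1) (h02 : P 0 2) (h12 : P 1 2) :
    ∀ i j, i < j → P i j := by
  intro i j hij
  fin_cases i <;> fin_cases j <;> first | assumption | (exact absurd hij (by decide))

end

def CertDep {n m : ℕ} (I J K : Fin (m+1) → Fin n) (q : Fin (m+1) → ℤ) (N : ℤ)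
    (B : Fin n → Fin m → ℤ) (d : ℤ) : Prop :=
  Nice I J K ∧ 0 < N ∧ (∀ r, 0 < q r) ∧
    (∀ r, 2 * ∑ r', q r' * (∑ k, rootA I J K r k * rootA I J K r' k) = N) ∧ 0 < d ∧
    ∀ r r' : Fin m, ∑ k, rootA I J K r.castSucc k * B k r' = if r = r' then d else 0

instance {n m : ℕ} (I J K : Fin (m+1) → Fin n) (q : Fin (m+1) → ℤ) (N : ℤ)
    (B : Fin n → Fin m → ℤ) (d : ℤ) : Decidable (CertDep I J K q N B d) := by
  unfold CertDep; infer_instance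

section
variable {L : Type} [LieRing L] [LieAlgebra ℝ L]

lemma good_cert_dep {n m : ℕ} (I J K : Fin (m+1) → Fin n)
    (q : Fin (m+1) → ℤ) (N : ℤ) (B : Fin n → Fin m → ℤ) (d : ℤ) (h : CertDep I J K q N B d)
    (hn : Module.finrank ℝ L = n)
    (c : Fin (m+1) → ℝ) (hc : ∀ r, c r ≠ 0)
    (x : Fin n → L) (hx : Sp x)
    (hb : ∀ i j, i < j → ⁅x i, x j⁆ = tabV I J K c x i j)
    (e f g : Fin m) (hr : (c e.castSucc * c (Fin.last m)) ^ 2 = (c f.castSucc * c g.castSucc) ^ 2)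
    (hqr : q e.castSucc * q (Fin.last m) = q f.castSucc * q g.castSucc)
    (ht : ∀ t : Fin n → ℝ, (∀ i, t i ≠ 0) →
      t (I e.castSucc) * t (J e.castSucc) / t (K e.castSucc) *
        (t (I (Fin.last m)) * t (J (Fin.last m)) / t (K (Fin.last m)))
      = t (I f.castSucc) * t (J f.castSucc) / t (K f.castSucc) *
        (t (I g.castSucc) * t (J g.castSucc) / t (K g.castSucc))) : Good L := by
  obtain ⟨h1, hN0, hq0, hq, hd, hB⟩ := h
  have hNR : (0:ℝ) < N := by exact_mod_cast hN0
  have hqR : ∀ r, (0:ℝ) < q r := fun r => by exact_mod_cast hq0 r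
  obtain ⟨t, htp, htr⟩ := exists_scale (fun r => I (Fin.castSucc r)) (fun r => J (Fin.castSucc r))
    (fun r => K (Fin.castSucc r)) B d hd hB
    (fun r => √((q r.castSucc : ℝ) / N) / |c r.castSucc|)
    (fun r => div_pos (Real.sqrt_pos.mpr (div_pos (hqR _) hNR)) (abs_pos.mpr (hc _)))
  refine good_of_table_t I J K h1 c q N hN0 hq x hx hn hb t (fun i => (htp i).ne') ?_
  have key : ∀ r : Fin m, (c r.castSucc * (t (I r.castSucc) * t (J r.castSucc) / t (K r.castSucc))) ^ 2
      = (q r.castSucc : ℝ) / N := by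
    intro r
    rw [htr, mul_pow, div_pow, sq_abs, Real.sq_sqrt (div_pos (hqR _) hNR).le]
    have := hc r.castSucc
    field_simp
  intro r
  have h1 : c r * t (I r) * t (J r) / t (K r) = c r * (t (I r) * t (J r) / t (K r)) := by ring
  rw [h1]
  refine Fin.lastCases ?_ (fun r => key r) r
  have he := key e
  have hf := key f
  have hg := key g
  have hh := ht t (fun i => (htp i).ne')
  have hqr' : (q e.castSucc : ℝ) * q (Fin.last m) = q f.castSucc * q g.castSucc := by
    exact_mod_cast hqr
  generalize t (I e.castSucc) * t (J e.castSucc) / t (K e.castSucc) = ρe at *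
  generalize t (I f.castSucc) * t (J f.castSucc) / t (K f.castSucc) = ρf at *
  generalize t (I g.castSucc) * t (J g.castSucc) / t (K g.castSucc) = ρg at *
  generalize t (I (Fin.last m)) * t (J (Fin.last m)) / t (K (Fin.last m)) = ρl at *
  have hqe : ((q e.castSucc : ℝ) / N) ≠ 0 := (div_pos (hqR _) hNR).ne'
  have : ((q e.castSucc : ℝ) / N) * (c (Fin.last m) * ρl) ^ 2
      = ((q e.castSucc : ℝ) / N) * ((q (Fin.last m) : ℝ) / N) := by
    calc _ = (c e.castSucc * ρe) ^ 2 * (c (Fin.last m) * ρl) ^ 2 := by rw [he]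
      _ = (c e.castSucc * c (Fin.last m)) ^ 2 * (ρe * ρl) ^ 2 := by ring
      _ = (c f.castSucc * ρf) ^ 2 * (c g.castSucc * ρg) ^ 2 := by rw [hr, hh]; ring
      _ = _ := by
        rw [hf, hg]
        field_simp
        linarith
  exact mul_left_cancel₀ hqe this

lemma Th3 (hn : Module.finrank ℝ L = 3) (c : Fin 1 → ℝ) (hc : ∀ r, c r ≠ 0)
    (x : Fin 3 → L) (hx : Sp x)
    (hb : ∀ i j, i < j → ⁅x i, x j⁆ = tabV ![0] ![1] ![2] c x i j) :
    Good L :=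
  good_cert _ _ _ ![1] 6
    ![![1], ![0], ![0]] 1 (by decide +kernel) hn c hc x hx hb

lemma TL43 (hn : Module.finrank ℝ L = 4) (c : Fin 2 → ℝ) (hc : ∀ r, c r ≠ 0)
    (x : Fin 4 → L) (hx : Sp x)
    (hb : ∀ i j, i < j → ⁅x i, x j⁆ = tabV ![0, 0] ![1, 2] ![2, 3] c x i j) :
    Good L :=
  good_cert _ _ _ ![1, 1] 6
    ![![0, 0], ![1, 0], ![0, 0], ![0, -1]] 1 (by decide +kernel) hn c hc x hx hb

lemma Th5 (hn : Module.finrank ℝ L = 5) (c : Fin 2 → ℝ) (hc : ∀ r, c r ≠ 0)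
    (x : Fin 5 → L) (hx : Sp x)
    (hb : ∀ i j, i < j → ⁅x i, x j⁆ = tabV ![0, 2] ![1, 3] ![4, 4] c x i j) :
    Good L :=
  good_cert _ _ _ ![1, 1] 8
    ![![1, 0], ![0, 0], ![0, 1], ![0, 0], ![0, 0]] 1 (by decide +kernel) hn c hc x hx hb

lemma TL58 (hn : Module.finrank ℝ L = 5) (c : Fin 2 → ℝ) (hc : ∀ r, c r ≠ 0)
    (x : Fin 5 → L) (hx : Sp x)
    (hb : ∀ i j, i < j → ⁅x i, x j⁆ = tabV ![0, 0] ![1, 2] ![3, 4] c x i j) :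
    Good L :=
  good_cert _ _ _ ![1, 1] 8
    ![![0, 0], ![1, 0], ![0, 1], ![0, 0], ![0, 0]] 1 (by decide +kernel) hn c hc x hx hb

lemma TL55 (hn : Module.finrank ℝ L = 5) (c : Fin 3 → ℝ) (hc : ∀ r, c r ≠ 0)
    (x : Fin 5 → L) (hx : Sp x)
    (hb : ∀ i j, i < j → ⁅x i, x j⁆ = tabV ![0, 0, 1] ![1, 2, 3] ![2, 4, 4] c x i j) :
    Good L :=
  good_cert _ _ _ ![2, 2, 1] 14
    ![![0, 0, 0], ![1, 0, 0], ![0, 0, 0], ![-1, -1, 1], ![0, -1, 0]] 1 (by decide +kernel) hn c hc x hx hb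

lemma TL59 (hn : Module.finrank ℝ L = 5) (c : Fin 3 → ℝ) (hc : ∀ r, c r ≠ 0)
    (x : Fin 5 → L) (hx : Sp x)
    (hb : ∀ i j, i < j → ⁅x i, x j⁆ = tabV ![0, 0, 1] ![1, 2, 2] ![2, 3, 4] c x i j) :
    Good L :=
  good_cert _ _ _ ![4, 3, 3] 24
    ![![1, 0, 0], ![0, 0, 0], ![0, 0, 0], ![1, -1, 0], ![0, 0, -1]] 1 (by decide +kernel) hn c hc x hx hb

lemma TL57 (hn : Module.finrank ℝ L = 5) (c : Fin 3 → ℝ) (hc : ∀ r, c r ≠ 0)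
    (x : Fin 5 → L) (hx : Sp x)
    (hb : ∀ i j, i < j → ⁅x i, x j⁆ = tabV ![0, 0, 0] ![1, 2, 3] ![2, 3, 4] c x i j) :
    Good L :=
  good_cert _ _ _ ![3, 4, 3] 24
    ![![0, 0, 0], ![1, 1, 0], ![0, 1, 0], ![0, 0, 0], ![0, 0, -1]] 1 (by decide +kernel) hn c hc x hx hb

lemma TL56 (hn : Module.finrank ℝ L = 5) (c : Fin 4 → ℝ) (hc : ∀ r, c r ≠ 0)
    (x : Fin 5 → L) (hx : Sp x)
    (hb : ∀ i j, i < j → ⁅x i, x j⁆ = tabV ![0, 0, 0, 1] ![1, 2, 3, 2] ![2, 3, 4, 4] c x i j) :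
    Good L :=
  good_cert _ _ _ ![3, 3, 2, 2] 22
    ![![0, 0, 0, 0], ![0, -1, -1, 1], ![-1, -1, -1, 1], ![-1, -2, -1, 1], ![-1, -2, -2, 1]] 1 (by decide +kernel) hn c hc x hx hb

lemma T26 (hn : Module.finrank ℝ L = 6) (c : Fin 3 → ℝ) (hc : ∀ r, c r ≠ 0)
    (x : Fin 6 → L) (hx : Sp x)
    (hb : ∀ i j, i < j → ⁅x i, x j⁆ = tabV ![0, 0, 1] ![1, 2, 2] ![3, 4, 5] c x i j) :
    Good L :=
  good_cert _ _ _ ![1, 1, 1] 10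
    ![![0, 0, 0], ![0, 0, 0], ![0, 0, 0], ![-1, 0, 0], ![0, -1, 0], ![0, 0, -1]] 1 (by decide +kernel) hn c hc x hx hb

lemma T25 (hn : Module.finrank ℝ L = 6) (c : Fin 3 → ℝ) (hc : ∀ r, c r ≠ 0)
    (x : Fin 6 → L) (hx : Sp x)
    (hb : ∀ i j, i < j → ⁅x i, x j⁆ = tabV ![0, 0, 0] ![1, 3, 2] ![3, 5, 4] c x i j) :
    Good L :=
  good_cert _ _ _ ![2, 2, 1] 14
    ![![0, 0, 0], ![1, 0, 0], ![0, 0, 1], ![0, 0, 0], ![0, 0, 0], ![0, -1, 0]] 1 (by decide +kernel) hn c hc x hx hb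

lemma T23 (hn : Module.finrank ℝ L = 6) (c : Fin 4 → ℝ) (hc : ∀ r, c r ≠ 0)
    (x : Fin 6 → L) (hx : Sp x)
    (hb : ∀ i j, i < j → ⁅x i, x j⁆ = tabV ![0, 0, 0, 1] ![1, 3, 2, 2] ![3, 5, 4, 5] c x i j) :
    Good L :=
  good_cert _ _ _ ![2, 2, 1, 1] 16
    ![![0, 0, 0, 0], ![1, 0, 0, 0], ![-1, -1, 0, 1], ![0, 0, 0, 0], ![-1, -1, -1, 1], ![0, -1, 0, 0]] 1 (by decide +kernel) hn c hc x hx hb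

lemma T27 (hn : Module.finrank ℝ L = 6) (c : Fin 3 → ℝ) (hc : ∀ r, c r ≠ 0)
    (x : Fin 6 → L) (hx : Sp x)
    (hb : ∀ i j, i < j → ⁅x i, x j⁆ = tabV ![0, 0, 1] ![1, 2, 3] ![3, 4, 5] c x i j) :
    Good L :=
  good_cert _ _ _ ![3, 3, 4] 24
    ![![1, 0, 0], ![0, 0, 0], ![-1, 1, 0], ![0, 0, 0], ![0, 0, 0], ![0, 0, -1]] 1 (by decide +kernel) hn c hc x hx hb

lemma T20 (hn : Module.finrank ℝ L = 6) (c : Fin 4 → ℝ) (hc : ∀ r, c r ≠ 0)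
    (x : Fin 6 → L) (hx : Sp x)
    (hb : ∀ i j, i < j → ⁅x i, x j⁆ = tabV ![0, 0, 1, 0] ![1, 2, 3, 4] ![3, 4, 5, 5] c x i j) :
    Good L :=
  good_cert _ _ _ ![2, 3, 3, 2] 22
    ![![1, 0, 0, 0], ![0, 0, 0, 0], ![-2, 1, -1, 1], ![0, 0, 0, 0], ![-1, 0, -1, 1], ![0, 0, -1, 0]] 1 (by decide +kernel) hn c hc x hx hb

lemma T19 (hn : Module.finrank ℝ L = 6) (c : Fin 4 → ℝ) (hc : ∀ r, c r ≠ 0)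
    (x : Fin 6 → L) (hx : Sp x)
    (hb : ∀ i j, i < j → ⁅x i, x j⁆ = tabV ![0, 0, 1, 2] ![1, 2, 3, 4] ![3, 4, 5, 5] c x i j) :
    Good L :=
  good_cert _ _ _ ![1, 1, 1, 1] 8
    ![![0, 0, 0, 0], ![1, 0, 1, 0], ![0, 1, 0, 1], ![-1, 0, 1, 0], ![0, -1, 0, 1], ![0, 0, 0, 0]] 2 (by decide +kernel) hn c hc x hx hb

lemma T24z (hn : Module.finrank ℝ L = 6) (c : Fin 4 → ℝ) (hc : ∀ r, c r ≠ 0)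
    (x : Fin 6 → L) (hx : Sp x)
    (hb : ∀ i j, i < j → ⁅x i, x j⁆ = tabV ![0, 0, 1, 0] ![1, 2, 2, 3] ![2, 4, 5, 5] c x i j) :
    Good L :=
  good_cert _ _ _ ![4, 3, 3, 1] 26
    ![![1, 0, 0, 0], ![0, 0, 0, 0], ![0, 0, 0, 0], ![-1, 0, -1, 1], ![1, -1, 0, 0], ![0, 0, -1, 0]] 1 (by decide +kernel) hn c hc x hx hb

lemma T24 (hn : Module.finrank ℝ L = 6) (c : Fin 5 → ℝ) (hc : ∀ r, c r ≠ 0)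
    (x : Fin 6 → L) (hx : Sp x)
    (hb : ∀ i j, i < j → ⁅x i, x j⁆ = tabV ![0, 0, 1, 0, 1] ![1, 2, 2, 3, 3] ![2, 4, 5, 5, 4] c x i j) :
    Good L :=
  good_cert _ _ _ ![4, 3, 3, 1, 1] 28
    ![![1, 1, 0, 0, -1], ![1, 0, 1, -1, 0], ![0, 1, 1, -1, -1], ![0, 0, 0, 0, 0], ![1, 0, 1, -1, -2], ![1, 1, 0, -2, -1]] 2 (by decide +kernel) hn c hc x hx hb

lemma T12 (hn : Module.finrank ℝ L = 6) (c : Fin 4 → ℝ) (hc : ∀ r, c r ≠ 0)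
    (x : Fin 6 → L) (hx : Sp x)
    (hb : ∀ i j, i < j → ⁅x i, x j⁆ = tabV ![0, 0, 0, 1] ![1, 2, 3, 4] ![2, 3, 5, 5] c x i j) :
    Good L :=
  good_cert _ _ _ ![3, 5, 3, 3] 30
    ![![0, 0, 0, 0], ![1, 1, 0, 0], ![0, 1, 0, 0], ![0, 0, 0, 0], ![-1, -1, -1, 1], ![0, 0, -1, 0]] 1 (by decide +kernel) hn c hc x hx hb

lemma T13 (hn : Module.finrank ℝ L = 6) (c : Fin 5 → ℝ) (hc : ∀ r, c r ≠ 0)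
    (hr : (c 0 * c 4) ^ 2 = (c 2 * c 3) ^ 2)
    (x : Fin 6 → L) (hx : Sp x)
    (hb : ∀ i j, i < j → ⁅x i, x j⁆ = tabV ![0, 0, 0, 1, 2] ![1, 2, 3, 4, 4] ![2, 3, 5, 3, 5] c x i j) :
    Good L :=
  good_cert_dep _ _ _ ![5, 4, 5, 4, 4] 40
    ![![0, 0, 0, 0], ![1, 1, 0, 0], ![0, 1, 0, 0], ![0, 0, 0, 0], ![-1, -1, 0, 1], ![0, 0, -1, 0]] 1 (by decide +kernel) hn c hc x hx hb 0 2 3 hr (by decide +kernel)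
    (by
      intro t ht
      have h0 := ht 0
      have h1 := ht 1
      have h2 := ht 2
      have h3 := ht 3
      have h4 := ht 4
      have h5 := ht 5
      simp [Fin.last, Fin.castSucc]
      field_simp)

lemma T10 (hn : Module.finrank ℝ L = 6) (c : Fin 3 → ℝ) (hc : ∀ r, c r ≠ 0)
    (x : Fin 6 → L) (hx : Sp x)
    (hb : ∀ i j, i < j → ⁅x i, x j⁆ = tabV ![0, 0, 3] ![1, 2, 4] ![2, 5, 5] c x i j) :
    Good L :=
  good_cert _ _ _ ![4, 3, 3] 24
    ![![0, 1, 0], ![1, -1, 0], ![0, 0, 0], ![0, 0, 1], ![0, 0, 0], ![0, 0, 0]] 1 (by decide +kernel) hn c hc x hx hb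

lemma T22z (hn : Module.finrank ℝ L = 6) (c : Fin 3 → ℝ) (hc : ∀ r, c r ≠ 0)
    (x : Fin 6 → L) (hx : Sp x)
    (hb : ∀ i j, i < j → ⁅x i, x j⁆ = tabV ![0, 0, 1] ![2, 3, 2] ![4, 5, 5] c x i j) :
    Good L :=
  good_cert _ _ _ ![1, 1, 1] 10
    ![![0, 0, 0], ![0, 0, 1], ![0, 0, 0], ![0, 1, 0], ![-1, 0, 0], ![0, 0, 0]] 1 (by decide +kernel) hn c hc x hx hb

lemma T22 (hn : Module.finrank ℝ L = 6) (c : Fin 4 → ℝ) (hc : ∀ r, c r ≠ 0)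
    (x : Fin 6 → L) (hx : Sp x)
    (hb : ∀ i j, i < j → ⁅x i, x j⁆ = tabV ![0, 0, 1, 1] ![2, 3, 2, 3] ![4, 5, 5, 4] c x i j) :
    Good L :=
  good_cert _ _ _ ![1, 1, 1, 1] 12
    ![![0, 2, 0, 0], ![-1, 1, 1, 1], ![1, -1, 1, -1], ![0, 0, 0, 0], ![-1, 1, 1, -1], ![0, 0, 0, 0]] 2 (by decide +kernel) hn c hc x hx hb

lemma T28 (hn : Module.finrank ℝ L = 6) (c : Fin 4 → ℝ) (hc : ∀ r, c r ≠ 0)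
    (x : Fin 6 → L) (hx : Sp x)
    (hb : ∀ i j, i < j → ⁅x i, x j⁆ = tabV ![0, 0, 1, 0] ![1, 2, 2, 3] ![2, 3, 4, 5] c x i j) :
    Good L :=
  good_cert _ _ _ ![1, 1, 1, 1] 8
    ![![0, 0, 0, 0], ![1, 0, 0, 0], ![0, 0, 0, 0], ![0, -1, 0, 0], ![1, 0, -1, 0], ![0, -1, 0, -1]] 1 (by decide +kernel) hn c hc x hx hb

lemma T21 (hn : Module.finrank ℝ L = 6) (c : Fin 5 → ℝ) (hc : ∀ r, c r ≠ 0)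
    (x : Fin 6 → L) (hx : Sp x)
    (hb : ∀ i j, i < j → ⁅x i, x j⁆ = tabV ![0, 0, 1, 0, 1] ![1, 2, 2, 3, 4] ![2, 3, 4, 5, 5] c x i j) :
    Good L :=
  good_cert _ _ _ ![4, 5, 5, 4, 4] 40
    ![![0, 1, -1, 1, -1], ![0, 0, 0, 0, 0], ![-2, 1, -1, 1, -1], ![-2, 0, -2, 2, -2], ![-2, 1, -3, 1, -1], ![-2, 1, -3, 1, -3]] 2 (by decide +kernel) hn c hc x hx hb

lemma T14 (hn : Module.finrank ℝ L = 6) (c : Fin 6 → ℝ) (hc : ∀ r, c r ≠ 0)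
    (hr : (c 0 * c 5) ^ 2 = (c 2 * c 4) ^ 2)
    (x : Fin 6 → L) (hx : Sp x)
    (hb : ∀ i j, i < j → ⁅x i, x j⁆ = tabV ![0, 0, 0, 1, 1, 2] ![1, 2, 3, 2, 4, 3] ![2, 3, 4, 4, 5, 5] c x i j) :
    Good L :=
  good_cert_dep _ _ _ ![13, 16, 12, 4, 13, 12] 104
    ![![0, 0, 0, 0, 0], ![0, -1, -1, 1, 0], ![-1, -1, -1, 1, 0], ![-1, -2, -1, 1, 0], ![-1, -2, -2, 1, 0], ![-1, -3, -3, 2, -1]] 1 (by decide +kernel) hn c hc x hx hb 0 2 4 hr (by decide +kernel)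
    (by
      intro t ht
      have h0 := ht 0
      have h1 := ht 1
      have h2 := ht 2
      have h3 := ht 3
      have h4 := ht 4
      have h5 := ht 5
      simp [Fin.last, Fin.castSucc]
      field_simp)

lemma T16 (hn : Module.finrank ℝ L = 6) (c : Fin 5 → ℝ) (hc : ∀ r, c r ≠ 0)
    (hr : (c 0 * c 4) ^ 2 = (c 2 * c 3) ^ 2)
    (x : Fin 6 → L) (hx : Sp x)
    (hb : ∀ i j, i < j → ⁅x i, x j⁆ = tabV ![0, 0, 0, 1, 2] ![1, 2, 3, 4, 3] ![2, 3, 4, 5, 5] c x i j) :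
    Good L :=
  good_cert_dep _ _ _ ![3, 4, 3, 3, 3] 24
    ![![0, 1, 0, 0], ![1, -1, 0, 0], ![0, 0, 0, 0], ![0, 0, 0, 0], ![0, 1, -1, 0], ![1, 0, -1, -1]] 1 (by decide +kernel) hn c hc x hx hb 0 2 3 hr (by decide +kernel)
    (by
      intro t ht
      have h0 := ht 0
      have h1 := ht 1
      have h2 := ht 2
      have h3 := ht 3
      have h4 := ht 4
      have h5 := ht 5
      simp [Fin.last, Fin.castSucc]
      field_simp)

lemma T15 (hn : Module.finrank ℝ L = 6) (c : Fin 6 → ℝ) (hc : ∀ r, c r ≠ 0)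
    (hr : (c 1 * c 5) ^ 2 = (c 3 * c 4) ^ 2)
    (x : Fin 6 → L) (hx : Sp x)
    (hb : ∀ i j, i < j → ⁅x i, x j⁆ = tabV ![0, 0, 0, 1, 0, 1] ![1, 2, 3, 2, 4, 3] ![2, 3, 4, 4, 5, 5] c x i j) :
    Good L :=
  good_cert_dep _ _ _ ![22, 36, 22, 30, 30, 25] 286
    ![![0, 0, 0, 0, 0], ![0, -1, -1, 1, 0], ![-1, -1, -1, 1, 0], ![-1, -2, -1, 1, 0], ![-1, -2, -2, 1, 0], ![-1, -2, -2, 1, -1]] 1 (by decide +kernel) hn c hc x hx hb 1 3 4 hr (by decide +kernel)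
    (by
      intro t ht
      have h0 := ht 0
      have h1 := ht 1
      have h2 := ht 2
      have h3 := ht 3
      have h4 := ht 4
      have h5 := ht 5
      simp [Fin.last, Fin.castSucc]
      field_simp)

lemma T18 (hn : Module.finrank ℝ L = 6) (c : Fin 4 → ℝ) (hc : ∀ r, c r ≠ 0)
    (x : Fin 6 → L) (hx : Sp x)
    (hb : ∀ i j, i < j → ⁅x i, x j⁆ = tabV ![0, 0, 0, 0] ![1, 2, 3, 4] ![2, 3, 4, 5] c x i j) :
    Good L :=
  good_cert _ _ _ ![2, 3, 3, 2] 22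
    ![![0, 0, 0, 0], ![1, 1, 0, 0], ![0, 1, 0, 0], ![0, 0, 0, 0], ![0, 0, -1, 0], ![0, 0, -1, -1]] 1 (by decide +kernel) hn c hc x hx hb

lemma T17 (hn : Module.finrank ℝ L = 6) (c : Fin 5 → ℝ) (hc : ∀ r, c r ≠ 0)
    (x : Fin 6 → L) (hx : Sp x)
    (hb : ∀ i j, i < j → ⁅x i, x j⁆ = tabV ![0, 0, 0, 0, 1] ![1, 2, 3, 4, 2] ![2, 3, 4, 5, 5] c x i j) :
    Good L :=
  good_cert _ _ _ ![14, 15, 18, 8, 15] 136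
    ![![0, 0, 0, 0, 0], ![0, -1, -1, -1, 1], ![-1, -1, -1, -1, 1], ![-1, -2, -1, -1, 1], ![-1, -2, -2, -1, 1], ![-1, -2, -2, -2, 1]] 1 (by decide +kernel) hn c hc x hx hb

end

lemma sol_of_mm {n m : ℕ} (I J K : Fin m → Fin n) (s : Fin m → ℝ)
    (hmm : ∀ k l, mmC (tabC I J K s) k l =
      if k = l then -2 * ∑ r, s r ^ 2 * (rootA I J K r k : ℝ) else 0)
    (h : ∀ r, 2 * ∑ r', s r' ^ 2 * (∑ k, (rootA I J K r k : ℝ) * rootA I J K r' k) = 1) :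
    SolC (tabC I J K s) := by
  let D : Fin n → ℝ := fun k => -2 * (∑ r, s r ^ 2 * (rootA I J K r k : ℝ)) + 1
  have hD : ∀ r, D (I r) + D (J r) = D (K r) := by
    intro r
    have h1 := h r
    have h2 : ∀ r', ∑ k, (rootA I J K r k : ℝ) * rootA I J K r' k
        = rootA I J K r' (I r) + rootA I J K r' (J r) - rootA I J K r' (K r) := by
      intro r'
      have : ∀ k, (rootA I J K r k : ℝ) * rootA I J K r' k =
        (if I r = k then (rootA I J K r' k : ℝ) else 0) + (if J r = k then (rootA I J K r' k : ℝ) else 0)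
         - (if K r = k then (rootA I J K r' k : ℝ) else 0) := by
        intro k
        conv_lhs => rw [rootA]
        push_cast
        split_ifs <;> ring
      simp [this, Finset.sum_add_distrib, Finset.sum_sub_distrib]
    simp only [h2, mul_add, mul_sub, Finset.sum_add_distrib, Finset.sum_sub_distrib] at h1
    simp only [D]
    linarith
  have hDC : ∀ i j l, D l * tabC I J K s i j l = (D i + D j) * tabC I J K s i j l := by
    intro i j l
    unfold tabC
    simp only [Finset.mul_sum]
    refine Finset.sum_congr rfl fun r _ => ?_
    have := hD r
    unfold rowE
    split_ifs with h1 h2 h2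
    · ring
    · obtain ⟨rfl, rfl, rfl⟩ := h1; rw [this]
    · obtain ⟨rfl, rfl, rfl⟩ := h2; rw [add_comm (D (J r)), this]
    · ring
  have hφ : ∀ l k, (mmC (tabC I J K s) l k + if l = k then 1 else 0) = if l = k then D k else 0 := by
    intro l k
    rw [hmm]
    by_cases h : l = k
    · subst h; simp [D]
    · simp [h]
  intro i j l
  simp only [hφ, ite_mul, zero_mul, Finset.sum_ite_eq, Finset.sum_ite_eq', Finset.mem_univ, if_true]
  rw [hDC]; ring

def rowEZ {n m : ℕ} (I J K : Fin m → Fin n) (r : Fin m) (i j k : Fin n) : ℤ :=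
  (if I r = i ∧ J r = j ∧ K r = k then 1 else 0) - (if I r = j ∧ J r = i ∧ K r = k then 1 else 0)

def HZ {n m : ℕ} (I J K : Fin m → Fin n) (r r' : Fin m) (k l : Fin n) : ℤ :=
  -2 * ∑ i, ∑ j, rowEZ I J K r k i j * rowEZ I J K r' l i j
    + ∑ i, ∑ j, rowEZ I J K r i j k * rowEZ I J K r' i j l

lemma sum_prod_rows' {n m : ℕ} (F G : Fin m → Fin n → Fin n → ℝ) (s : Fin m → ℝ) :
    ∑ i, ∑ j, (∑ r, s r * F r i j) * (∑ r, s r * G r i j)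
      = ∑ r, ∑ r', s r * s r' * ∑ i, ∑ j, F r i j * G r' i j := by
  simp only [Finset.sum_mul_sum]
  simp only [Finset.mul_sum]
  calc _ = ∑ i, ∑ r, ∑ j, ∑ r', s r * F r i j * (s r' * G r' i j) :=
        Finset.sum_congr rfl fun i _ => Finset.sum_comm
    _ = ∑ r, ∑ i, ∑ j, ∑ r', s r * F r i j * (s r' * G r' i j) := Finset.sum_comm
    _ = ∑ r, ∑ i, ∑ r', ∑ j, s r * F r i j * (s r' * G r' i j) :=
        Finset.sum_congr rfl fun r _ => Finset.sum_congr rfl fun i _ => Finset.sum_comm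
    _ = ∑ r, ∑ r', ∑ i, ∑ j, s r * F r i j * (s r' * G r' i j) :=
        Finset.sum_congr rfl fun r _ => Finset.sum_comm
    _ = _ := by
        refine Finset.sum_congr rfl fun r _ => Finset.sum_congr rfl fun r' _ =>
          Finset.sum_congr rfl fun i _ => Finset.sum_congr rfl fun j _ => ?_
        ring

lemma mm_HZ {n m : ℕ} (I J K : Fin m → Fin n) (s : Fin m → ℝ) (k l : Fin n) :
    mmC (tabC I J K s) k l = ∑ r, ∑ r', s r * s r' * (HZ I J K r r' k l : ℝ) := by
  have hE : ∀ r i j k, rowE I J K r i j k = (rowEZ I J K r i j k : ℝ) := by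
    intro r i j k; unfold rowE rowEZ; push_cast; rfl
  unfold mmC tabC
  rw [sum_prod_rows' (fun r i j => rowE I J K r k i j) (fun r i j => rowE I J K r l i j),
    sum_prod_rows' (fun r i j => rowE I J K r i j k) (fun r i j => rowE I J K r i j l)]
  simp only [Finset.mul_sum, ← Finset.sum_add_distrib]
  refine Finset.sum_congr rfl fun r _ => Finset.sum_congr rfl fun r' _ => ?_
  simp only [HZ, hE]
  push_cast
  simp only [Finset.mul_sum, ← Finset.sum_add_distrib, mul_add]
  refine Finset.sum_congr rfl fun i _ => Finset.sum_congr rfl fun j _ => ?_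
  ring

def I11 : Fin 6 → Fin 6 := ![0, 0, 0, 0, 1, 1]
def J11 : Fin 6 → Fin 6 := ![1, 2, 4, 3, 2, 4]
def K11 : Fin 6 → Fin 6 := ![2, 3, 3, 5, 5, 5]

lemma HZ11 : ∀ r r' k l, HZ I11 J11 K11 r r' k l =
    (if r = r' then (if k = l then -2 * rootA I11 J11 K11 r k else 0) else 0) +
    (if k = 2 ∧ l = 4 then (if (r = 1 ∧ r' = 2) ∨ (r = 4 ∧ r' = 5) then -2 else 0) else 0) +
    (if k = 4 ∧ l = 2 then (if (r = 2 ∧ r' = 1) ∨ (r = 5 ∧ r' = 4) then -2 else 0) else 0) := by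
  decide +kernel

lemma sol11 (s : Fin 6 → ℝ) (h : ∀ r, s r ^ 2 = (![49, 60, 10, 42, 24, 25] : Fin 6 → ℤ) r / 448)
    (h' : s 1 * s 2 + s 4 * s 5 = 0) : SolC (tabC I11 J11 K11 s) := by
  apply sol_of_mm
  · intro k l
    rw [mm_HZ]
    simp only [HZ11]
    push_cast
    simp only [mul_add, Finset.sum_add_distrib]
    have e1 : ∑ r, ∑ r', s r * s r' * (if r = r' then (if k = l then -2 * (rootA I11 J11 K11 r k : ℝ) else 0) else 0) = if k = l then -2 * ∑ r, s r ^ 2 * (rootA I11 J11 K11 r k : ℝ) else 0 := by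
      simp only [mul_ite, mul_zero, Finset.sum_ite_eq, Finset.mem_univ, if_true]
      split_ifs
      · rw [Finset.mul_sum]
        exact Finset.sum_congr rfl fun r _ => by ring
      · simp
    rw [e1]
    have e2 : ∑ r, ∑ r', s r * s r' * (if k = 2 ∧ l = 4 then (if (r = 1 ∧ r' = 2) ∨ (r = 4 ∧ r' = 5) then (-2:ℝ) else 0) else 0) = 0 := by
      split_ifs
      · simp [Fin.sum_univ_succ]
        linarith
      · simp
    have e3 : ∑ r, ∑ r', s r * s r' * (if k = 4 ∧ l = 2 then (if (r = 2 ∧ r' = 1) ∨ (r = 5 ∧ r' = 4) then (-2:ℝ) else 0) else 0) = 0 := by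
      split_ifs
      · simp [Fin.sum_univ_succ]
        linarith
      · simp
    rw [e2, e3]; ring
  · have key : ∀ r, 2 * ∑ r', (![49, 60, 10, 42, 24, 25] : Fin 6 → ℤ) r' *
        (∑ k, rootA I11 J11 K11 r k * rootA I11 J11 K11 r' k) = 448 := by decide +kernel
    intro r
    have := congrArg (fun z : ℤ => (z : ℝ) / 448) (key r)
    simp only [h]
    push_cast at this
    rw [show ((448:ℝ) / 448) = 1 by norm_num] at this
    rw [← this, mul_div_assoc, Finset.sum_div]
    congr 1
    exact Finset.sum_congr rfl fun r _ => by ring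

section
variable {L : Type} [LieRing L] [LieAlgebra ℝ L]

lemma T11 (hn : Module.finrank ℝ L = 6) (β γ : ℝ) (hβ : β ≠ 0) (hγ : γ ≠ 0)
    (x1 x2 x3 x4 x5 x6 : L) (hx : Sp ![x1, x2, x3, x4, x5, x6])
    (h12 : ⁅x1, x2⁆ = x3) (h13 : ⁅x1, x3⁆ = x4) (h14 : ⁅x1, x4⁆ = x6) (h15 : ⁅x1, x5⁆ = 0)
    (h16 : ⁅x1, x6⁆ = 0) (h23 : ⁅x2, x3⁆ = β • x6) (h24 : ⁅x2, x4⁆ = 0) (h25 : ⁅x2, x5⁆ = γ • x6)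
    (h26 : ⁅x2, x6⁆ = 0) (h34 : ⁅x3, x4⁆ = 0) (h35 : ⁅x3, x5⁆ = 0) (h36 : ⁅x3, x6⁆ = 0)
    (h45 : ⁅x4, x5⁆ = 0) (h46 : ⁅x4, x6⁆ = 0) (h56 : ⁅x5, x6⁆ = 0) : Good L := by
  obtain ⟨a, ha, ha2⟩ : ∃ a : ℝ, 0 < a ∧ a ^ 2 = 49 / 448 :=
    ⟨√(49 / 448), by positivity, Real.sq_sqrt (by positivity)⟩
  obtain ⟨b, hb, hb2⟩ : ∃ a : ℝ, 0 < a ∧ a ^ 2 = 60 / 448 :=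
    ⟨√(60 / 448), by positivity, Real.sq_sqrt (by positivity)⟩
  obtain ⟨c, hc, hc2⟩ : ∃ a : ℝ, 0 < a ∧ a ^ 2 = 42 / 448 :=
    ⟨√(42 / 448), by positivity, Real.sq_sqrt (by positivity)⟩
  obtain ⟨d, hd, hd2⟩ : ∃ a : ℝ, 0 < a ∧ a ^ 2 = 24 / 448 :=
    ⟨√(24 / 448), by positivity, Real.sq_sqrt (by positivity)⟩
  obtain ⟨e, he, he2⟩ : ∃ a : ℝ, 0 < a ∧ a ^ 2 = 25 / 448 :=
    ⟨√(25 / 448), by positivity, Real.sq_sqrt (by positivity)⟩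
  obtain ⟨b', hb', hbb⟩ : ∃ b' : ℝ, 0 < b' ∧ b * b' = d * e := ⟨d * e / b, by positivity, by field_simp⟩
  have hb'2 : b' ^ 2 = 10 / 448 := by
    have : b ^ 2 * b' ^ 2 = d ^ 2 * e ^ 2 := by rw [← mul_pow, ← mul_pow, hbb]
    rw [hb2, hd2, he2] at this; linarith
  obtain ⟨t2, ht2⟩ : ∃ t2, t2 = d / (b * c * β) := ⟨_, rfl⟩
  have ht0 : t2 ≠ 0 := by rw [ht2]; positivity
  obtain ⟨r, hr⟩ : ∃ r, r = -b' * t2 / (a * b) := ⟨_, rfl⟩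
  obtain ⟨p, hp⟩ : ∃ p, p = (e / (a * b * c) - β * r) / γ := ⟨_, rfl⟩
  have hp0 : p ≠ 0 := by
    have : e / (a * b * c) - β * r = e / (a * b * c) + b' * d / (a * b * b * c) := by
      rw [hr, ht2]; field_simp; ring
    rw [hp, this]
    have : 0 < e / (a * b * c) + b' * d / (a * b * b * c) := by positivity
    exact div_ne_zero this.ne' hγ
  have hx' : Sp ![x1, t2 • x2, (t2 / a) • x3, (t2 / (a * b)) • x4, p • x5 + r • x3,
      (t2 / (a * b * c)) • x6] := by
    intro S hS
    simp only [Fin.forall_fin_succ] at hS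
    simp at hS
    apply hx
    simp only [Fin.forall_fin_succ]
    obtain ⟨h1, h2, h3, h4, h5, h6⟩ := hS
    rw [Submodule.smul_mem_iff _ (by positivity)] at h2 h3 h4 h6
    rw [Submodule.add_mem_iff_left _ (S.smul_mem _ h3), Submodule.smul_mem_iff _ hp0] at h5
    simp [*]
  obtain ⟨B, hB⟩ := hx'.basis hn
  refine ⟨Fin 6, inferInstance, inferInstance, B, _, ?_,
    sol11 ![a, b, -b', c, d, e] ?_ ?_⟩
  · have key : ∀ i j, i < j → ⁅B i, B j⁆ = ∑ k, tabC I11 J11 K11 ![a, b, -b', c, d, e] i j k • B k := by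
      simp only [hB]
      have h53 : ⁅x5, x3⁆ = 0 := by rw [← lie_skew, h35, neg_zero]
      have h43 : ⁅x4, x3⁆ = 0 := by rw [← lie_skew, h34, neg_zero]
      refine br6 ?_ ?_ ?_ ?_ ?_ ?_ ?_ ?_ ?_ ?_ ?_ ?_ ?_ ?_ ?_ <;>
      simp [tabC, rowE, I11, J11, K11, Fin.sum_univ_succ, *, smul_smul]
      all_goals (match_scalars; field_simp; try ring)
    intro i j
    rcases lt_trichotomy i j with h | rfl | h
    · exact key i j h
    · rw [lie_self, eq_comm]
      refine Finset.sum_eq_zero fun k _ => ?_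
      have : tabC I11 J11 K11 ![a, b, -b', c, d, e] i i k = 0 := by
        unfold tabC rowE
        exact Finset.sum_eq_zero fun r _ => by simp
      rw [this, zero_smul]
    · rw [← lie_skew, key j i h, ← Finset.sum_neg_distrib]
      refine Finset.sum_congr rfl fun k _ => ?_
      rw [← neg_smul]; congr 1
      unfold tabC rowE
      rw [← Finset.sum_neg_distrib]
      exact Finset.sum_congr rfl fun r _ => by ring
  · simp [Fin.forall_fin_succ, *]
  · simp; linarith

end

section
variable (L : Type) [LieRing L] [LieAlgebra ℝ L]

/-- lower central series -/
def DD : ℕ → Submodule ℝ L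
  | 0 => ⊤
  | k + 1 => Submodule.span ℝ {z | ∃ x y : L, y ∈ DD k ∧ z = ⁅x, y⁆}

def Nilp : Prop := ∃ k, DD L k = ⊥

end

section
variable {L : Type} [LieRing L] [LieAlgebra ℝ L]

lemma DD_lie {k : ℕ} (x : L) {y : L} (h : y ∈ DD L k) : ⁅x, y⁆ ∈ DD L (k + 1) :=
  Submodule.subset_span ⟨x, y, h, rfl⟩

lemma DD_mem_zero (x : L) : x ∈ DD L 0 := Submodule.mem_top

lemma DD_succ_le (k : ℕ) : DD L (k + 1) ≤ DD L k := by
  induction k with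
  | zero => exact le_top
  | succ k ih =>
    refine Submodule.span_le.2 ?_
    rintro z ⟨x, y, hy, rfl⟩
    exact DD_lie x (ih hy)

lemma DD_anti {i j : ℕ} (h : i ≤ j) : DD L j ≤ DD L i :=
  antitone_nat_of_succ_le (f := DD L) (fun k => DD_succ_le k) h

lemma DD_lie2 {i j : ℕ} {x y : L} (hx : x ∈ DD L i) (hy : y ∈ DD L j) :
    ⁅x, y⁆ ∈ DD L (i + j + 1) := by
  induction i generalizing x y j with
  | zero => rw [zero_add]; exact DD_lie x hy
  | succ i ih =>
    have h2 : DD L (i + 1) ≤ (DD L (i + 1 + j + 1)).comap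
        ((LieModule.toEnd ℝ L L : L →ₗ[ℝ] Module.End ℝ L).flip y) := by
      refine Submodule.span_le.2 ?_
      rintro z ⟨u, v, hv, rfl⟩
      show ⁅⁅u, v⁆, y⁆ ∈ DD L (i + 1 + j + 1)
      rw [lie_lie]
      refine Submodule.sub_mem _ ?_ ?_
      · have := DD_lie u (ih hv hy)
        rwa [show i + j + 1 + 1 = i + 1 + j + 1 by ring] at this
      · have := ih hv (DD_lie u hy)
        rwa [show i + (j + 1) + 1 = i + 1 + j + 1 by ring] at this
    exact h2 hx

lemma DD_stab {k : ℕ} (h : DD L (k + 1) = DD L k) (m : ℕ) : DD L (k + m) = DD L k := by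
  induction m with
  | zero => rfl
  | succ m ih =>
    rw [← h, ← add_assoc]
    show Submodule.span ℝ {z | ∃ x y : L, y ∈ DD L (k + m) ∧ z = ⁅x, y⁆} =
      Submodule.span ℝ {z | ∃ x y : L, y ∈ DD L k ∧ z = ⁅x, y⁆}
    rw [ih]

lemma flipb {x y z : L} (h : ⁅x, y⁆ = z) : ⁅y, x⁆ = -z := by rw [← h, lie_skew]

lemma Sp.central {n : ℕ} {x : Fin n → L} (hx : Sp x) {z : L} (h : ∀ i, ⁅x i, z⁆ = 0) (y : L) :
    ⁅y, z⁆ = 0 := by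
  have := hx (LinearMap.ker ((LieModule.toEnd ℝ L L : L →ₗ[ℝ] Module.End ℝ L).flip z))
    (fun i => LinearMap.mem_ker.2 (h i))
  have h2 : y ∈ LinearMap.ker ((LieModule.toEnd ℝ L L : L →ₗ[ℝ] Module.End ℝ L).flip z) := by
    rw [this]; trivial
  exact LinearMap.mem_ker.1 h2

lemma DD_eq_zero {k : ℕ} (h : DD L k = ⊥) {i : ℕ} {x : L} (hx : x ∈ DD L i) (hi : k ≤ i := by norm_num) : x = 0 := by
  have := DD_anti hi hx
  rwa [h, Submodule.mem_bot] at this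

/-- `W` generates `DD k` modulo `DD (k+1)` -/
def Ge (k : ℕ) (W : Set L) : Prop := ∀ S : Submodule ℝ L, DD L (k + 1) ≤ S → W ⊆ S → DD L k ≤ S

lemma Ge.next {X W V : Set L} {k : ℕ} (hX : Ge 0 X) (hW : Ge k W) (hWk : ∀ w ∈ W, w ∈ DD L k)
    (h : ∀ S : Submodule ℝ L, DD L (k + 2) ≤ S → V ⊆ S → ∀ x ∈ X, ∀ w ∈ W, ⁅x, w⁆ ∈ S) :
    Ge (k + 1) V := by
  intro S hS hV
  have h1 : ∀ w ∈ W, ∀ x : L, ⁅x, w⁆ ∈ S := by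
    intro w hw x
    have := hX (S.comap ((LieModule.toEnd ℝ L L : L →ₗ[ℝ] Module.End ℝ L).flip w)) ?_ ?_
    · exact this (DD_mem_zero x)
    · intro y hy
      show ⁅y, w⁆ ∈ S
      apply hS
      have := DD_lie2 hy (hWk w hw)
      rwa [show 0 + 1 + k + 1 = k + 2 by ring] at this
    · intro x hx
      exact h S hS hV x hx w hw
  have h2 : ∀ x y : L, y ∈ DD L k → ⁅x, y⁆ ∈ S := by
    intro x y hy
    have := hW (S.comap (LieModule.toEnd ℝ L L x)) ?_ ?_
    · exact this hy
    · intro y hy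
      exact hS (DD_lie x hy)
    · intro w hw
      exact h1 w hw x
  refine Submodule.span_le.2 ?_
  rintro z ⟨x, y, hy, rfl⟩
  exact h2 x y hy

lemma Ge.dec {k : ℕ} {W : Set L} (h : Ge k W) {y : L} (hy : y ∈ DD L k) :
    ∃ d ∈ DD L (k + 1), ∃ w ∈ Submodule.span ℝ W, y = w + d := by
  have h1 := h (DD L (k + 1) ⊔ Submodule.span ℝ W) le_sup_left
    (Submodule.subset_span.trans (SetLike.coe_subset_coe.2 le_sup_right)) hy
  obtain ⟨d, hd, w, hw, e⟩ := Submodule.mem_sup.1 h1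
  exact ⟨d, hd, w, hw, by rw [← e, add_comm]⟩

lemma Ge.dec1 {k : ℕ} {a : L} (h : Ge k {a}) {y : L} (hy : y ∈ DD L k) :
    ∃ r : ℝ, ∃ d ∈ DD L (k + 1), y = r • a + d := by
  obtain ⟨d, hd, w, hw, e⟩ := h.dec hy
  obtain ⟨r, rfl⟩ := Submodule.mem_span_singleton.1 hw
  exact ⟨r, d, hd, e⟩

lemma Ge.dec2 {k : ℕ} {a b : L} (h : Ge k {a, b}) {y : L} (hy : y ∈ DD L k) :
    ∃ r s : ℝ, ∃ d ∈ DD L (k + 1), y = r • a + s • b + d := by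
  obtain ⟨d, hd, w, hw, e⟩ := h.dec hy
  obtain ⟨r, s, rfl⟩ := Submodule.mem_span_pair.1 hw
  exact ⟨r, s, d, hd, e⟩

lemma Ge.dec1b {k : ℕ} {a : L} (h : Ge k {a}) (hb : DD L (k + 1) = ⊥) {y : L} (hy : y ∈ DD L k) :
    ∃ r : ℝ, y = r • a := by
  obtain ⟨r, d, hd, e⟩ := h.dec1 hy
  rw [hb, Submodule.mem_bot] at hd
  exact ⟨r, by rw [e, hd, add_zero]⟩

lemma Ge.dec2b {k : ℕ} {a b : L} (h : Ge k {a, b}) (hb : DD L (k + 1) = ⊥) {y : L} (hy : y ∈ DD L k) :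
    ∃ r s : ℝ, y = r • a + s • b := by
  obtain ⟨r, s, d, hd, e⟩ := h.dec2 hy
  rw [hb, Submodule.mem_bot] at hd
  exact ⟨r, s, by rw [e, hd, add_zero]⟩

variable [Module.Finite ℝ L]

lemma DD_drop (hN : Nilp L) (k : ℕ) (h : Module.finrank ℝ (DD L k) ≠ 0) :
    Module.finrank ℝ (DD L (k + 1)) < Module.finrank ℝ (DD L k) := by
  refine Submodule.finrank_lt_finrank_of_lt (lt_of_le_of_ne (DD_succ_le k) fun he => ?_)
  obtain ⟨K, hK⟩ := hN
  have h1 := DD_stab he K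
  have h2 : DD L (k + K) ≤ ⊥ := by rw [← hK]; exact DD_anti (by omega)
  rw [h1, le_bot_iff] at h2
  exact h (by rw [h2]; simp)

lemma DD_zero_rank : Module.finrank ℝ (DD L 0) = Module.finrank ℝ L := finrank_top ℝ L

lemma DD_bot {k : ℕ} (h : Module.finrank ℝ (DD L k) = 0) : DD L k = ⊥ :=
  Submodule.finrank_eq_zero.1 h

lemma Ge.le {k m : ℕ} (w : Fin m → L) (h : Ge k (Set.range w)) :
    Module.finrank ℝ (DD L k) ≤ Module.finrank ℝ (DD L (k + 1)) + m := by
  have h1 := h (DD L (k + 1) ⊔ Submodule.span ℝ (Set.range w)) le_sup_left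
    (Submodule.subset_span.trans (SetLike.coe_subset_coe.2 le_sup_right))
  have h2 := Submodule.finrank_mono h1
  have h3 := Submodule.finrank_add_le_finrank_add_finrank (DD L (k + 1)) (Submodule.span ℝ (Set.range w))
  have h4 := finrank_range_le_card (R := ℝ) w
  rw [Fintype.card_fin, Set.finrank] at h4
  omega

lemma Ge.le1 {k : ℕ} {a : L} (h : Ge k {a}) :
    Module.finrank ℝ (DD L k) ≤ Module.finrank ℝ (DD L (k + 1)) + 1 :=
  Ge.le ![a] (by simpa [Matrix.range_cons] using h)

lemma Ge.le2 {k : ℕ} {a b : L} (h : Ge k {a, b}) :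
    Module.finrank ℝ (DD L k) ≤ Module.finrank ℝ (DD L (k + 1)) + 2 :=
  Ge.le ![a, b] (by
    have : Set.range ![a, b] = {a, b} := by ext; simp [eq_comm]; tauto
    rwa [this])

lemma Ge.le3 {k : ℕ} {a b c : L} (h : Ge k {a, b, c}) :
    Module.finrank ℝ (DD L k) ≤ Module.finrank ℝ (DD L (k + 1)) + 3 :=
  Ge.le ![a, b, c] (by
    have : Set.range ![a, b, c] = {a, b, c} := by ext; simp [eq_comm]; tauto
    rwa [this])

lemma dep_mod {m : ℕ} {P Q : Submodule ℝ L} (hPQ : P ≤ Q) (w : Fin m → L) (hw : ∀ i, w i ∈ Q)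
    (h : Module.finrank ℝ Q < Module.finrank ℝ P + m) :
    ∃ c : Fin m → ℝ, c ≠ 0 ∧ ∑ i, c i • w i ∈ P := by
  by_contra hc
  push Not at hc
  let f : (Fin m → ℝ) × P →ₗ[ℝ] L := LinearMap.coprod (Fintype.linearCombination ℝ w) P.subtype
  have hf : ∀ v, f v ∈ Q := by
    rintro ⟨c, p⟩
    simp only [f, LinearMap.coprod_apply, Fintype.linearCombination_apply, Submodule.subtype_apply]
    exact Q.add_mem (Q.sum_mem fun i _ => Q.smul_mem _ (hw i)) (hPQ p.2)
  have hinj : Function.Injective (f.codRestrict Q hf) := by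
    rw [← LinearMap.ker_eq_bot, LinearMap.ker_codRestrict, LinearMap.ker_eq_bot']
    rintro ⟨c, p⟩ h0
    simp only [f, LinearMap.coprod_apply, Fintype.linearCombination_apply, Submodule.subtype_apply] at h0
    have h1 : c = 0 := by
      by_contra h1
      refine hc c h1 ?_
      rw [eq_neg_of_add_eq_zero_left h0]
      exact P.neg_mem p.2
    subst h1
    simp at h0
    simp [h0]
  have := LinearMap.finrank_le_finrank_of_injective hinj
  simp at this
  omega

lemma exists_gens {d : ℕ} (h : Module.finrank ℝ (DD L 1) + d = Module.finrank ℝ L) :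
    ∃ x : Fin d → L, Ge 0 (Set.range x) := by
  have hq : Module.finrank ℝ (L ⧸ DD L 1) = d := by
    have := Submodule.finrank_quotient_add_finrank (DD L 1)
    omega
  let b := Module.finBasisOfFinrankEq ℝ (L ⧸ DD L 1) hq
  choose x hx using fun i => Submodule.mkQ_surjective (DD L 1) (b i)
  refine ⟨x, fun S hS hxS y _ => ?_⟩
  have h1 : y - ∑ i, b.repr ((DD L 1).mkQ y) i • x i ∈ DD L 1 := by
    rw [← Submodule.Quotient.mk_eq_zero, ← Submodule.mkQ_apply, map_sub, map_sum]
    simp only [map_smul, hx, b.sum_repr, sub_self]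
  have h2 := S.add_mem (hS h1) (S.sum_mem (t := Finset.univ) fun i _ => S.smul_mem (b.repr ((DD L 1).mkQ y) i) (hxS ⟨i, rfl⟩))
  rwa [sub_add_cancel] at h2

end

section
variable {L : Type} [LieRing L] [LieAlgebra ℝ L]

lemma good_abelian [Module.Finite ℝ L] (h : ∀ x y : L, ⁅x, y⁆ = 0) : Good L :=
  ⟨Fin (Module.finrank ℝ L), inferInstance, inferInstance, Module.finBasis ℝ L, fun _ _ _ => 0,
    by simp [h], by intro i j l; simp⟩

lemma good_split [Module.Finite ℝ L] (hN : Nilp L) (z : L) (hz : ∀ x : L, ⁅x, z⁆ = 0) (hz1 : z ∉ DD L 1)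
    (IH : ∀ (K : Type) [LieRing K] [LieAlgebra ℝ K] [Module.Finite ℝ K], Nilp K →
      Module.finrank ℝ K + 1 = Module.finrank ℝ L → Good K) : Good L := by
  obtain ⟨f, hf1, hf2⟩ := Submodule.exists_le_ker_of_notMem hz1
  obtain ⟨g, hg1, hg2⟩ : ∃ g : L →ₗ[ℝ] ℝ, g z = 1 ∧ ∀ y ∈ DD L 1, g y = 0 :=
    ⟨(f z)⁻¹ • f, by simp [hf1], fun y hy => by simp [LinearMap.mem_ker.1 (hf2 hy)]⟩
  have hgb : ∀ x y : L, g ⁅x, y⁆ = 0 := fun x y => hg2 _ (DD_lie x (DD_mem_zero y))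
  have hz' : ∀ x : L, ⁅z, x⁆ = 0 := fun x => by rw [flipb (hz x), neg_zero]
  let K : LieSubalgebra ℝ L := { LinearMap.ker g with
    lie_mem' := fun {x y} _ _ => LinearMap.mem_ker.2 (hgb x y) }
  have hK : ∀ x, x ∈ K ↔ g x = 0 := fun x => Iff.rfl
  let T : L ≃ₗ[ℝ] K × ℝ :=
    { toFun := fun x => (⟨x - g x • z, by rw [hK]; simp [hg1]⟩, g x)
      map_add' := fun x y => by
        ext
        · simp; module
        · simp
      map_smul' := fun r x => by
        ext
        · simp; module
        · simp
      invFun := fun p => p.1 + p.2 • z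
      left_inv := fun x => by simp
      right_inv := fun p => by
        obtain ⟨⟨k, hk⟩, r⟩ := p
        rw [hK] at hk
        ext <;> simp [hk, hg1] }
  have hfr : Module.finrank ℝ K + 1 = Module.finrank ℝ L := by
    rw [T.finrank_eq]; simp
  letI : LieRing ℝ := LieRing.ofAssociativeRing
  letI : LieAlgebra ℝ ℝ := LieAlgebra.ofAssociativeAlgebra
  refine good_of_sum (L₁ := K) (L₂ := ℝ) (IH K ?_ hfr) (good_abelian fun x y => ?_) T ?_
  · obtain ⟨k, hk⟩ := hN
    refine ⟨k, ?_⟩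
    have : ∀ k, (DD K k).map (K.toSubmodule.subtype) ≤ DD L k := by
      intro k
      induction k with
      | zero => exact le_top
      | succ k ih =>
        rw [Submodule.map_le_iff_le_comap]
        refine Submodule.span_le.2 ?_
        rintro w ⟨x, y, hy, rfl⟩
        exact DD_lie (x : L) (ih ⟨y, hy, rfl⟩)
    have h2 := this k
    rw [hk] at h2
    rw [eq_bot_iff]
    intro x hx
    have h3 := h2 ⟨x, hx, rfl⟩
    rw [Submodule.mem_bot] at h3 ⊢
    exact Subtype.ext h3
  · rw [LieRing.of_associative_ring_bracket]; ring
  · intro x y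
    ext
    · simp [T, hgb, hz, hz']
    · simp [T, hgb, LieRing.of_associative_ring_bracket, mul_comm]

end

section
variable {L : Type} [LieRing L] [LieAlgebra ℝ L]

lemma Ge.mod {k : ℕ} {W V : Set L} (h : Ge k W)
    (hV : ∀ S : Submodule ℝ L, DD L (k + 1) ≤ S → V ⊆ S → W ⊆ S) : Ge k V :=
  fun S h1 h2 => h S h1 (hV S h1 h2)

variable (L) in
def rk (k : ℕ) : ℕ := Module.finrank ℝ (DD L k)

lemma drop [Module.Finite ℝ L] (hN : Nilp L) (i j : ℕ) (h : rk L i ≠ 0) (hij : i + 1 = j := by rfl) :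
    rk L j < rk L i := by subst hij; exact DD_drop hN i h

lemma rk_bot [Module.Finite ℝ L] {k : ℕ} (h : rk L k = 0) : DD L k = ⊥ := DD_bot h

lemma Ge.r1 [Module.Finite ℝ L] {k : ℕ} {a : L} (h : Ge k {a}) (j : ℕ) (hij : k + 1 = j := by rfl) :
    rk L k ≤ rk L j + 1 := by subst hij; exact h.le1

lemma Ge.r2 [Module.Finite ℝ L] {k : ℕ} {a b : L} (h : Ge k {a, b}) (j : ℕ) (hij : k + 1 = j := by rfl) :
    rk L k ≤ rk L j + 2 := by subst hij; exact h.le2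

lemma Ge.r3 [Module.Finite ℝ L] {k : ℕ} {a b c : L} (h : Ge k {a, b, c}) (j : ℕ) (hij : k + 1 = j := by rfl) :
    rk L k ≤ rk L j + 3 := by subst hij; exact h.le3

lemma gens2 [Module.Finite ℝ L] (h : rk L 1 + 2 = Module.finrank ℝ L) : ∃ x1 x2 : L, Ge 0 {x1, x2} := by
  obtain ⟨x, hx⟩ := exists_gens (L := L) h
  exact ⟨x 0, x 1, hx.mod fun S _ h => by
    rintro _ ⟨i, rfl⟩; fin_cases i <;> exact h (by simp)⟩

lemma gens3 [Module.Finite ℝ L] (h : rk L 1 + 3 = Module.finrank ℝ L) :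
    ∃ x1 x2 x3 : L, Ge 0 {x1, x2, x3} := by
  obtain ⟨x, hx⟩ := exists_gens (L := L) h
  exact ⟨x 0, x 1, x 2, hx.mod fun S _ h => by
    rintro _ ⟨i, rfl⟩; fin_cases i <;> exact h (by simp)⟩

lemma gens4 [Module.Finite ℝ L] (h : rk L 1 + 4 = Module.finrank ℝ L) :
    ∃ x1 x2 x3 x4 : L, Ge 0 {x1, x2, x3, x4} := by
  obtain ⟨x, hx⟩ := exists_gens (L := L) h
  exact ⟨x 0, x 1, x 2, x 3, hx.mod fun S _ h => by
    rintro _ ⟨i, rfl⟩; fin_cases i <;> exact h (by simp)⟩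

lemma Ge.drop {k : ℕ} {a b : L} (h : Ge k {a, b}) (hb : b ∈ DD L (k + 1)) : Ge k {a} :=
  h.mod fun S h1 h2 => by
    simp only [Set.singleton_subset_iff, SetLike.mem_coe, Set.insert_subset_iff] at *
    exact ⟨h2, h1 hb⟩

lemma Ge.next21 {k : ℕ} {x1 x2 w : L} (hX : Ge 0 {x1, x2}) (hW : Ge k {w}) (hw : w ∈ DD L k) :
    Ge (k + 1) {⁅x1, w⁆, ⁅x2, w⁆} := by
  refine hX.next hW (by simpa using hw) fun S _ h => ?_
  simpa [Set.insert_subset_iff] using h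

lemma Ge.next22 {k : ℕ} {x1 x2 w v : L} (hX : Ge 0 {x1, x2}) (hW : Ge k {w, v}) (hw : w ∈ DD L k)
    (hv : v ∈ DD L k) : Ge (k + 1) {⁅x1, w⁆, ⁅x2, w⁆, ⁅x1, v⁆, ⁅x2, v⁆} := by
  refine hX.next hW (by simp [hw, hv]) fun S _ h => ?_
  simp [Set.insert_subset_iff] at h ⊢
  tauto

lemma Ge.next2 {x1 x2 : L} (hX : Ge 0 {x1, x2}) : Ge 1 {⁅x1, x2⁆} := by
  refine hX.next hX (fun _ _ => DD_mem_zero _) fun S _ h => ?_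
  simp at h
  have h' : ⁅x2, x1⁆ ∈ S := by rw [← lie_skew]; exact S.neg_mem h
  simp [h, h']

lemma lie_mem1 (x y : L) : ⁅x, y⁆ ∈ DD L 1 := DD_lie x (DD_mem_zero y)

lemma mem_of_comb {S : Submodule ℝ L} {c : ℝ} (hc : c ≠ 0) {x w : L} (hw : w ∈ S) (h : c • x = w) :
    x ∈ S := (S.smul_mem_iff hc).1 (h ▸ hw)

/-- normalise two generators so that `[x2,[x1,x2]]` is one step deeper -/
lemma choose2 [Module.Finite ℝ L] {a b : L} (hX : Ge 0 {a, b})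
    (h : rk L 2 < rk L 3 + 2) :
    ∃ x1 x2 : L, Ge 0 {x1, x2} ∧ ⁅x2, ⁅x1, x2⁆⁆ ∈ DD L 3 := by
  obtain ⟨c, hc, hm⟩ := dep_mod (DD_succ_le 2) ![⁅a, ⁅a, b⁆⁆, ⁅b, ⁅a, b⁆⁆]
    (by simp only [Fin.forall_fin_two]; exact ⟨DD_lie _ (lie_mem1 _ _), DD_lie _ (lie_mem1 _ _)⟩) h
  simp only [Fin.sum_univ_two, Matrix.cons_val_zero, Matrix.cons_val_one] at hm
  by_cases h1 : c 1 = 0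
  · have h0 : c 0 ≠ 0 := by
      intro h0; apply hc; ext i; fin_cases i <;> simp [h0, h1]
    refine ⟨b, a, by rwa [Set.pair_comm], ?_⟩
    rw [h1, zero_smul, add_zero, Submodule.smul_mem_iff _ h0] at hm
    rw [← lie_skew b a, lie_neg]
    exact Submodule.neg_mem _ hm
  · refine ⟨a, c 0 • a + c 1 • b, hX.mod fun S _ hS => ?_, ?_⟩
    · simp only [Set.insert_subset_iff, Set.singleton_subset_iff, SetLike.mem_coe] at hS ⊢
      exact ⟨hS.1, mem_of_comb h1 (S.sub_mem hS.2 (S.smul_mem (c 0) hS.1)) (by module)⟩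
    · have := Submodule.smul_mem _ (c 1) hm
      convert this using 1
      simp [lie_smul, smul_lie, add_lie, lie_add]

variable [Module.Finite ℝ L]

lemma c42 (hn : Module.finrank ℝ L = 4) (hN : Nilp L)
    (hd : rk L 1 = 2) : Good L := by
  obtain ⟨x1, x2, hx0⟩ := gens2 (L := L) (by omega)
  have e2 := drop hN 1 2 (by omega)
  have e2' := hx0.next2.r1 2
  have e3 := drop hN 2 3 (by omega)
  obtain ⟨x1, x2, hX, h23⟩ := choose2 hx0 (by omega)
  have hb : DD L 3 = ⊥ := rk_bot (by omega)
  have G1 := hX.next2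
  have G2 := (hX.next21 G1 (lie_mem1 _ _)).drop h23
  generalize h12 : ⁅x1, x2⁆ = x3 at *
  generalize h13 : ⁅x1, x3⁆ = x4 at *
  have m3 : x3 ∈ DD L 1 := by rw [← h12]; exact lie_mem1 _ _
  have m4 : x4 ∈ DD L 2 := by rw [← h13]; exact DD_lie _ m3
  have h23' := DD_eq_zero hb h23
  have h14 : ⁅x1, x4⁆ = 0 := DD_eq_zero hb (DD_lie _ m4)
  have h24 : ⁅x2, x4⁆ = 0 := DD_eq_zero hb (DD_lie _ m4)
  have h34 : ⁅x3, x4⁆ = 0 := DD_eq_zero hb (DD_lie _ m4)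
  have hS : Sp ![x1, x2, x3, x4] := by
    intro S hS
    simp [Fin.forall_fin_succ] at hS
    have s3 : DD L 3 ≤ S := hb ▸ bot_le
    have s2 := G2 S s3 (by simp [hS])
    have s1 := G1 S s2 (by simp [hS])
    exact top_le_iff.1 (hX S s1 (by simp [Set.insert_subset_iff, hS]))
  refine TL43 hn ![1, 1] (by simp [Fin.forall_fin_succ]) _ hS (br4 ?_ ?_ ?_ ?_ ?_ ?_) <;>
    simp [tabV, Fin.sum_univ_succ, *]

lemma c52 (hn : Module.finrank ℝ L = 5) (hN : Nilp L)
    (hd : rk L 1 = 3) : Good L := by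
  obtain ⟨x1, x2, hx0⟩ := gens2 (L := L) (by omega)
  have e2 := drop hN 1 2 (by omega)
  have e2' := hx0.next2.r1 2
  have e3 := drop hN 2 3 (by omega)
  by_cases hd3 : rk L 3 = 0
  · have hb : DD L 3 = ⊥ := rk_bot (by omega)
    have G1 := hx0.next2
    have G2 := (hx0.next21 G1 (lie_mem1 _ _))
    generalize h12 : ⁅x1, x2⁆ = x3 at *
    generalize h13 : ⁅x1, x3⁆ = x4 at *
    generalize h23 : ⁅x2, x3⁆ = x5 at *
    have m3 : x3 ∈ DD L 1 := by rw [← h12]; exact lie_mem1 _ _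
    have m4 : x4 ∈ DD L 2 := by rw [← h13]; exact DD_lie _ m3
    have m5 : x5 ∈ DD L 2 := by rw [← h23]; exact DD_lie _ m3
    have h4 : ∀ x : L, ⁅x, x4⁆ = 0 := fun x => DD_eq_zero hb (DD_lie _ m4)
    have h5 : ∀ x : L, ⁅x, x5⁆ = 0 := fun x => DD_eq_zero hb (DD_lie _ m5)
    have hS : Sp ![x1, x2, x3, x4, x5] := by
      intro S hS
      simp [Fin.forall_fin_succ] at hS
      have s3 : DD L 3 ≤ S := hb ▸ bot_le
      have s2 := G2 S s3 (by simp [Set.insert_subset_iff, hS])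
      have s1 := G1 S s2 (by simp [hS])
      exact top_le_iff.1 (hx0 S s1 (by simp [Set.insert_subset_iff, hS]))
    refine TL59 hn ![1, 1, 1] (by simp [Fin.forall_fin_succ]) _ hS
      (br5 ?_ ?_ ?_ ?_ ?_ ?_ ?_ ?_ ?_ ?_) <;>
      simp [tabV, Fin.sum_univ_succ, *]
  · have e4 := drop hN 3 4 hd3
    have hb : DD L 4 = ⊥ := rk_bot (by omega)
    obtain ⟨x1, x2, hX, m23⟩ := choose2 hx0 (by omega)
    have G1 := hX.next2
    have G2 := (hX.next21 G1 (lie_mem1 _ _)).drop m23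
    generalize h12 : ⁅x1, x2⁆ = x3 at *
    generalize h13 : ⁅x1, x3⁆ = x4 at *
    have m3 : x3 ∈ DD L 1 := by rw [← h12]; exact lie_mem1 _ _
    have m4 : x4 ∈ DD L 2 := by rw [← h13]; exact DD_lie _ m3
    have h24 : ⁅x2, x4⁆ = 0 := by
      have := leibniz_lie x2 x1 x3
      rw [flipb h12, neg_lie, lie_self, h13, DD_eq_zero hb (DD_lie x1 m23)] at this
      simpa using this
    have G3 := (hX.next21 G2 m4).drop (by rw [h24]; exact Submodule.zero_mem _)
    generalize h14 : ⁅x1, x4⁆ = z at *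
    have mz : z ∈ DD L 3 := by rw [← h14]; exact DD_lie _ m4
    have hz : ∀ x : L, ⁅x, z⁆ = 0 := fun x => DD_eq_zero hb (DD_lie _ mz)
    have h34 : ⁅x3, x4⁆ = 0 := DD_eq_zero hb (DD_lie2 m3 m4)
    obtain ⟨β, h23⟩ := G3.dec1b hb m23
    have hS : Sp ![x1, x2, x3, x4, z] := by
      intro S hS
      simp [Fin.forall_fin_succ] at hS
      have s4 : DD L 4 ≤ S := hb ▸ bot_le
      have s3 := G3 S s4 (by simp [hS])
      have s2 := G2 S s3 (by simp [hS])
      have s1 := G1 S s2 (by simp [hS])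
      exact top_le_iff.1 (hX S s1 (by simp [Set.insert_subset_iff, hS]))
    by_cases hβ : β = 0
    · rw [hβ, zero_smul] at h23
      refine TL57 hn ![1, 1, 1] (by simp [Fin.forall_fin_succ]) _ hS
        (br5 ?_ ?_ ?_ ?_ ?_ ?_ ?_ ?_ ?_ ?_) <;>
        simp [tabV, Fin.sum_univ_succ, *]
    · refine TL56 hn ![1, 1, 1, β] (by simp [Fin.forall_fin_succ, hβ]) _ hS
        (br5 ?_ ?_ ?_ ?_ ?_ ?_ ?_ ?_ ?_ ?_) <;>
        simp [tabV, Fin.sum_univ_succ, *]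
end

section
variable {L : Type} [LieRing L] [LieAlgebra ℝ L]

lemma gen_one [Module.Finite ℝ L] {k : ℕ} (h : rk L k = 1) (j : ℕ) (hj : rk L j = 0) (hkj : k + 1 = j := by rfl) :
    ∃ z ∈ DD L k, z ≠ 0 ∧ Ge k {z} ∧ (∀ x : L, ⁅x, z⁆ = 0) ∧ (∀ x : L, ⁅z, x⁆ = 0) ∧
      ∀ y ∈ DD L k, ∃ r : ℝ, y = r • z := by
  subst hkj
  obtain ⟨⟨z, hz⟩, h0, h1⟩ := finrank_eq_one_iff'.1 h
  have hz2 : ∀ x : L, ⁅x, z⁆ = 0 := fun x => DD_eq_zero (rk_bot hj) (DD_lie x hz) le_rfl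
  have h2 : ∀ y ∈ DD L k, ∃ r : ℝ, y = r • z := by
    intro y hy
    obtain ⟨c, hc⟩ := h1 ⟨y, hy⟩
    exact ⟨c, by simpa using (congrArg Subtype.val hc).symm⟩
  refine ⟨z, hz, fun h => h0 (Subtype.ext h), ?_, hz2, fun x => by rw [flipb (hz2 x), neg_zero], h2⟩
  intro S _ hS y hy
  obtain ⟨r, rfl⟩ := h2 y hy
  exact S.smul_mem _ (by simpa using hS)

lemma c62A1 (hn : Module.finrank ℝ L = 6) {x1 x2 x3 x4 x5 z : L} {a b c : ℝ} (ha : a ≠ 0)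
    (hx : Sp ![x1, x2, x3, x4, x5, z]) (hz : ∀ x : L, ⁅x, z⁆ = 0)
    (h12 : ⁅x1, x2⁆ = x3) (h13 : ⁅x1, x3⁆ = x4) (h23 : ⁅x2, x3⁆ = x5)
    (h14 : ⁅x1, x4⁆ = a • z) (h15 : ⁅x1, x5⁆ = b • z) (h24 : ⁅x2, x4⁆ = b • z) (h25 : ⁅x2, x5⁆ = c • z)
    (h34 : ⁅x3, x4⁆ = 0) (h35 : ⁅x3, x5⁆ = 0) (h45 : ⁅x4, x5⁆ = 0) : Good L := by
  obtain ⟨t, ht⟩ : ∃ t, t = b / a := ⟨_, rfl⟩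
  have hta : t * a = b := by rw [ht]; field_simp
  obtain ⟨y2, hy2⟩ : ∃ y2, y2 = x2 + (-t) • x1 := ⟨_, rfl⟩
  obtain ⟨y5, hy5⟩ : ∃ y2, y2 = x5 + (-t) • x4 := ⟨_, rfl⟩
  have hS : Sp ![x1, y2, x3, x4, y5, z] := by
    intro S hS
    simp [Fin.forall_fin_succ] at hS
    obtain ⟨m1, m2, m3, m4, m5, m6⟩ := hS
    rw [hy2] at m2
    rw [hy5] at m5
    have k2 := (S.add_mem_iff_left (S.smul_mem _ m1)).1 m2
    have k5 := (S.add_mem_iff_left (S.smul_mem _ m4)).1 m5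
    apply hx
    simp [Fin.forall_fin_succ, *]
  have e12 : ⁅x1, y2⁆ = x3 := by simp [hy2, h12]
  have e23 : ⁅y2, x3⁆ = y5 := by simp [hy2, hy5, h13, h23]
  have e24 : ⁅y2, x4⁆ = 0 := by simp [hy2, h14, h24, smul_smul, hta]
  have e15 : ⁅x1, y5⁆ = 0 := by simp [hy5, h14, h15, smul_smul, hta]
  have e25 : ⁅y2, y5⁆ = (c - t * b) • z := by
    simp [hy2, hy5, h14, h24, h15, h25, smul_smul, hta]; module
  have e35 : ⁅x3, y5⁆ = 0 := by simp [hy5, h34, h35]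
  have e45 : ⁅x4, y5⁆ = 0 := by simp [hy5, h45]
  clear hy2 hy5 ht h12 h23 h24 h25 h15
  by_cases hc : c - t * b = 0
  · rw [hc, zero_smul] at e25
    refine T28 hn ![1, 1, 1, a] (by simp [Fin.forall_fin_succ, ha]) _ hS
      (br6 ?_ ?_ ?_ ?_ ?_ ?_ ?_ ?_ ?_ ?_ ?_ ?_ ?_ ?_ ?_) <;> simp [tabV, Fin.sum_univ_succ, *]
  · refine T21 hn ![1, 1, 1, a, c - t * b] (by simp [Fin.forall_fin_succ, ha, hc]) _ hS
      (br6 ?_ ?_ ?_ ?_ ?_ ?_ ?_ ?_ ?_ ?_ ?_ ?_ ?_ ?_ ?_) <;> simp [tabV, Fin.sum_univ_succ, *]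

lemma c62A (hn : Module.finrank ℝ L = 6) {x1 x2 x3 x4 x5 z : L} {a b c : ℝ}
    (habc : ¬ (a = 0 ∧ b = 0 ∧ c = 0))
    (hx : Sp ![x1, x2, x3, x4, x5, z]) (hz : ∀ x : L, ⁅x, z⁆ = 0)
    (h12 : ⁅x1, x2⁆ = x3) (h13 : ⁅x1, x3⁆ = x4) (h23 : ⁅x2, x3⁆ = x5)
    (h14 : ⁅x1, x4⁆ = a • z) (h15 : ⁅x1, x5⁆ = b • z) (h24 : ⁅x2, x4⁆ = b • z) (h25 : ⁅x2, x5⁆ = c • z)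
    (h34 : ⁅x3, x4⁆ = 0) (h35 : ⁅x3, x5⁆ = 0) (h45 : ⁅x4, x5⁆ = 0) : Good L := by
  by_cases ha : a = 0
  · by_cases hc : c = 0
    · subst ha hc
      have hb : b ≠ 0 := by tauto
      have hS : Sp ![x1 + x2, x2, x3, x4 + x5, x5, z] := by
        intro S hS
        simp [Fin.forall_fin_succ] at hS
        obtain ⟨m1, m2, m3, m4, m5, m6⟩ := hS
        have k2 := (S.add_mem_iff_left m2).1 m1
        have k5 := (S.add_mem_iff_left m5).1 m4
        apply hx
        simp [Fin.forall_fin_succ, *]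
      refine c62A1 hn (a := 2 * b) (b := b) (c := 0) (by simpa using hb) hS hz ?_ ?_ ?_ ?_ ?_ ?_ ?_ ?_ ?_ ?_
      all_goals simp [*]
      module
    · have hS : Sp ![x2, x1, -x3, -x5, -x4, z] := by
        intro S hS
        simp [Fin.forall_fin_succ] at hS
        apply hx
        simp [Fin.forall_fin_succ, *]
      refine c62A1 hn (a := -c) (b := -b) (c := -a) (by simpa using hc) hS hz ?_ ?_ ?_ ?_ ?_ ?_ ?_ ?_ ?_ ?_
      all_goals simp [*, flipb h12, flipb h45]
  · exact c62A1 hn ha hx hz h12 h13 h23 h14 h15 h24 h25 h34 h35 h45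

lemma c62B1' (hn : Module.finrank ℝ L = 6) {x1 x2 x3 x4 x5 z : L} {b β β' : ℝ} (hb : b ≠ 0)
    (hx : Sp ![x1, x2, x3, x4, x5, z]) (hz : ∀ x : L, ⁅x, z⁆ = 0)
    (h12 : ⁅x1, x2⁆ = x3) (h13 : ⁅x1, x3⁆ = x4) (h14 : ⁅x1, x4⁆ = x5) (h23 : ⁅x2, x3⁆ = β • x5 + β' • z)
    (h15 : ⁅x1, x5⁆ = 0) (h24 : ⁅x2, x4⁆ = 0) (h25 : ⁅x2, x5⁆ = b • z)
    (h34 : ⁅x3, x4⁆ = (-b) • z) (h35 : ⁅x3, x5⁆ = 0) (h45 : ⁅x4, x5⁆ = 0) : Good L := by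
  obtain ⟨t, ht⟩ : ∃ t, t = - β' / (2 * b) := ⟨_, rfl⟩
  have hta : 2 * t * b = - β' := by rw [ht]; field_simp
  obtain ⟨y2, hy2⟩ : ∃ y2, y2 = x2 + t • x4 := ⟨_, rfl⟩
  obtain ⟨y3, hy3⟩ : ∃ y2, y2 = x3 + t • x5 := ⟨_, rfl⟩
  have hS : Sp ![x1, y2, y3, x4, x5, z] := by
    intro S hS
    simp [Fin.forall_fin_succ] at hS
    obtain ⟨m1, m2, m3, m4, m5, m6⟩ := hS
    rw [hy2] at m2
    rw [hy3] at m3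
    have k2 := (S.add_mem_iff_left (S.smul_mem _ m4)).1 m2
    have k5 := (S.add_mem_iff_left (S.smul_mem _ m5)).1 m3
    apply hx
    simp [Fin.forall_fin_succ, *]
  have e12 : ⁅x1, y2⁆ = y3 := by simp [hy2, hy3, h12, h14]
  have e13 : ⁅x1, y3⁆ = x4 := by simp [hy3, h13, h15]
  have e23 : ⁅y2, y3⁆ = β • x5 := by
    simp [hy2, hy3, h23, h25, flipb h34, h45]
    match_scalars
    · ring
    · linear_combination hta
  have e24 : ⁅y2, x4⁆ = 0 := by simp [hy2, h24]
  have e25 : ⁅y2, x5⁆ = b • z := by simp [hy2, h25, h45]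
  have e34 : ⁅y3, x4⁆ = (-b) • z := by simp [hy3, h34, flipb h45]
  have e35 : ⁅y3, x5⁆ = 0 := by simp [hy3, h35]
  clear hy2 hy3 ht h12 h13 h23 h24 h25 h34 h35
  by_cases hc : β = 0
  · rw [hc, zero_smul] at e23
    refine T16 hn ![1, 1, 1, b, -b] (by simp [Fin.forall_fin_succ, hb]) (by simp) _ hS
      (br6 ?_ ?_ ?_ ?_ ?_ ?_ ?_ ?_ ?_ ?_ ?_ ?_ ?_ ?_ ?_) <;> simp [tabV, Fin.sum_univ_succ, *]
  · refine T14 hn ![1, 1, 1, β, b, -b] (by simp [Fin.forall_fin_succ, hb, hc]) (by simp) _ hS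
      (br6 ?_ ?_ ?_ ?_ ?_ ?_ ?_ ?_ ?_ ?_ ?_ ?_ ?_ ?_ ?_) <;> simp [tabV, Fin.sum_univ_succ, *]

lemma c62B1 (hn : Module.finrank ℝ L = 6) {x1 x2 x3 x4 x5 z : L} {a b β β' : ℝ} (hb : b ≠ 0)
    (hx : Sp ![x1, x2, x3, x4, x5, z]) (hz : ∀ x : L, ⁅x, z⁆ = 0)
    (h12 : ⁅x1, x2⁆ = x3) (h13 : ⁅x1, x3⁆ = x4) (h14 : ⁅x1, x4⁆ = x5) (h23 : ⁅x2, x3⁆ = β • x5 + β' • z)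
    (h15 : ⁅x1, x5⁆ = a • z) (h24 : ⁅x2, x4⁆ = (β * a) • z) (h25 : ⁅x2, x5⁆ = b • z)
    (h34 : ⁅x3, x4⁆ = (-b) • z) (h35 : ⁅x3, x5⁆ = 0) (h45 : ⁅x4, x5⁆ = 0) : Good L := by
  obtain ⟨t, ht⟩ : ∃ t, t = - a / b := ⟨_, rfl⟩
  have hta : t * b = - a := by rw [ht]; field_simp
  clear ht
  have hS : Sp ![x1 + t • x2, x2, x3, x4 + t • (β • x5 + β' • z), x5 + (t * β * a) • z, z] := by
    intro S hS
    simp [Fin.forall_fin_succ] at hS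
    obtain ⟨m1, m2, m3, m4, m5, m6⟩ := hS
    have k1 := (S.add_mem_iff_left (S.smul_mem _ m2)).1 m1
    have k5 := (S.add_mem_iff_left (S.smul_mem _ m6)).1 m5
    have k4 := (S.add_mem_iff_left (S.add_mem (S.smul_mem _ (S.smul_mem _ k5)) (S.smul_mem _ (S.smul_mem _ m6)))).1 m4
    apply hx
    simp [Fin.forall_fin_succ, *]
  refine c62B1' hn (b := b) (β := β) (β' := β' - t * β ^ 2 * a) hb hS hz ?_ ?_ ?_ ?_ ?_ ?_ ?_ ?_ ?_ ?_
  · simp [h12]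
  · simp [h13, h23]
  · simp [h14, h15, h24, h25, hz, smul_smul]
    match_scalars
    · ring
    · linear_combination (t * β) * hta
  · simp [h23]; module
  · simp [h15, h25, hz, smul_smul, hta]
  · simp [h24, h25, hz, smul_smul]
    match_scalars
    linear_combination β * hta
  · simp [h25, hz]
  · simp [h34, h35, hz]
  · simp [h35, hz]
  · simp [h45, hz, flipb (hz _)]

lemma c62B2 (hn : Module.finrank ℝ L = 6) {x1 x2 x3 x4 x5 z : L} {a β β' : ℝ} (ha : a ≠ 0)
    (hx : Sp ![x1, x2, x3, x4, x5, z]) (hz : ∀ x : L, ⁅x, z⁆ = 0)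
    (h12 : ⁅x1, x2⁆ = x3) (h13 : ⁅x1, x3⁆ = x4) (h14 : ⁅x1, x4⁆ = x5) (h23 : ⁅x2, x3⁆ = β • x5 + β' • z)
    (h15 : ⁅x1, x5⁆ = a • z) (h24 : ⁅x2, x4⁆ = (β * a) • z) (h25 : ⁅x2, x5⁆ = 0)
    (h34 : ⁅x3, x4⁆ = 0) (h35 : ⁅x3, x5⁆ = 0) (h45 : ⁅x4, x5⁆ = 0) : Good L := by
  by_cases hβ : β = 0
  · subst hβ
    rw [zero_smul, zero_add] at h23
    rw [zero_mul, zero_smul] at h24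
    by_cases hc : β' = 0
    · rw [hc, zero_smul] at h23
      refine T18 hn ![1, 1, 1, a] (by simp [Fin.forall_fin_succ, ha]) _ hx
        (br6 ?_ ?_ ?_ ?_ ?_ ?_ ?_ ?_ ?_ ?_ ?_ ?_ ?_ ?_ ?_) <;> simp [tabV, Fin.sum_univ_succ, *]
    · refine T17 hn ![1, 1, 1, a, β'] (by simp [Fin.forall_fin_succ, ha, hc]) _ hx
        (br6 ?_ ?_ ?_ ?_ ?_ ?_ ?_ ?_ ?_ ?_ ?_ ?_ ?_ ?_ ?_) <;> simp [tabV, Fin.sum_univ_succ, *]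
  · obtain ⟨t, ht⟩ : ∃ t, t = β' / (2 * β ^ 2 * a) := ⟨_, rfl⟩
    have hta : 2 * t * β ^ 2 * a = β' := by rw [ht]; field_simp
    obtain ⟨y1, hy1⟩ : ∃ y, y = x1 + t • x2 := ⟨_, rfl⟩
    obtain ⟨y4, hy4⟩ : ∃ y, y = x4 + t • (β • x5 + β' • z) := ⟨_, rfl⟩
    obtain ⟨y5, hy5⟩ : ∃ y, y = x5 + (2 * t * β * a) • z := ⟨_, rfl⟩
    have hS : Sp ![y1, x2, x3, y4, y5, z] := by
      intro S hS
      simp [Fin.forall_fin_succ] at hS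
      obtain ⟨m1, m2, m3, m4, m5, m6⟩ := hS
      rw [hy1] at m1
      rw [hy4] at m4
      rw [hy5] at m5
      have k1 := (S.add_mem_iff_left (S.smul_mem _ m2)).1 m1
      have k5 := (S.add_mem_iff_left (S.smul_mem _ m6)).1 m5
      have k4 := (S.add_mem_iff_left (S.smul_mem t (S.add_mem (S.smul_mem β k5) (S.smul_mem β' m6)))).1 m4
      apply hx
      simp [Fin.forall_fin_succ, *]
    have e12 : ⁅y1, x2⁆ = x3 := by simp [hy1, h12]
    have e13 : ⁅y1, x3⁆ = y4 := by simp [hy1, hy4, h13, h23]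
    have e14 : ⁅y1, y4⁆ = y5 := by simp [hy1, hy4, hy5, h14, h24, h15, h25, hz]; module
    have e15 : ⁅y1, y5⁆ = a • z := by simp [hy1, hy5, h15, h25, hz]
    have e23 : ⁅x2, x3⁆ = β • y5 := by
      rw [hy5, h23]
      match_scalars
      · ring
      · linear_combination -hta
    have e24 : ⁅x2, y4⁆ = (β * a) • z := by simp [hy4, h24, h25, hz]
    have e25 : ⁅x2, y5⁆ = 0 := by simp [hy5, h25, hz]
    have e34 : ⁅x3, y4⁆ = 0 := by simp [hy4, h34, h35, hz]
    have e35 : ⁅x3, y5⁆ = 0 := by simp [hy5, h35, hz]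
    have e45 : ⁅y4, y5⁆ = 0 := by simp [hy4, hy5, h45, hz, flipb (hz _)]
    clear hy1 hy4 hy5 ht h12 h13 h23 h24 h25 h34 h35 h14 h15
    refine T15 hn ![1, 1, 1, β, a, β * a] (by simp [Fin.forall_fin_succ, ha, hβ]) (by simp) _ hS
      (br6 ?_ ?_ ?_ ?_ ?_ ?_ ?_ ?_ ?_ ?_ ?_ ?_ ?_ ?_ ?_) <;> simp [tabV, Fin.sum_univ_succ, *]
end

section
variable {L : Type} [LieRing L] [LieAlgebra ℝ L] [Module.Finite ℝ L]

lemma c62 (hn : Module.finrank ℝ L = 6) (hN : Nilp L)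
    (hd : rk L 1 = 4) : Good L := by
  obtain ⟨x1, x2, hx0⟩ := gens2 (L := L) (by omega)
  have e2 := drop hN 1 2 (by omega)
  have e2' := hx0.next2.r1 2
  have e3 := drop hN 2 3 (by omega)
  have e3' : rk L 2 ≤ rk L 3 + 2 := (hx0.next21 hx0.next2 (lie_mem1 _ _)).r2 3
  have e4 := drop hN 3 4 (by omega)
  by_cases hd3 : rk L 3 = 1
  · have G1 := hx0.next2
    have G2 := (hx0.next21 G1 (lie_mem1 _ _))
    have hb : DD L 4 = ⊥ := rk_bot (by omega)
    obtain ⟨z, mz, hz0, G3, hz, hz', hdz⟩ := gen_one hd3 4 (by omega)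
    generalize h12 : ⁅x1, x2⁆ = x3 at *
    generalize h13 : ⁅x1, x3⁆ = x4 at *
    generalize h23 : ⁅x2, x3⁆ = x5 at *
    have m3 : x3 ∈ DD L 1 := by rw [← h12]; exact lie_mem1 _ _
    have m4 : x4 ∈ DD L 2 := by rw [← h13]; exact DD_lie _ m3
    have m5 : x5 ∈ DD L 2 := by rw [← h23]; exact DD_lie _ m3
    have h34 : ⁅x3, x4⁆ = 0 := DD_eq_zero hb (DD_lie2 m3 m4)
    have h35 : ⁅x3, x5⁆ = 0 := DD_eq_zero hb (DD_lie2 m3 m5)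
    have h45 : ⁅x4, x5⁆ = 0 := DD_eq_zero hb (DD_lie2 m4 m5)
    obtain ⟨a, h14⟩ := hdz _ (DD_lie x1 m4)
    obtain ⟨b, h15⟩ := hdz _ (DD_lie x1 m5)
    obtain ⟨c, h25⟩ := hdz _ (DD_lie x2 m5)
    have h24 : ⁅x2, x4⁆ = b • z := by
      have := leibniz_lie x1 x2 x3
      rw [h12, lie_self, h13, h23, h15] at this
      simpa using this.symm
    have hS : Sp ![x1, x2, x3, x4, x5, z] := by
      intro S hS
      simp [Fin.forall_fin_succ] at hS
      have s4 : DD L 4 ≤ S := hb ▸ bot_le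
      have s3 := G3 S s4 (by simp [Set.insert_subset_iff, hS])
      have s2 := G2 S s3 (by simp [Set.insert_subset_iff, hS])
      have s1 := G1 S s2 (by simp [hS])
      exact top_le_iff.1 (hx0 S s1 (by simp [Set.insert_subset_iff, hS]))
    refine c62A hn (a := a) (b := b) (c := c) ?_ hS hz h12 h13 h23 h14 h15 h24 h25 h34 h35 h45
    rintro ⟨rfl, rfl, rfl⟩
    have := hx0.next22 G2 m4 m5 ⊥ hb.le (by simp [Set.insert_subset_iff, h14, h15, h24, h25])
    exact hz0 (by simpa using this mz)
  · obtain ⟨x1, x2, hX, m23⟩ := choose2 hx0 (by omega)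
    have G1 := hX.next2
    have G2 := (hX.next21 G1 (lie_mem1 _ _)).drop m23
    generalize h12 : ⁅x1, x2⁆ = x3 at *
    generalize h13 : ⁅x1, x3⁆ = x4 at *
    have m3 : x3 ∈ DD L 1 := by rw [← h12]; exact lie_mem1 _ _
    have m4 : x4 ∈ DD L 2 := by rw [← h13]; exact DD_lie _ m3
    have h24' : ⁅x2, x4⁆ = ⁅x1, ⁅x2, x3⁆⁆ := by
      have := leibniz_lie x1 x2 x3
      rw [h12, lie_self, h13] at this
      simpa using this.symm
    have m24 : ⁅x2, x4⁆ ∈ DD L 4 := by rw [h24']; exact DD_lie _ m23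
    have G3 := (hX.next21 G2 m4).drop m24
    have e4' : rk L 3 ≤ rk L 4 + 1 := G3.r1 4
    have e5 := drop hN 4 5 (by omega)
    have hb : DD L 5 = ⊥ := rk_bot (by omega)
    generalize h14 : ⁅x1, x4⁆ = x5 at *
    have m5 : x5 ∈ DD L 3 := by rw [← h14]; exact DD_lie _ m4
    obtain ⟨z, mz, hz0, G4, hz, hz', hdz⟩ := gen_one (L := L) (k := 4) (by omega) 5 (by omega)
    obtain ⟨a, h15⟩ := hdz _ (DD_lie x1 m5)
    obtain ⟨b, h25⟩ := hdz _ (DD_lie x2 m5)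
    obtain ⟨β, w, hw, h23⟩ := G3.dec1 m23
    obtain ⟨β', rfl⟩ := hdz _ hw
    have h24 : ⁅x2, x4⁆ = (β * a) • z := by
      rw [h24', h23]; simp [h15, hz, smul_smul]
    have h34 : ⁅x3, x4⁆ = (-b) • z := by
      have := leibniz_lie x2 x1 x4
      rw [flipb h12, h14, h25, h24] at this
      simp [hz] at this
      rw [neg_smul, this]; simp
    have h35 : ⁅x3, x5⁆ = 0 := DD_eq_zero hb (DD_lie2 m3 m5)
    have h45 : ⁅x4, x5⁆ = 0 := DD_eq_zero hb (DD_lie2 m4 m5)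
    have hS : Sp ![x1, x2, x3, x4, x5, z] := by
      intro S hS
      simp [Fin.forall_fin_succ] at hS
      have s5 : DD L 5 ≤ S := hb ▸ bot_le
      have s4 := G4 S s5 (by simp [Set.insert_subset_iff, hS])
      have s3 := G3 S s4 (by simp [Set.insert_subset_iff, hS])
      have s2 := G2 S s3 (by simp [Set.insert_subset_iff, hS])
      have s1 := G1 S s2 (by simp [hS])
      exact top_le_iff.1 (hX S s1 (by simp [Set.insert_subset_iff, hS]))
    by_cases hb0 : b = 0
    · subst hb0
      have ha : a ≠ 0 := by
        rintro rfl
        have := hX.next21 G3 m5 ⊥ hb.le (by simp [Set.insert_subset_iff, h15, h25])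
        exact hz0 (by simpa using this mz)
      exact c62B2 hn ha hS hz h12 h13 h14 h23 h15 h24 (by simpa using h25) (by simpa using h34) h35 h45
    · exact c62B1 hn hb0 hS hz h12 h13 h14 h23 h15 h24 h25 h34 h35 h45
end

section
set_option linter.unusedSectionVars false
set_option linter.unusedSimpArgs false
variable {L : Type} [LieRing L] [LieAlgebra ℝ L] [Module.Finite ℝ L]

variable (L) in
def CZ : Prop := ∀ z : L, (∀ x : L, ⁅x, z⁆ = 0) → z ∈ DD L 1

lemma Sp.of_li {n : ℕ} {x : Fin n → L} (hn : Module.finrank ℝ L = n) (h : LinearIndependent ℝ x) : Sp x := by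
  intro S hS
  have h1 := h.span_eq_top_of_card_eq_finrank' (by simp [hn])
  rw [eq_top_iff, ← h1, Submodule.span_le]
  rintro _ ⟨i, rfl⟩
  exact hS i

lemma exists_f {z : L} (hz : z ≠ 0) : ∃ f : L →ₗ[ℝ] ℝ, f z = 1 := by
  obtain ⟨f, hf, -⟩ := Submodule.exists_le_ker_of_notMem (p := (⊥ : Submodule ℝ L)) (v := z) (by simpa using hz)
  exact ⟨(f z)⁻¹ • f, by simp [hf]⟩

lemma pair_of_ne {z : L} (f : L →ₗ[ℝ] ℝ) (hf : ∀ x y : L, ⁅x, y⁆ = f ⁅x, y⁆ • z) (C : Submodule ℝ L)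
    (h : ¬ ∀ x ∈ C, ∀ y ∈ C, ⁅x, y⁆ = 0) : ∃ x ∈ C, ∃ y ∈ C, ⁅x, y⁆ = z := by
  push Not at h
  obtain ⟨x, hx, y, hy, hxy⟩ := h
  have h0 : f ⁅x, y⁆ ≠ 0 := by
    intro h0; apply hxy; rw [hf x y, h0, zero_smul]
  exact ⟨(f ⁅x, y⁆)⁻¹ • x, C.smul_mem _ hx, y, hy, by
    rw [smul_lie]; nth_rw 2 [hf x y]; rw [smul_smul, inv_mul_cancel₀ h0, one_smul]⟩

lemma not_comm {C : Submodule ℝ L} (hZ : CZ L) (h1 : rk L 1 = 1) (hC : 2 ≤ Module.finrank ℝ C)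
    (h : ∀ y ∈ C, (∀ x ∈ C, ⁅x, y⁆ = 0) → ∀ x : L, ⁅x, y⁆ = 0) : ¬ ∀ x ∈ C, ∀ y ∈ C, ⁅x, y⁆ = 0 := by
  intro h2
  have : C ≤ DD L 1 := fun y hy => hZ y (h y hy fun x hx => h2 x hx y hy)
  have := Submodule.finrank_mono this
  unfold rk at h1
  omega

lemma ker_rank {W : Type} [AddCommGroup W] [Module ℝ W] [Module.Finite ℝ W] (g : L →ₗ[ℝ] W) {n m : ℕ}
    (hn : n + m ≤ Module.finrank ℝ L) (hm : Module.finrank ℝ W = m) : n ≤ Module.finrank ℝ (LinearMap.ker g) := by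
  have h1 := g.finrank_range_add_finrank_ker
  have h2 := (LinearMap.range g).finrank_le
  omega

def adf (f : L →ₗ[ℝ] ℝ) (x : L) : L →ₗ[ℝ] ℝ := f ∘ₗ (LieModule.toEnd ℝ L L x)

lemma cr1 (hN : Nilp L) (hZ : CZ L) (h1 : rk L 1 = 1) (hn : Module.finrank ℝ L ≤ 6) : Good L := by
  have e2 := drop hN 1 2 (by omega)
  obtain ⟨z, mz, hz0, G, hz, hz', hdz⟩ := gen_one h1 2 (by omega)
  obtain ⟨f, fz⟩ := exists_f hz0
  have hf : ∀ x y : L, ⁅x, y⁆ = f ⁅x, y⁆ • z := by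
    intro x y
    obtain ⟨r, hr⟩ := hdz _ (lie_mem1 x y)
    rw [hr]; simp [fz]
  obtain ⟨x1, -, x2, -, h12⟩ := pair_of_ne f hf ⊤ (by
    intro h
    have : Ge 1 (∅ : Set L) := by
      have h0 : Ge 0 (Set.univ : Set L) := fun S _ h x _ => h (Set.mem_univ x)
      refine h0.next h0 (fun _ _ => DD_mem_zero _) ?_
      intro S _ _ x _ y _
      rw [h x (by simp) y (by simp)]; exact S.zero_mem
    have := this ⊥ (rk_bot (show rk L 2 = 0 by omega)).le (by simp) mz
    exact hz0 (by simpa using this))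
  have h21 := flipb h12
  by_cases h4 : 4 ≤ Module.finrank ℝ L
  · have hC := ker_rank (n := 2) (m := 2) ((adf f x1).prod (adf f x2)) h4 (by simp)
    obtain ⟨x3, m3, x4, m4, h34⟩ := pair_of_ne f hf _ (not_comm hZ h1 hC (by
      intro y hy hyx x
      have hy1 : ⁅x1, y⁆ = 0 := by rw [hf, show f ⁅x1, y⁆ = 0 from congrArg Prod.fst hy, zero_smul]
      have hy2 : ⁅x2, y⁆ = 0 := by rw [hf, show f ⁅x2, y⁆ = 0 from congrArg Prod.snd hy, zero_smul]
      have := hyx (x - f ⁅x1, x⁆ • x2 + f ⁅x2, x⁆ • x1) (by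
        simp [adf, h12, h21, fz])
      simpa [hy1, hy2] using this))
    have h13 : ⁅x1, x3⁆ = 0 := by rw [hf, show f ⁅x1, x3⁆ = 0 from congrArg Prod.fst m3, zero_smul]
    have h23 : ⁅x2, x3⁆ = 0 := by rw [hf, show f ⁅x2, x3⁆ = 0 from congrArg Prod.snd m3, zero_smul]
    have h14 : ⁅x1, x4⁆ = 0 := by rw [hf, show f ⁅x1, x4⁆ = 0 from congrArg Prod.fst m4, zero_smul]
    have h24 : ⁅x2, x4⁆ = 0 := by rw [hf, show f ⁅x2, x4⁆ = 0 from congrArg Prod.snd m4, zero_smul]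
    have h43 := flipb h34
    have h31 := flipb h13
    have h32 := flipb h23
    have h41 := flipb h14
    have h42 := flipb h24
    by_cases h6 : 6 ≤ Module.finrank ℝ L
    · exfalso
      have hC := ker_rank (n := 2) (m := 4) (((adf f x1).prod (adf f x2)).prod ((adf f x3).prod (adf f x4))) h6 (by simp)
      obtain ⟨x5, m5, x6, m6, h56⟩ := pair_of_ne f hf _ (not_comm hZ h1 hC (by
        intro y hy hyx x
        have hy1 : ⁅x1, y⁆ = 0 := by rw [hf, show f ⁅x1, y⁆ = 0 from congrArg (·.1.1) hy, zero_smul]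
        have hy2 : ⁅x2, y⁆ = 0 := by rw [hf, show f ⁅x2, y⁆ = 0 from congrArg (·.1.2) hy, zero_smul]
        have hy3 : ⁅x3, y⁆ = 0 := by rw [hf, show f ⁅x3, y⁆ = 0 from congrArg (·.2.1) hy, zero_smul]
        have hy4 : ⁅x4, y⁆ = 0 := by rw [hf, show f ⁅x4, y⁆ = 0 from congrArg (·.2.2) hy, zero_smul]
        have := hyx (x - f ⁅x1, x⁆ • x2 + f ⁅x2, x⁆ • x1 - f ⁅x3, x⁆ • x4 + f ⁅x4, x⁆ • x3) (by
          simp [adf, h12, h21, h34, h43, h13, h14, h23, h24, h31, h32, h41, h42, fz])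
        simpa [hy1, hy2, hy3, hy4] using this))
      have k5 : f ⁅x1, x5⁆ = 0 ∧ f ⁅x2, x5⁆ = 0 ∧ f ⁅x3, x5⁆ = 0 ∧ f ⁅x4, x5⁆ = 0 :=
        ⟨congrArg (·.1.1) m5, congrArg (·.1.2) m5, congrArg (·.2.1) m5, congrArg (·.2.2) m5⟩
      have k6 : f ⁅x1, x6⁆ = 0 ∧ f ⁅x2, x6⁆ = 0 ∧ f ⁅x3, x6⁆ = 0 ∧ f ⁅x4, x6⁆ = 0 :=
        ⟨congrArg (·.1.1) m6, congrArg (·.1.2) m6, congrArg (·.2.1) m6, congrArg (·.2.2) m6⟩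
      have hli : LinearIndependent ℝ ![x1, x2, x3, x4, x5, x6, z] := by
        rw [Fintype.linearIndependent_iff]
        intro g hg
        simp [Fin.sum_univ_succ] at hg
        have a1 := congrArg (fun x => f ⁅x1, x⁆) hg
        have a2 := congrArg (fun x => f ⁅x2, x⁆) hg
        have a3 := congrArg (fun x => f ⁅x3, x⁆) hg
        have a4 := congrArg (fun x => f ⁅x4, x⁆) hg
        have a5 := congrArg (fun x => f ⁅x, x5⁆) hg
        have a6 := congrArg (fun x => f ⁅x, x6⁆) hg
        simp [h12, h21, h34, h43, h13, h14, h23, h24, h31, h32, h41, h42, k5, k6, fz, hz, hz', h56, flipb h56] at a1 a2 a3 a4 a5 a6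
        simp [a1, a2, a3, a4, a5, a6, hz0] at hg
        intro i
        fin_cases i <;> assumption
      have := hli.fintype_card_le_finrank
      simp at this; omega
    · have hli : LinearIndependent ℝ ![x1, x2, x3, x4, z] := by
        rw [Fintype.linearIndependent_iff]
        intro g hg
        simp [Fin.sum_univ_succ] at hg
        have a1 := congrArg (fun x => f ⁅x1, x⁆) hg
        have a2 := congrArg (fun x => f ⁅x2, x⁆) hg
        have a3 := congrArg (fun x => f ⁅x3, x⁆) hg
        have a4 := congrArg (fun x => f ⁅x4, x⁆) hg
        simp [h12, h21, h34, h43, h13, h14, h23, h24, h31, h32, h41, h42, fz, hz] at a1 a2 a3 a4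
        simp [a1, a2, a3, a4, hz0] at hg
        intro i
        fin_cases i <;> assumption
      have := hli.fintype_card_le_finrank
      simp at this
      have hn5 : Module.finrank ℝ L = 5 := by omega
      refine Th5 hn5 ![1, 1] (by simp [Fin.forall_fin_succ]) _ (Sp.of_li hn5 hli)
        (br5 ?_ ?_ ?_ ?_ ?_ ?_ ?_ ?_ ?_ ?_) <;> simp [tabV, Fin.sum_univ_succ, hz, h12, h34, h13, h14, h23, h24]
  · have hli : LinearIndependent ℝ ![x1, x2, z] := by
      rw [Fintype.linearIndependent_iff]
      intro g hg
      simp [Fin.sum_univ_succ] at hg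
      have a1 := congrArg (fun x => f ⁅x1, x⁆) hg
      have a2 := congrArg (fun x => f ⁅x2, x⁆) hg
      simp [h12, h21, fz, hz] at a1 a2
      simp [a1, a2, hz0] at hg
      intro i
      fin_cases i <;> assumption
    have := hli.fintype_card_le_finrank
    simp at this
    have hn5 : Module.finrank ℝ L = 3 := by omega
    refine Th3 hn5 ![1] (by simp [Fin.forall_fin_succ]) _ (Sp.of_li hn5 hli)
      (br3 ?_ ?_ ?_) <;> simp [tabV, Fin.sum_univ_succ, hz, h12]

lemma d1_imp (hN : Nilp L) (h1 : rk L 1 + 1 = Module.finrank ℝ L) : rk L 1 = 0 := by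
  by_contra h0
  obtain ⟨x, hx⟩ := exists_gens (L := L) h1
  have : Ge 1 (∅ : Set L) := by
    refine hx.next hx (fun _ _ => DD_mem_zero _) ?_
    rintro S - - _ ⟨i, rfl⟩ _ ⟨j, rfl⟩
    rw [Subsingleton.elim i j, lie_self]; exact S.zero_mem
  have h2 := drop hN 1 2 h0
  have h3 : DD L 1 ≤ DD L 2 := this (DD L 2) le_rfl (by simp)
  have := Submodule.finrank_mono h3
  unfold rk at h2
  omega
end

section
set_option linter.unusedSectionVars false
set_option linter.unusedSimpArgs false
variable {L : Type} [LieRing L] [LieAlgebra ℝ L]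

lemma jac (y a b : L) : ⁅y, ⁅a, b⁆⁆ = ⁅b, ⁅a, y⁆⁆ - ⁅a, ⁅b, y⁆⁆ := by
  have := lie_jacobi y a b
  rw [← lie_skew y a, lie_neg] at this
  rw [← sub_eq_zero, ← this]; abel

lemma jac_mem {k : ℕ} {y a b : L} (h1 : ⁅a, y⁆ ∈ DD L k) (h2 : ⁅b, y⁆ ∈ DD L k) :
    ⁅y, ⁅a, b⁆⁆ ∈ DD L (k + 1) := by
  rw [jac]; exact Submodule.sub_mem _ (DD_lie _ h1) (DD_lie _ h2)

lemma Ge.next3 {a b c : L} (hX : Ge 0 {a, b, c}) : Ge 1 {⁅a, b⁆, ⁅a, c⁆, ⁅b, c⁆} := by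
  refine hX.next hX (fun _ _ => DD_mem_zero _) fun S _ h => ?_
  simp [Set.insert_subset_iff] at h
  obtain ⟨h1, h2, h3⟩ := h
  have h1' : ⁅b, a⁆ ∈ S := by rw [← lie_skew]; exact S.neg_mem h1
  have h2' : ⁅c, a⁆ ∈ S := by rw [← lie_skew]; exact S.neg_mem h2
  have h3' : ⁅c, b⁆ ∈ S := by rw [← lie_skew]; exact S.neg_mem h3
  simp [*]

lemma Ge.next31 {k : ℕ} {a b c w : L} (hX : Ge 0 {a, b, c}) (hW : Ge k {w}) (hw : w ∈ DD L k) :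
    Ge (k + 1) {⁅a, w⁆, ⁅b, w⁆, ⁅c, w⁆} := by
  refine hX.next hW (by simpa using hw) fun S _ h => ?_
  simpa [Set.insert_subset_iff] using h

lemma Ge.next32 {k : ℕ} {a b c w v : L} (hX : Ge 0 {a, b, c}) (hW : Ge k {w, v}) (hw : w ∈ DD L k)
    (hv : v ∈ DD L k) : Ge (k + 1) {⁅a, w⁆, ⁅b, w⁆, ⁅c, w⁆, ⁅a, v⁆, ⁅b, v⁆, ⁅c, v⁆} := by
  refine hX.next hW (by simp [hw, hv]) fun S _ h => ?_
  simp [Set.insert_subset_iff] at h ⊢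
  tauto

lemma Ge.drop3 {k : ℕ} {a b c : L} (h : Ge k {a, b, c}) (hb : c ∈ DD L (k + 1)) : Ge k {a, b} :=
  h.mod fun S h1 h2 => by
    simp only [Set.singleton_subset_iff, SetLike.mem_coe, Set.insert_subset_iff] at *
    exact ⟨h2.1, h2.2, h1 hb⟩

variable [Module.Finite ℝ L]

lemma choose3a {a b c : L} (hX : Ge 0 {a, b, c}) {P : Submodule ℝ L} {α β γ : ℝ} (h : α ≠ 0)
    (hm : α • ⁅b, c⁆ + β • ⁅c, a⁆ + γ • ⁅a, b⁆ ∈ P) :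
    ∃ x1 x2 x3 : L, Ge 0 {x1, x2, x3} ∧ ⁅x2, x3⁆ ∈ P := by
  refine ⟨a, α • b - β • a, α • c - γ • a, hX.mod fun S _ hS => ?_, ?_⟩
  · simp only [Set.insert_subset_iff, Set.singleton_subset_iff, SetLike.mem_coe] at hS ⊢
    exact ⟨hS.1, mem_of_comb h (S.add_mem hS.2.1 (S.smul_mem β hS.1)) (by module),
      mem_of_comb h (S.add_mem hS.2.2 (S.smul_mem γ hS.1)) (by module)⟩
  · have := P.smul_mem α hm
    convert this using 1
    simp only [sub_lie, lie_sub, smul_lie, lie_smul, lie_self]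
    rw [← lie_skew b a, ← lie_skew a c]
    module

lemma choose3 {a b c : L} (hX : Ge 0 {a, b, c}) (h : rk L 1 < rk L 2 + 3) :
    ∃ x1 x2 x3 : L, Ge 0 {x1, x2, x3} ∧ ⁅x2, x3⁆ ∈ DD L 2 := by
  obtain ⟨k, hc, hm⟩ := dep_mod (DD_succ_le 1) ![⁅b, c⁆, ⁅c, a⁆, ⁅a, b⁆]
    (by simp [Fin.forall_fin_succ, lie_mem1]) h
  simp [Fin.sum_univ_succ] at hm
  rw [← add_assoc] at hm
  by_cases h0 : k 0 = 0
  · by_cases h1 : k 1 = 0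
    · have h2 : k 2 ≠ 0 := by
        intro h2; apply hc; ext i; fin_cases i <;> simp [h0, h1, h2]
      refine choose3a (a := c) (b := a) (c := b) (hX.mod fun S _ hS => ?_) h2 (β := k 0) (γ := k 1) (by convert hm using 1; abel)
      simp only [Set.insert_subset_iff, Set.singleton_subset_iff, SetLike.mem_coe] at hS ⊢
      tauto
    · refine choose3a (a := b) (b := c) (c := a) (hX.mod fun S _ hS => ?_) h1 (β := k 2) (γ := k 0) (by convert hm using 1; abel)
      simp only [Set.insert_subset_iff, Set.singleton_subset_iff, SetLike.mem_coe] at hS ⊢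
      tauto
  · exact choose3a hX h0 hm

lemma choose3b {a b c : L} (hX : Ge 0 {a, b, c}) (h : rk L 1 < rk L 2 + 2) :
    ∃ x1 x2 y : L, Ge 0 {x1, x2, y} ∧ ⁅x1, y⁆ ∈ DD L 2 ∧ ⁅x2, y⁆ ∈ DD L 2 := by
  obtain ⟨x1, x2, x3, hX, h23⟩ := choose3 hX (by omega)
  obtain ⟨k, hc, hm⟩ := dep_mod (DD_succ_le 1) ![⁅x1, x2⁆, ⁅x1, x3⁆]
    (by simp [Fin.forall_fin_succ, lie_mem1]) h
  simp [Fin.sum_univ_succ] at hm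
  have h32 : ⁅x3, x2⁆ ∈ DD L 2 := by rw [← lie_skew]; exact Submodule.neg_mem _ h23
  by_cases h1 : k 1 = 0
  · have h0 : k 0 ≠ 0 := by
      intro h0; apply hc; ext i; fin_cases i <;> simp [h0, h1]
    refine ⟨x1, x3, x2, hX.mod fun S _ hS => ?_, ?_, ?_⟩
    · simp only [Set.insert_subset_iff, Set.singleton_subset_iff, SetLike.mem_coe] at hS ⊢
      tauto
    · simp only [h1, zero_smul, add_zero] at hm
      exact (Submodule.smul_mem_iff _ h0).1 hm
    · exact h32
  · refine ⟨x1, x2, k 0 • x2 + k 1 • x3, hX.mod fun S _ hS => ?_, ?_, ?_⟩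
    · simp only [Set.insert_subset_iff, Set.singleton_subset_iff, SetLike.mem_coe] at hS ⊢
      exact ⟨hS.1, hS.2.1, mem_of_comb h1 (S.sub_mem hS.2.2 (S.smul_mem (k 0) hS.2.1)) (by module)⟩
    · simpa using hm
    · simpa using Submodule.smul_mem _ _ h23

lemma choose3c {a b c : L} (hX : Ge 0 {a, b, c}) (h : rk L 1 < rk L 2 + 2) (h' : rk L 2 < rk L 3 + 2) :
    ∃ x1 x2 y : L, Ge 0 {x1, x2, y} ∧ ⁅x1, y⁆ ∈ DD L 2 ∧ ⁅x2, y⁆ ∈ DD L 2 ∧ ⁅x2, ⁅x1, x2⁆⁆ ∈ DD L 3 := by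
  obtain ⟨a, b, y, hX, ha, hb⟩ := choose3b hX h
  obtain ⟨c, hc, hm⟩ := dep_mod (DD_succ_le 2) ![⁅a, ⁅a, b⁆⁆, ⁅b, ⁅a, b⁆⁆]
    (by simp only [Fin.forall_fin_two]; exact ⟨DD_lie _ (lie_mem1 _ _), DD_lie _ (lie_mem1 _ _)⟩) h'
  simp only [Fin.sum_univ_two, Matrix.cons_val_zero, Matrix.cons_val_one] at hm
  by_cases h1 : c 1 = 0
  · have h0 : c 0 ≠ 0 := by
      intro h0; apply hc; ext i; fin_cases i <;> simp [h0, h1]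
    refine ⟨b, a, y, hX.mod fun S _ hS => ?_, hb, ha, ?_⟩
    · simp only [Set.insert_subset_iff, Set.singleton_subset_iff, SetLike.mem_coe] at hS ⊢
      tauto
    rw [h1, zero_smul, add_zero, Submodule.smul_mem_iff _ h0] at hm
    rw [← lie_skew b a, lie_neg]
    exact Submodule.neg_mem _ hm
  · refine ⟨a, c 0 • a + c 1 • b, y, hX.mod fun S _ hS => ?_, ha, ?_, ?_⟩
    · simp only [Set.insert_subset_iff, Set.singleton_subset_iff, SetLike.mem_coe] at hS ⊢
      exact ⟨hS.1, mem_of_comb h1 (S.sub_mem hS.2.1 (S.smul_mem (c 0) hS.1)) (by module), hS.2.2⟩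
    · simpa using Submodule.add_mem _ (Submodule.smul_mem _ _ ha) (Submodule.smul_mem _ _ hb)
    · have := Submodule.smul_mem _ (c 1) hm
      convert this using 1
      simp [lie_smul, smul_lie, add_lie, lie_add]

lemma y_notin {x1 x2 y : L} (hX : Ge 0 {x1, x2, y}) (h : rk L 1 + 3 = Module.finrank ℝ L) : y ∉ DD L 1 := by
  intro hy
  have := (hX.drop3 hy).r2 1
  have h0 : rk L 0 = _ := DD_zero_rank
  omega

lemma c53 (hn : Module.finrank ℝ L = 5) (hN : Nilp L) (hZ : CZ L)
    (hd : rk L 1 = 2) : Good L := by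
  obtain ⟨a, b, c, hX⟩ := gens3 (L := L) (by omega)
  have e2 := drop hN 1 2 (by omega)
  by_cases h2 : rk L 2 = 0
  · obtain ⟨x1, x2, x3, hX, h23⟩ := choose3 hX (by omega)
    have hb := rk_bot h2
    have G1 := hX.next3.drop3 h23
    have h23 := DD_eq_zero hb h23
    generalize h12 : ⁅x1, x2⁆ = x4 at *
    generalize h13 : ⁅x1, x3⁆ = x5 at *
    have m4 : x4 ∈ DD L 1 := by rw [← h12]; exact lie_mem1 _ _
    have m5 : x5 ∈ DD L 1 := by rw [← h13]; exact lie_mem1 _ _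
    have h4 : ∀ x : L, ⁅x, x4⁆ = 0 := fun x => DD_eq_zero hb (DD_lie _ m4)
    have h5 : ∀ x : L, ⁅x, x5⁆ = 0 := fun x => DD_eq_zero hb (DD_lie _ m5)
    have hS : Sp ![x1, x2, x3, x4, x5] := by
      intro S hS
      simp [Fin.forall_fin_succ] at hS
      have s2 : DD L 2 ≤ S := hb ▸ bot_le
      have s1 := G1 S s2 (by simp [Set.insert_subset_iff, hS])
      exact top_le_iff.1 (hX S s1 (by simp [Set.insert_subset_iff, hS]))
    refine TL58 hn ![1, 1] (by simp [Fin.forall_fin_succ]) _ hS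
      (br5 ?_ ?_ ?_ ?_ ?_ ?_ ?_ ?_ ?_ ?_) <;>
      simp [tabV, Fin.sum_univ_succ, *]
  · have e3 := drop hN 2 3 (by omega)
    have hb : DD L 3 = ⊥ := rk_bot (by omega)
    obtain ⟨x1, x2, y, hX, m1y, m2y, m23⟩ := choose3c hX (by omega) (by omega)
    have G1 := (hX.next3.drop3 m2y).drop m1y
    have h23 := DD_eq_zero hb m23
    generalize h12 : ⁅x1, x2⁆ = x3 at *
    have m3 : x3 ∈ DD L 1 := by rw [← h12]; exact lie_mem1 _ _
    have hy3 : ⁅y, x3⁆ = 0 := by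
      rw [← h12]; exact DD_eq_zero hb (jac_mem m1y m2y)
    have G2 := ((hX.next31 G1 m3).drop3 (by rw [hy3]; exact Submodule.zero_mem _)).drop m23
    generalize h13 : ⁅x1, x3⁆ = z at *
    have mz : z ∈ DD L 2 := by rw [← h13]; exact DD_lie _ m3
    have hz : ∀ x : L, ⁅x, z⁆ = 0 := fun x => DD_eq_zero hb (DD_lie _ mz)
    obtain ⟨p, h1y⟩ := G2.dec1b hb m1y
    obtain ⟨q, h2y⟩ := G2.dec1b hb m2y
    obtain ⟨w, hw⟩ : ∃ w, w = y - p • x3 := ⟨_, rfl⟩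
    have h1w : ⁅x1, w⁆ = 0 := by simp [hw, h1y, h13]
    have h2w : ⁅x2, w⁆ = q • z := by simp [hw, h2y, h23]
    have h3w : ⁅x3, w⁆ = 0 := by simp [hw, flipb hy3]
    have hXw : Ge 0 {x1, x2, w} := hX.mod fun S _ hS => by
      simp only [Set.insert_subset_iff, Set.singleton_subset_iff, SetLike.mem_coe] at hS ⊢
      refine ⟨hS.1, hS.2.1, ?_⟩
      have : y = w + p • x3 := by rw [hw]; abel
      rw [this]
      rename_i hD
      exact S.add_mem hS.2.2 (S.smul_mem _ (hD m3))
    have hS : Sp ![x1, x2, x3, w, z] := by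
      intro S hS
      simp [Fin.forall_fin_succ] at hS
      have s3 : DD L 3 ≤ S := hb ▸ bot_le
      have s2 := G2 S s3 (by simp [Set.insert_subset_iff, hS])
      have s1 := G1 S s2 (by simp [Set.insert_subset_iff, hS])
      exact top_le_iff.1 (hXw S s1 (by simp [Set.insert_subset_iff, hS]))
    have hq : q ≠ 0 := by
      rintro rfl
      refine y_notin hXw (by omega) (hZ w (hS.central ?_))
      clear hw
      simp [Fin.forall_fin_succ, *, flipb (hz _)]
    clear hw h1y h2y hy3
    refine TL55 hn ![1, 1, q] (by simp [Fin.forall_fin_succ, hq]) _ hS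
      (br5 ?_ ?_ ?_ ?_ ?_ ?_ ?_ ?_ ?_ ?_) <;>
      simp [tabV, Fin.sum_univ_succ, *]
end

section
set_option linter.unusedSectionVars false
set_option linter.unusedSimpArgs false
variable {L : Type} [LieRing L] [LieAlgebra ℝ L]

lemma c63C1 (hn : Module.finrank ℝ L = 6) {x1 x2 x3 y x5 x6 : L} {p q r : ℝ} (hq : q ≠ 0)
    (hx : Sp ![x1, x2, x3, y, x5, x6]) (h5 : ∀ x : L, ⁅x, x5⁆ = 0) (h6 : ∀ x : L, ⁅x, x6⁆ = 0)
    (h12 : ⁅x1, x2⁆ = x3) (h13 : ⁅x1, x3⁆ = x5) (h23 : ⁅x2, x3⁆ = x6)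
    (h1y : ⁅x1, y⁆ = p • x5 + q • x6) (h2y : ⁅x2, y⁆ = r • x5 + (-p) • x6) (h3y : ⁅x3, y⁆ = 0) : Good L := by
  obtain ⟨y2, hy2⟩ : ∃ y2, y2 = p • x1 + q • x2 := ⟨_, rfl⟩
  obtain ⟨y6, hy6⟩ : ∃ y2, y2 = p • x5 + q • x6 := ⟨_, rfl⟩
  have hS : Sp ![x1, y2, x3, y, x5, y6] := by
    intro S hS
    simp [Fin.forall_fin_succ] at hS
    obtain ⟨m1, m2, m3, m4, m5, m6⟩ := hS
    rw [hy2] at m2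
    rw [hy6] at m6
    have k2 := (S.smul_mem_iff hq).1 ((S.add_mem_iff_right (S.smul_mem _ m1)).1 m2)
    have k5 := (S.smul_mem_iff hq).1 ((S.add_mem_iff_right (S.smul_mem _ m5)).1 m6)
    apply hx
    simp [Fin.forall_fin_succ, *]
  have e12 : ⁅x1, y2⁆ = q • x3 := by simp [hy2, h12]
  have e23 : ⁅y2, x3⁆ = y6 := by simp [hy2, hy6, h13, h23]
  have e14 : ⁅x1, y⁆ = y6 := by simp [hy6, h1y]
  have e24 : ⁅y2, y⁆ = (p ^ 2 + q * r) • x5 := by simp [hy2, h1y, h2y]; module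
  have e6 : ∀ x : L, ⁅x, y6⁆ = 0 := by simp [hy6, h5, h6]
  clear hy2 hy6 h12 h23 h1y h2y
  by_cases hc : p ^ 2 + q * r = 0
  · rw [hc, zero_smul] at e24
    refine T24z hn ![q, 1, 1, 1] (by simp [Fin.forall_fin_succ, hq]) _ hS
      (br6 ?_ ?_ ?_ ?_ ?_ ?_ ?_ ?_ ?_ ?_ ?_ ?_ ?_ ?_ ?_) <;> simp [tabV, Fin.sum_univ_succ, *]
  · generalize p ^ 2 + q * r = δ at *
    refine T24 hn ![q, 1, 1, 1, δ] (by simp [Fin.forall_fin_succ, hq, hc]) _ hS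
      (br6 ?_ ?_ ?_ ?_ ?_ ?_ ?_ ?_ ?_ ?_ ?_ ?_ ?_ ?_ ?_) <;> simp [tabV, Fin.sum_univ_succ, *]

lemma c63C (hn : Module.finrank ℝ L = 6) {x1 x2 x3 y x5 x6 : L} {p q r : ℝ} (h : ¬ (p = 0 ∧ q = 0 ∧ r = 0))
    (hx : Sp ![x1, x2, x3, y, x5, x6]) (h5 : ∀ x : L, ⁅x, x5⁆ = 0) (h6 : ∀ x : L, ⁅x, x6⁆ = 0)
    (h12 : ⁅x1, x2⁆ = x3) (h13 : ⁅x1, x3⁆ = x5) (h23 : ⁅x2, x3⁆ = x6)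
    (h1y : ⁅x1, y⁆ = p • x5 + q • x6) (h2y : ⁅x2, y⁆ = r • x5 + (-p) • x6) (h3y : ⁅x3, y⁆ = 0) : Good L := by
  by_cases hq : q = 0
  · by_cases hr : r = 0
    · subst hq hr
      have hp : p ≠ 0 := by tauto
      have hS : Sp ![x1 + x2, x2, x3, y, x5 + x6, x6] := by
        intro S hS
        simp [Fin.forall_fin_succ] at hS
        obtain ⟨m1, m2, m3, m4, m5, m6⟩ := hS
        have k2 := (S.add_mem_iff_left m2).1 m1
        have k5 := (S.add_mem_iff_left m6).1 m5
        apply hx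
        simp [Fin.forall_fin_succ, *]
      refine c63C1 hn (p := p) (q := -2 * p) (r := 0) (by simpa using hp) hS ?_ h6 ?_ ?_ h23 ?_ ?_ h3y
      · simp [h5, h6]
      · simp [h12]
      · simp [h13, h23]
      · simp [h1y, h2y]; module
      · simp [h2y]
    · have hS : Sp ![x2, x1, -x3, y, -x6, -x5] := by
        intro S hS
        simp [Fin.forall_fin_succ] at hS
        apply hx
        simp [Fin.forall_fin_succ, *]
      refine c63C1 hn (p := p) (q := -r) (r := -q) (by simpa using hr) hS ?_ ?_ ?_ ?_ ?_ ?_ ?_ ?_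
      all_goals simp [h5, h6, flipb h12, h13, h23, h1y, h2y, h3y]
      · module
      · module
  · exact c63C1 hn hq hx h5 h6 h12 h13 h23 h1y h2y h3y

lemma c63E (hn : Module.finrank ℝ L = 6) {x1 x2 x3 x4 y z : L} {β q q' : ℝ} (hq : q ≠ 0)
    (hx : Sp ![x1, x2, x3, x4, y, z]) (hz : ∀ x : L, ⁅x, z⁆ = 0)
    (h12 : ⁅x1, x2⁆ = x3) (h13 : ⁅x1, x3⁆ = x4) (h14 : ⁅x1, x4⁆ = z) (h1y : ⁅x1, y⁆ = 0)
    (h23 : ⁅x2, x3⁆ = β • z) (h24 : ⁅x2, x4⁆ = 0) (h2y : ⁅x2, y⁆ = q • x4 + q' • z)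
    (h34 : ⁅x3, x4⁆ = 0) (h3y : ⁅x3, y⁆ = q • z) (h4y : ⁅x4, y⁆ = 0) : Good L := by
  obtain ⟨v, hv⟩ : ∃ v, v = β / q := ⟨_, rfl⟩
  have hvq : v * q = β := by rw [hv]; field_simp
  obtain ⟨w, hw⟩ : ∃ v, v = - q' / (2 * q ^ 2) := ⟨_, rfl⟩
  have hwq : 2 * w * q ^ 2 = -q' := by rw [hw]; field_simp
  clear hv hw
  obtain ⟨y1, hy1⟩ : ∃ v, v = x1 + w • y := ⟨_, rfl⟩
  obtain ⟨y2, hy2⟩ : ∃ u, u = x2 + v • y := ⟨_, rfl⟩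
  obtain ⟨y3, hy3⟩ : ∃ v, v = x3 + (-w) • (q • x4 + q' • z) := ⟨_, rfl⟩
  obtain ⟨y4, hy4⟩ : ∃ v, v = x4 + (-(2 * w * q)) • z := ⟨_, rfl⟩
  have hS : Sp ![y1, y2, y3, y4, y, z] := by
    intro S hS
    simp [Fin.forall_fin_succ] at hS
    obtain ⟨m1, m2, m3, m4, m5, m6⟩ := hS
    rw [hy1] at m1
    rw [hy2] at m2
    rw [hy3] at m3
    rw [hy4] at m4
    have k1 := (S.add_mem_iff_left (S.smul_mem _ m5)).1 m1
    have k2 := (S.add_mem_iff_left (S.smul_mem _ m5)).1 m2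
    have k4 := (S.add_mem_iff_left (S.smul_mem _ m6)).1 m4
    have k3 := (S.add_mem_iff_left (S.smul_mem (-w) (S.add_mem (S.smul_mem q k4) (S.smul_mem q' m6)))).1 m3
    apply hx
    simp [Fin.forall_fin_succ, *]
  have hz' : ∀ x : L, ⁅z, x⁆ = 0 := fun x => by rw [flipb (hz x), neg_zero]
  have e12 : ⁅y1, y2⁆ = y3 := by simp [hy1, hy2, hy3, h12, h1y, flipb h2y]; abel
  have e13 : ⁅y1, y3⁆ = y4 := by simp [hy1, hy3, hy4, h13, h14, flipb h3y, flipb h4y, hz]; module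
  have e14 : ⁅y1, y4⁆ = z := by simp [hy1, hy4, h14, flipb h4y, hz]
  have e1y : ⁅y1, y⁆ = 0 := by simp [hy1, h1y]
  have e23 : ⁅y2, y3⁆ = 0 := by
    simp [hy2, hy3, h23, h24, flipb h3y, flipb h4y, hz, smul_smul, hvq]
  have e24 : ⁅y2, y4⁆ = 0 := by simp [hy2, hy4, h24, flipb h4y, hz]
  have e2y : ⁅y2, y⁆ = q • y4 := by
    simp [hy2, hy4, h2y]
    match_scalars
    linear_combination hwq
  have e34 : ⁅y3, y4⁆ = 0 := by simp [hy3, hy4, h34, hz, hz']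
  have e3y : ⁅y3, y⁆ = q • z := by simp [hy3, h3y, h4y, hz']
  have e4y : ⁅y4, y⁆ = 0 := by simp [hy4, h4y, hz']
  clear hy1 hy2 hy3 hy4 h12 h13 h14 h1y h23 h24 h2y h34 h3y h4y
  refine T13 hn ![1, 1, 1, q, q] (by simp [Fin.forall_fin_succ, hq]) (by simp) _ hS
      (br6 ?_ ?_ ?_ ?_ ?_ ?_ ?_ ?_ ?_ ?_ ?_ ?_ ?_ ?_ ?_) <;> simp [tabV, Fin.sum_univ_succ, *]

variable [Module.Finite ℝ L]

lemma c63a (hn : Module.finrank ℝ L = 6) (hN : Nilp L) (hZ : CZ L)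
    (hd : rk L 1 = 3) (hd2 : rk L 2 = 2) : Good L := by
  obtain ⟨a, b, c, hX⟩ := gens3 (L := L) (by omega)
  have e3 := drop hN 2 3 (by omega)
  by_cases h3 : rk L 3 = 0
  · have hb := rk_bot h3
    obtain ⟨x1, x2, y, hX, m1y, m2y⟩ := choose3b hX (by omega)
    have G1 := (hX.next3.drop3 m2y).drop m1y
    generalize h12 : ⁅x1, x2⁆ = x3 at *
    have m3 : x3 ∈ DD L 1 := by rw [← h12]; exact lie_mem1 _ _
    have hy3 : ⁅y, x3⁆ = 0 := by
      rw [← h12]; exact DD_eq_zero hb (jac_mem m1y m2y)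
    have G2 := (hX.next31 G1 m3).drop3 (by rw [hy3]; exact Submodule.zero_mem _)
    generalize h13 : ⁅x1, x3⁆ = x5 at *
    generalize h23 : ⁅x2, x3⁆ = x6 at *
    have m5 : x5 ∈ DD L 2 := by rw [← h13]; exact DD_lie _ m3
    have m6 : x6 ∈ DD L 2 := by rw [← h23]; exact DD_lie _ m3
    have h5 : ∀ x : L, ⁅x, x5⁆ = 0 := fun x => DD_eq_zero hb (DD_lie _ m5)
    have h6 : ∀ x : L, ⁅x, x6⁆ = 0 := fun x => DD_eq_zero hb (DD_lie _ m6)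
    obtain ⟨p, q, h1y⟩ := G2.dec2b hb m1y
    obtain ⟨r, s, h2y⟩ := G2.dec2b hb m2y
    obtain ⟨w, hw⟩ : ∃ w, w = y + (-(p + s) / 2) • x3 := ⟨_, rfl⟩
    have h1w : ⁅x1, w⁆ = ((p - s) / 2) • x5 + q • x6 := by simp [hw, h1y, h13]; module
    have h2w : ⁅x2, w⁆ = r • x5 + (-((p - s) / 2)) • x6 := by simp [hw, h2y, h23]; module
    have h3w : ⁅x3, w⁆ = 0 := by simp [hw, flipb hy3]
    have hXw : Ge 0 {x1, x2, w} := hX.mod fun S hD hS => by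
      simp only [Set.insert_subset_iff, Set.singleton_subset_iff, SetLike.mem_coe] at hS ⊢
      refine ⟨hS.1, hS.2.1, ?_⟩
      rw [hw] at hS
      exact (S.add_mem_iff_left (S.smul_mem _ (hD m3))).1 hS.2.2
    have hS : Sp ![x1, x2, x3, w, x5, x6] := by
      intro S hS
      simp [Fin.forall_fin_succ] at hS
      have s3 : DD L 3 ≤ S := hb ▸ bot_le
      have s2 := G2 S s3 (by simp [Set.insert_subset_iff, hS])
      have s1 := G1 S s2 (by simp [Set.insert_subset_iff, hS])
      exact top_le_iff.1 (hXw S s1 (by simp [Set.insert_subset_iff, hS]))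
    refine c63C hn ?_ hS h5 h6 h12 h13 h23 h1w h2w h3w
    rintro ⟨a1, a2, a3⟩
    rw [a1, a2] at h1w
    rw [a1, a3] at h2w
    refine y_notin hXw (by omega) (hZ w (hS.central ?_))
    clear hw
    simp [Fin.forall_fin_succ, h1w, h2w, h3w, flipb (h5 _), flipb (h6 _)]
  · have e4 := drop hN 3 4 (by omega)
    have hb : DD L 4 = ⊥ := rk_bot (by omega)
    obtain ⟨x1, x2, y, hX, m1y, m2y, m23⟩ := choose3c hX (by omega) (by omega)
    have G1 := (hX.next3.drop3 m2y).drop m1y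
    have my3 := jac_mem m1y m2y
    generalize h12 : ⁅x1, x2⁆ = x3 at *
    have m3 : x3 ∈ DD L 1 := by rw [← h12]; exact lie_mem1 _ _
    have G2 := ((hX.next31 G1 m3).drop3 my3).drop m23
    generalize h13 : ⁅x1, x3⁆ = x4 at *
    have m4 : x4 ∈ DD L 2 := by rw [← h13]; exact DD_lie _ m3
    have h34 : ⁅x3, x4⁆ = 0 := DD_eq_zero hb (DD_lie2 m3 m4)
    have h24 : ⁅x2, x4⁆ = 0 := by
      have := leibniz_lie x1 x2 x3
      rw [h12, lie_self, h13, DD_eq_zero hb (DD_lie _ m23)] at this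
      simpa using this.symm
    have hy4 : ⁅y, x4⁆ = 0 := by
      have := leibniz_lie x1 y x3
      rw [h13, DD_eq_zero hb (DD_lie _ my3), DD_eq_zero hb (DD_lie2 m1y m3)] at this
      simpa using this.symm
    have G3 := ((hX.next31 G2 m4).drop3 (by rw [hy4]; exact Submodule.zero_mem _)).drop (by rw [h24]; exact Submodule.zero_mem _)
    generalize h14 : ⁅x1, x4⁆ = z at *
    have mz : z ∈ DD L 3 := by rw [← h14]; exact DD_lie _ m4
    have hz : ∀ x : L, ⁅x, z⁆ = 0 := fun x => DD_eq_zero hb (DD_lie _ mz)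
    obtain ⟨β, h23⟩ := G3.dec1b hb m23
    obtain ⟨p, d, hd, h1y⟩ := G2.dec1 m1y
    obtain ⟨p', rfl⟩ := G3.dec1b hb hd
    obtain ⟨w, hw⟩ : ∃ w, w = y + -(p • x3 + p' • x4) := ⟨_, rfl⟩
    have h1w : ⁅x1, w⁆ = 0 := by simp [hw, h1y, h13, h14]
    have m2w : ⁅x2, w⁆ ∈ DD L 2 := by
      rw [hw, lie_add]
      exact Submodule.add_mem _ m2y (DD_lie _ (Submodule.neg_mem _ (Submodule.add_mem _ (Submodule.smul_mem _ _ m3) (Submodule.smul_mem _ _ (DD_succ_le 1 m4)))))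
    obtain ⟨q, d, hd, h2w⟩ := G2.dec1 m2w
    obtain ⟨q', rfl⟩ := G3.dec1b hb hd
    have h4w : ⁅x4, w⁆ = 0 := by simp [hw, flipb hy4, flipb h34]
    have h3w : ⁅x3, w⁆ = q • z := by
      have := jac w x1 x2
      rw [h12, h1w, h2w] at this
      rw [flipb this]
      simp [h14, hz]
    have hXw : Ge 0 {x1, x2, w} := hX.mod fun S hD hS => by
      simp only [Set.insert_subset_iff, Set.singleton_subset_iff, SetLike.mem_coe] at hS ⊢
      refine ⟨hS.1, hS.2.1, ?_⟩
      rw [hw] at hS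
      exact (S.add_mem_iff_left (S.neg_mem (S.add_mem (S.smul_mem _ (hD m3)) (S.smul_mem _ (hD (DD_succ_le 1 m4)))))).1 hS.2.2
    have hS : Sp ![x1, x2, x3, x4, w, z] := by
      intro S hS
      simp [Fin.forall_fin_succ] at hS
      have s4 : DD L 4 ≤ S := hb ▸ bot_le
      have s3 := G3 S s4 (by simp [Set.insert_subset_iff, hS])
      have s2 := G2 S s3 (by simp [Set.insert_subset_iff, hS])
      have s1 := G1 S s2 (by simp [Set.insert_subset_iff, hS])
      exact top_le_iff.1 (hXw S s1 (by simp [Set.insert_subset_iff, hS]))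
    clear hw h1y hy4
    by_cases hq : q = 0
    · rw [hq, zero_smul] at h3w
      rw [hq, zero_smul, zero_add] at h2w
      have hq' : q' ≠ 0 := by
        rintro rfl
        refine y_notin hXw (by omega) (hZ w (hS.central ?_))
        simp [Fin.forall_fin_succ, h1w, h2w, h3w, h4w, flipb (hz _)]
      by_cases hβ : β = 0
      · rw [hβ, zero_smul] at h23
        refine T12 hn ![1, 1, 1, q'] (by simp [Fin.forall_fin_succ, hq']) _ hS
          (br6 ?_ ?_ ?_ ?_ ?_ ?_ ?_ ?_ ?_ ?_ ?_ ?_ ?_ ?_ ?_) <;> simp [tabV, Fin.sum_univ_succ, *]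
      · exact T11 hn β q' hβ hq' _ _ _ _ _ _ hS h12 h13 h14 h1w (hz _) h23 h24 h2w (hz _) h34 h3w (hz _) h4w (hz _) (hz _)
    · exact c63E hn hq hS hz h12 h13 h14 h1w h23 h24 h2w h34 h3w h4w
end

section
set_option linter.unusedSectionVars false
set_option linter.unusedSimpArgs false
variable {L : Type} [LieRing L] [LieAlgebra ℝ L]

lemma c63D0 (hn : Module.finrank ℝ L = 6) {x1 x2 x3 x4 x5 z : L} {α a b : ℝ} (ha : a ≠ 0)
    (hx : Sp ![x1, x2, x3, x4, x5, z]) (hz : ∀ x : L, ⁅x, z⁆ = 0)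
    (h12 : ⁅x1, x2⁆ = x4) (h13 : ⁅x1, x3⁆ = x5) (h23 : ⁅x2, x3⁆ = α • z)
    (h14 : ⁅x1, x4⁆ = a • z) (h15 : ⁅x1, x5⁆ = b • z) (h24 : ⁅x2, x4⁆ = 0) (h25 : ⁅x2, x5⁆ = 0)
    (h34 : ⁅x3, x4⁆ = 0) (h35 : ⁅x3, x5⁆ = 0) (h45 : ⁅x4, x5⁆ = 0) : Good L := by
  obtain ⟨t, ht⟩ : ∃ t, t = - b / a := ⟨_, rfl⟩
  have hta : t * a = - b := by rw [ht]; field_simp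
  clear ht
  obtain ⟨y3, hy3⟩ : ∃ u, u = x3 + t • x2 := ⟨_, rfl⟩
  obtain ⟨y5, hy5⟩ : ∃ u, u = x5 + t • x4 := ⟨_, rfl⟩
  have hS : Sp ![x1, x2, y3, x4, y5, z] := by
    intro S hS
    simp [Fin.forall_fin_succ] at hS
    obtain ⟨m1, m2, m3, m4, m5, m6⟩ := hS
    rw [hy3] at m3
    rw [hy5] at m5
    have k3 := (S.add_mem_iff_left (S.smul_mem _ m2)).1 m3
    have k5 := (S.add_mem_iff_left (S.smul_mem _ m4)).1 m5
    apply hx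
    simp [Fin.forall_fin_succ, *]
  have e13 : ⁅x1, y3⁆ = y5 := by simp [hy3, hy5, h12, h13]
  have e23 : ⁅x2, y3⁆ = α • z := by simp [hy3, h23]
  have e15 : ⁅x1, y5⁆ = 0 := by simp [hy5, h15, h14, smul_smul, hta]
  have e25 : ⁅x2, y5⁆ = 0 := by simp [hy5, h25, h24]
  have e34 : ⁅y3, x4⁆ = 0 := by simp [hy3, h34, h24]
  have e35 : ⁅y3, y5⁆ = 0 := by simp [hy3, hy5, h34, h24, h35, h25]
  have e45 : ⁅x4, y5⁆ = 0 := by simp [hy5, h45]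
  clear hy3 hy5 h13 h23 h15 h25 h34 h35 h45 hta
  by_cases hc : α = 0
  · rw [hc, zero_smul] at e23
    refine T25 hn ![1, a, 1] (by simp [Fin.forall_fin_succ, ha]) _ hS
      (br6 ?_ ?_ ?_ ?_ ?_ ?_ ?_ ?_ ?_ ?_ ?_ ?_ ?_ ?_ ?_) <;> simp [tabV, Fin.sum_univ_succ, *]
  · refine T23 hn ![1, a, 1, α] (by simp [Fin.forall_fin_succ, ha, hc]) _ hS
      (br6 ?_ ?_ ?_ ?_ ?_ ?_ ?_ ?_ ?_ ?_ ?_ ?_ ?_ ?_ ?_) <;> simp [tabV, Fin.sum_univ_succ, *]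

/-- normalised: `[x2,x3] = 0`, `S` diagonal, `S22 ≠ 0` -/
lemma c63D3 (hn : Module.finrank ℝ L = 6) {x1 x2 x3 x4 x5 z : L} {a b s u : ℝ} (hs : s ≠ 0)
    (hx : Sp ![x1, x2, x3, x4, x5, z]) (hz : ∀ x : L, ⁅x, z⁆ = 0)
    (h12 : ⁅x1, x2⁆ = x4) (h13 : ⁅x1, x3⁆ = x5) (h23 : ⁅x2, x3⁆ = 0)
    (h14 : ⁅x1, x4⁆ = a • z) (h15 : ⁅x1, x5⁆ = b • z) (h24 : ⁅x2, x4⁆ = s • z) (h25 : ⁅x2, x5⁆ = 0)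
    (h34 : ⁅x3, x4⁆ = 0) (h35 : ⁅x3, x5⁆ = u • z) (h45 : ⁅x4, x5⁆ = 0) : Good L := by
  obtain ⟨p, hp⟩ : ∃ t, t = - a / s := ⟨_, rfl⟩
  have hps : p * s = - a := by rw [hp]; field_simp
  clear hp
  by_cases hu : u = 0
  · rw [hu, zero_smul] at h35
    obtain ⟨y1, hy1⟩ : ∃ u, u = x1 + p • x2 := ⟨_, rfl⟩
    have hS : Sp ![y1, x2, x3, x4, x5, z] := by
      intro S hS
      simp [Fin.forall_fin_succ] at hS
      obtain ⟨m1, m2, m3, m4, m5, m6⟩ := hS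
      rw [hy1] at m1
      have k1 := (S.add_mem_iff_left (S.smul_mem _ m2)).1 m1
      apply hx
      simp [Fin.forall_fin_succ, *]
    have e12 : ⁅y1, x2⁆ = x4 := by simp [hy1, h12]
    have e13 : ⁅y1, x3⁆ = x5 := by simp [hy1, h13, h23]
    have e14 : ⁅y1, x4⁆ = 0 := by simp [hy1, h14, h24, smul_smul, hps]
    have e15 : ⁅y1, x5⁆ = b • z := by simp [hy1, h15, h25]
    clear hy1 hps h12 h13 h14 h15
    by_cases hb : b = 0
    · rw [hb, zero_smul] at e15
      refine T27 hn ![1, 1, s] (by simp [Fin.forall_fin_succ, hs]) _ hS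
        (br6 ?_ ?_ ?_ ?_ ?_ ?_ ?_ ?_ ?_ ?_ ?_ ?_ ?_ ?_ ?_) <;> simp [tabV, Fin.sum_univ_succ, *]
    · refine T20 hn ![1, 1, s, b] (by simp [Fin.forall_fin_succ, hs, hb]) _ hS
        (br6 ?_ ?_ ?_ ?_ ?_ ?_ ?_ ?_ ?_ ?_ ?_ ?_ ?_ ?_ ?_) <;> simp [tabV, Fin.sum_univ_succ, *]
  · obtain ⟨q, hq⟩ : ∃ t, t = - b / u := ⟨_, rfl⟩
    have hqs : q * u = - b := by rw [hq]; field_simp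
    clear hq
    obtain ⟨y1, hy1⟩ : ∃ u, u = x1 + (p • x2 + q • x3) := ⟨_, rfl⟩
    have hS : Sp ![y1, x2, x3, x4, x5, z] := by
      intro S hS
      simp [Fin.forall_fin_succ] at hS
      obtain ⟨m1, m2, m3, m4, m5, m6⟩ := hS
      rw [hy1] at m1
      have k1 := (S.add_mem_iff_left (S.add_mem (S.smul_mem _ m2) (S.smul_mem _ m3))).1 m1
      apply hx
      simp [Fin.forall_fin_succ, *]
    have e12 : ⁅y1, x2⁆ = x4 := by simp [hy1, h12, flipb h23]
    have e13 : ⁅y1, x3⁆ = x5 := by simp [hy1, h13, h23]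
    have e14 : ⁅y1, x4⁆ = 0 := by simp [hy1, h14, h24, h34, smul_smul, hps]
    have e15 : ⁅y1, x5⁆ = 0 := by simp [hy1, h15, h25, h35, smul_smul, hqs]
    clear hy1 hps hqs h12 h13 h14 h15
    refine T19 hn ![1, 1, s, u] (by simp [Fin.forall_fin_succ, hs, hu]) _ hS
      (br6 ?_ ?_ ?_ ?_ ?_ ?_ ?_ ?_ ?_ ?_ ?_ ?_ ?_ ?_ ?_) <;> simp [tabV, Fin.sum_univ_succ, *]

lemma c63D2 (hn : Module.finrank ℝ L = 6) {x1 x2 x3 x4 x5 z : L} {α a b s t u : ℝ} (hs : s ≠ 0)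
    (hx : Sp ![x1, x2, x3, x4, x5, z]) (hz : ∀ x : L, ⁅x, z⁆ = 0)
    (h12 : ⁅x1, x2⁆ = x4) (h13 : ⁅x1, x3⁆ = x5) (h23 : ⁅x2, x3⁆ = α • z)
    (h14 : ⁅x1, x4⁆ = a • z) (h15 : ⁅x1, x5⁆ = b • z) (h24 : ⁅x2, x4⁆ = s • z) (h25 : ⁅x2, x5⁆ = t • z)
    (h34 : ⁅x3, x4⁆ = t • z) (h35 : ⁅x3, x5⁆ = u • z) (h45 : ⁅x4, x5⁆ = 0) : Good L := by
  obtain ⟨p, hp⟩ : ∃ k, k = - t / s := ⟨_, rfl⟩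
  have hps : p * s = - t := by rw [hp]; field_simp
  obtain ⟨q, hq⟩ : ∃ k, k = - α / s := ⟨_, rfl⟩
  have hqs : q * s = - α := by rw [hq]; field_simp
  clear hp hq
  have hz' : ∀ x : L, ⁅z, x⁆ = 0 := fun x => by rw [flipb (hz x), neg_zero]
  have hS : Sp ![x1, x2, x3 + (p • x2 + q • x4), x4, x5 + (p • x4 + (q * a) • z), z] := by
    intro S hS
    simp [Fin.forall_fin_succ] at hS
    obtain ⟨m1, m2, m3, m4, m5, m6⟩ := hS
    have k3 := (S.add_mem_iff_left (S.add_mem (S.smul_mem _ m2) (S.smul_mem _ m4))).1 m3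
    have k5 := (S.add_mem_iff_left (S.add_mem (S.smul_mem _ m4) (S.smul_mem _ m6))).1 m5
    apply hx
    simp [Fin.forall_fin_succ, *]
  refine c63D3 hn (a := a) (b := b + p * a) (s := s) (u := u + p * t) hs hS hz h12 ?_ ?_ h14 ?_ h24 ?_ ?_ ?_ ?_
  · simp [h13, h12, h14, smul_smul]
  · simp [h23, h24, smul_smul, hqs]
  · simp [h15, h14, hz, smul_smul]; module
  · simp [h25, h24, hz, smul_smul, hps]
  · simp [h34, h24, smul_smul, hps]
  · simp [h35, h34, h25, h24, h45, hz, smul_smul]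
    match_scalars
    linear_combination p * hps
  · simp [h45, hz]

lemma c63D (hn : Module.finrank ℝ L = 6) {x1 x2 x3 x4 x5 z : L} {α a b s t u : ℝ}
    (h0 : ¬ (a = 0 ∧ b = 0 ∧ s = 0 ∧ t = 0 ∧ u = 0))
    (hx : Sp ![x1, x2, x3, x4, x5, z]) (hz : ∀ x : L, ⁅x, z⁆ = 0)
    (h12 : ⁅x1, x2⁆ = x4) (h13 : ⁅x1, x3⁆ = x5) (h23 : ⁅x2, x3⁆ = α • z)
    (h14 : ⁅x1, x4⁆ = a • z) (h15 : ⁅x1, x5⁆ = b • z) (h24 : ⁅x2, x4⁆ = s • z) (h25 : ⁅x2, x5⁆ = t • z)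
    (h34 : ⁅x3, x4⁆ = t • z) (h35 : ⁅x3, x5⁆ = u • z) (h45 : ⁅x4, x5⁆ = 0) : Good L := by
  have hSw : Sp ![x1, x3, x2, x5, x4, z] := by
    intro S hS
    simp [Fin.forall_fin_succ] at hS
    apply hx
    simp [Fin.forall_fin_succ, *]
  have h32 : ⁅x3, x2⁆ = (-α) • z := by rw [flipb h23, neg_smul]
  have h54 : ⁅x5, x4⁆ = 0 := by rw [flipb h45, neg_zero]
  by_cases hs : s = 0
  · by_cases hu : u = 0
    · by_cases ht : t = 0
      · subst hs hu ht
        rw [zero_smul] at h24 h25 h34 h35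
        by_cases ha : a = 0
        · by_cases hb : b = 0
          · tauto
          · exact c63D0 hn hb hSw hz h13 h12 h32 h15 h14 h35 h34 h25 h24 h54
        · exact c63D0 hn ha hx hz h12 h13 h23 h14 h15 h24 h25 h34 h35 h45
      · subst hs hu
        have hS : Sp ![x1, x2 + x3, x3, x4 + x5, x5, z] := by
          intro S hS
          simp [Fin.forall_fin_succ] at hS
          obtain ⟨m1, m2, m3, m4, m5, m6⟩ := hS
          have k2 := (S.add_mem_iff_left m3).1 m2
          have k5 := (S.add_mem_iff_left m5).1 m4
          apply hx
          simp [Fin.forall_fin_succ, *]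
        refine c63D2 hn (α := α) (a := a + b) (b := b) (s := 2 * t) (t := t) (u := 0) (by simpa using ht) hS hz ?_ h13 ?_ ?_ h15 ?_ ?_ ?_ h35 ?_
        · simp [h12, h13]
        · simp [h23]
        · simp [h14, h15]; module
        · simp [h24, h25, h34, h35]; module
        · simp [h25, h35]
        · simp [h34, h35]
        · simp [h45]
    · exact c63D2 hn hu hSw hz h13 h12 h32 h15 h14 h35 h34 h25 h24 h54
  · exact c63D2 hn hs hx hz h12 h13 h23 h14 h15 h24 h25 h34 h35 h45

variable [Module.Finite ℝ L]

lemma c63b (hn : Module.finrank ℝ L = 6) (hN : Nilp L) 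
    (hd : rk L 1 = 3) (hd2 : rk L 2 = 1) : Good L := by
  obtain ⟨a, b, c, hX⟩ := gens3 (L := L) (by omega)
  have e3 := drop hN 2 3 (by omega)
  have hb : DD L 3 = ⊥ := rk_bot (by omega)
  obtain ⟨x1, x2, x3, hX, m23⟩ := choose3 hX (by omega)
  obtain ⟨z, mz, hz0, G2, hz, hz', hdz⟩ := gen_one hd2 3 (by omega)
  have G1 := hX.next3.drop3 m23
  obtain ⟨α, h23⟩ := hdz _ m23
  have h25' := leibniz_lie x1 x2 x3
  generalize h12 : ⁅x1, x2⁆ = x4 at *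
  generalize h13 : ⁅x1, x3⁆ = x5 at *
  have m4 : x4 ∈ DD L 1 := by rw [← h12]; exact lie_mem1 _ _
  have m5 : x5 ∈ DD L 1 := by rw [← h13]; exact lie_mem1 _ _
  have h45 : ⁅x4, x5⁆ = 0 := DD_eq_zero hb (DD_lie2 m4 m5)
  obtain ⟨a, h14⟩ := hdz _ (DD_lie x1 m4)
  obtain ⟨b, h15⟩ := hdz _ (DD_lie x1 m5)
  obtain ⟨s, h24⟩ := hdz _ (DD_lie x2 m4)
  obtain ⟨t, h34⟩ := hdz _ (DD_lie x3 m4)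
  obtain ⟨u, h35⟩ := hdz _ (DD_lie x3 m5)
  have h25 : ⁅x2, x5⁆ = t • z := by
    rw [h23, lie_smul, hz, smul_zero, flipb h34] at h25'
    rw [← sub_eq_zero, h25']; abel
  have hS : Sp ![x1, x2, x3, x4, x5, z] := by
    intro S hS
    simp [Fin.forall_fin_succ] at hS
    have s3 : DD L 3 ≤ S := hb ▸ bot_le
    have s2 := G2 S s3 (by simp [Set.insert_subset_iff, hS])
    have s1 := G1 S s2 (by simp [Set.insert_subset_iff, hS])
    exact top_le_iff.1 (hX S s1 (by simp [Set.insert_subset_iff, hS]))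
  refine c63D hn ?_ hS hz h12 h13 h23 h14 h15 h24 h25 h34 h35 h45
  rintro ⟨rfl, rfl, rfl, rfl, rfl⟩
  have := hX.next32 G1 m4 m5 ⊥ hb.le (by simp [Set.insert_subset_iff, h14, h15, h24, h25, h34, h35])
  exact hz0 (by simpa using this mz)

lemma c63 (hn : Module.finrank ℝ L = 6) (hN : Nilp L) (hZ : CZ L)
    (hd : rk L 1 = 3) : Good L := by
  have e2 := drop hN 1 2 (by omega)
  by_cases h2 : rk L 2 = 2
  · exact c63a hn hN hZ hd h2
  by_cases h1 : rk L 2 = 1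
  · exact c63b hn hN hd h1
  have hb : DD L 2 = ⊥ := rk_bot (by omega)
  obtain ⟨x1, x2, x3, hX⟩ := gens3 (L := L) (by omega)
  have G1 := hX.next3
  generalize h12 : ⁅x1, x2⁆ = x4 at *
  generalize h13 : ⁅x1, x3⁆ = x5 at *
  generalize h23 : ⁅x2, x3⁆ = x6 at *
  have h4 : ∀ x : L, ⁅x, x4⁆ = 0 := fun x => DD_eq_zero hb (DD_lie _ (by rw [← h12]; exact lie_mem1 _ _))
  have h5 : ∀ x : L, ⁅x, x5⁆ = 0 := fun x => DD_eq_zero hb (DD_lie _ (by rw [← h13]; exact lie_mem1 _ _))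
  have h6 : ∀ x : L, ⁅x, x6⁆ = 0 := fun x => DD_eq_zero hb (DD_lie _ (by rw [← h23]; exact lie_mem1 _ _))
  have hS : Sp ![x1, x2, x3, x4, x5, x6] := by
    intro S hS
    simp [Fin.forall_fin_succ] at hS
    have s2 : DD L 2 ≤ S := hb ▸ bot_le
    have s1 := G1 S s2 (by simp [Set.insert_subset_iff, hS])
    exact top_le_iff.1 (hX S s1 (by simp [Set.insert_subset_iff, hS]))
  refine T26 hn ![1, 1, 1] (by simp [Fin.forall_fin_succ]) _ hS
    (br6 ?_ ?_ ?_ ?_ ?_ ?_ ?_ ?_ ?_ ?_ ?_ ?_ ?_ ?_ ?_) <;> simp [tabV, Fin.sum_univ_succ, *]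
end

section
set_option linter.unusedSectionVars false
set_option linter.unusedSimpArgs false
variable {L : Type} [LieRing L] [LieAlgebra ℝ L]

lemma c64Z1 (hn : Module.finrank ℝ L = 6) {x1 x2 x3 x4 x5 x6 : L} {a b c : ℝ} (hb : b ≠ 0)
    (hx : Sp ![x1, x2, x3, x4, x5, x6]) (h5 : ∀ x : L, ⁅x, x5⁆ = 0) (h6 : ∀ x : L, ⁅x, x6⁆ = 0)
    (h12 : ⁅x1, x2⁆ = 0) (h13 : ⁅x1, x3⁆ = x5) (h14 : ⁅x1, x4⁆ = x6)
    (h23 : ⁅x2, x3⁆ = a • x5 + b • x6) (h24 : ⁅x2, x4⁆ = c • x5 + (-a) • x6) (h34 : ⁅x3, x4⁆ = 0) : Good L := by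
  obtain ⟨y4, hy4⟩ : ∃ u, u = a • x3 + b • x4 := ⟨_, rfl⟩
  obtain ⟨y6, hy6⟩ : ∃ u, u = a • x5 + b • x6 := ⟨_, rfl⟩
  have hS : Sp ![x1, x2, x3, y4, x5, y6] := by
    intro S hS
    simp [Fin.forall_fin_succ] at hS
    obtain ⟨m1, m2, m3, m4, m5, m6⟩ := hS
    rw [hy4] at m4
    rw [hy6] at m6
    have k2 := (S.smul_mem_iff hb).1 ((S.add_mem_iff_right (S.smul_mem _ m3)).1 m4)
    have k5 := (S.smul_mem_iff hb).1 ((S.add_mem_iff_right (S.smul_mem _ m5)).1 m6)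
    apply hx
    simp [Fin.forall_fin_succ, *]
  have e14 : ⁅x1, y4⁆ = y6 := by simp [hy4, hy6, h13, h14]
  have e23 : ⁅x2, x3⁆ = y6 := by simp [hy6, h23]
  have e24 : ⁅x2, y4⁆ = (a ^ 2 + b * c) • x5 := by simp [hy4, h23, h24]; module
  have e34 : ⁅x3, y4⁆ = 0 := by simp [hy4, h34]
  have e6 : ∀ x : L, ⁅x, y6⁆ = 0 := by simp [hy6, h5, h6]
  clear hy4 hy6 h14 h23 h24 h34 h6
  by_cases hc : a ^ 2 + b * c = 0
  · rw [hc, zero_smul] at e24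
    refine T22z hn ![1, 1, 1] (by simp [Fin.forall_fin_succ]) _ hS
      (br6 ?_ ?_ ?_ ?_ ?_ ?_ ?_ ?_ ?_ ?_ ?_ ?_ ?_ ?_ ?_) <;> simp [tabV, Fin.sum_univ_succ, *]
  · generalize a ^ 2 + b * c = δ at *
    refine T22 hn ![1, 1, 1, δ] (by simp [Fin.forall_fin_succ, hc]) _ hS
      (br6 ?_ ?_ ?_ ?_ ?_ ?_ ?_ ?_ ?_ ?_ ?_ ?_ ?_ ?_ ?_) <;> simp [tabV, Fin.sum_univ_succ, *]

lemma c64Z (hn : Module.finrank ℝ L = 6) {x1 x2 x3 x4 x5 x6 : L} {a b c : ℝ}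
    (h0 : ¬ (a = 0 ∧ b = 0 ∧ c = 0))
    (hx : Sp ![x1, x2, x3, x4, x5, x6]) (h5 : ∀ x : L, ⁅x, x5⁆ = 0) (h6 : ∀ x : L, ⁅x, x6⁆ = 0)
    (h12 : ⁅x1, x2⁆ = 0) (h13 : ⁅x1, x3⁆ = x5) (h14 : ⁅x1, x4⁆ = x6)
    (h23 : ⁅x2, x3⁆ = a • x5 + b • x6) (h24 : ⁅x2, x4⁆ = c • x5 + (-a) • x6) (h34 : ⁅x3, x4⁆ = 0) : Good L := by
  by_cases hb : b = 0
  · by_cases hc : c = 0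
    · subst hb hc
      have ha : a ≠ 0 := by tauto
      have hS : Sp ![x1, x2, x3 + x4, x4, x5 + x6, x6] := by
        intro S hS
        simp [Fin.forall_fin_succ] at hS
        obtain ⟨m1, m2, m3, m4, m5, m6⟩ := hS
        have k2 := (S.add_mem_iff_left m4).1 m3
        have k5 := (S.add_mem_iff_left m6).1 m5
        apply hx
        simp [Fin.forall_fin_succ, *]
      refine c64Z1 hn (a := a) (b := -2 * a) (c := 0) (by simpa using ha) hS ?_ h6 h12 ?_ h14 ?_ ?_ ?_
      · simp [h5, h6]
      · simp [h13, h14]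
      · simp [h23, h24]; module
      · simp [h24]
      · simp [h34]
    · have hS : Sp ![x1, x2, x4, x3, x6, x5] := by
        intro S hS
        simp [Fin.forall_fin_succ] at hS
        apply hx
        simp [Fin.forall_fin_succ, *]
      refine c64Z1 hn (a := -a) (b := c) (c := b) hc hS h6 h5 h12 h14 h13 ?_ ?_ ?_
      · rw [h24, add_comm]
      · rw [h23, add_comm, neg_neg]
      · rw [flipb h34, neg_zero]
  · exact c64Z1 hn hb hx h5 h6 h12 h13 h14 h23 h24 h34

variable [Module.Finite ℝ L]

lemma dec_pair {k : ℕ} (hk : rk L k = 2) {u v : L} (hu : u ∈ DD L k) (hv : v ∈ DD L k)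
    (h : LinearIndependent ℝ ![u, v]) {y : L} (hy : y ∈ DD L k) : ∃ a b : ℝ, y = a • u + b • v := by
  have h1 : Submodule.span ℝ (Set.range ![u, v]) ≤ DD L k := by
    rw [Submodule.span_le]; rintro _ ⟨i, rfl⟩; fin_cases i <;> assumption
  have h2 := finrank_span_eq_card h
  have h3 := Submodule.eq_of_le_of_finrank_le h1 (by rw [h2]; unfold rk at hk; simp [hk])
  rw [← h3] at hy
  simp at hy
  obtain ⟨a, b, e⟩ := Submodule.mem_span_pair.1 hy
  exact ⟨b, a, by rw [← e, add_comm]⟩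

lemma ex_rank2 (hb : rk L 1 = 2) :
    ∃ u v w : L, LinearIndependent ℝ ![⁅u, v⁆, ⁅u, w⁆] := by
  have key : ∀ P : Submodule ℝ L, Module.finrank ℝ P ≤ 1 → ∃ a b : L, ⁅a, b⁆ ∉ P := by
    intro P hP
    by_contra hc
    push Not at hc
    have : DD L 1 ≤ P := by
      refine Submodule.span_le.2 ?_
      rintro z ⟨x, y, hy, rfl⟩
      exact hc x y
    have := Submodule.finrank_mono this
    unfold rk at hb
    omega
  obtain ⟨x1, x2, h12⟩ := key ⊥ (by simp)
  simp only [Submodule.mem_bot] at h12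
  by_contra hc
  push Not at hc
  have n1 : ∀ u v w : L, ⁅u, v⁆ ≠ 0 → ∃ r : ℝ, r • ⁅u, v⁆ = ⁅u, w⁆ := by
    intro u v w huv
    by_contra h
    push Not at h
    exact hc u v w ((LinearIndependent.pair_iff' huv).2 h)
  have k1 := fun y => n1 x1 x2 y h12
  have k2 : ∀ y, ∃ r : ℝ, r • ⁅x1, x2⁆ = ⁅x2, y⁆ := by
    intro y
    obtain ⟨r, hr⟩ := n1 x2 x1 y (by rw [← lie_skew x2 x1]; exact neg_ne_zero.2 h12)
    exact ⟨-r, by rw [← hr, ← lie_skew x2 x1, smul_neg, neg_smul]⟩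
  obtain ⟨a, b, hab⟩ := key (Submodule.span ℝ {⁅x1, x2⁆}) (finrank_span_singleton h12).le
  obtain ⟨p, hp⟩ := k1 a
  obtain ⟨q, hq⟩ := k2 a
  obtain ⟨s, hs⟩ := k1 b
  obtain ⟨t, ht⟩ := k2 b
  have e1 : ⁅x1 + (a - p • x2 + q • x1), x2⁆ = ⁅x1, x2⁆ := by
    have : ⁅a, x2⁆ = -(q • ⁅x1, x2⁆) := by rw [← lie_skew, hq]
    simp [this]
  obtain ⟨r, hr⟩ := n1 (x1 + (a - p • x2 + q • x1)) x2 b (by rw [e1]; exact h12)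
  rw [e1] at hr
  simp [← hs, ← ht] at hr
  apply hab
  rw [Submodule.mem_span_singleton]
  refine ⟨r - s + p * t - q * s, ?_⟩
  rw [sub_smul, add_smul, sub_smul, hr]
  module

lemma c64a (hn : Module.finrank ℝ L = 6) (hZ : CZ L) (hd : rk L 1 = 2) (h2 : rk L 2 = 0) : Good L := by
  have hb := rk_bot h2
  obtain ⟨u, v, w, hli⟩ := ex_rank2 hd
  generalize huv : ⁅u, v⁆ = z1 at *
  generalize huw : ⁅u, w⁆ = z0 at *
  have m1 : z1 ∈ DD L 1 := by rw [← huv]; exact lie_mem1 _ _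
  have m0 : z0 ∈ DD L 1 := by rw [← huw]; exact lie_mem1 _ _
  have h1 : ∀ x : L, ⁅x, z1⁆ = 0 := fun x => DD_eq_zero hb (DD_lie _ m1)
  have h0 : ∀ x : L, ⁅x, z0⁆ = 0 := fun x => DD_eq_zero hb (DD_lie _ m0)
  have dec := fun y hy => dec_pair hd m1 m0 hli (y := y) hy
  have hK := ker_rank (n := 4) (m := 2) ((LieModule.toEnd ℝ L L u).codRestrict (DD L 1) (fun y => lie_mem1 u y)) (by omega) hd
  obtain ⟨u', hu', hu''⟩ : ∃ u', ⁅u, u'⁆ = 0 ∧ u' ∉ Submodule.span ℝ (Set.range ![u, z1, z0]) := by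
    by_contra hc
    push Not at hc
    have : LinearMap.ker ((LieModule.toEnd ℝ L L u).codRestrict (DD L 1) (fun y => lie_mem1 u y)) ≤ Submodule.span ℝ (Set.range ![u, z1, z0]) := by
      intro y hy
      exact hc y (congrArg Subtype.val hy)
    have h3 := Submodule.finrank_mono this
    have h4 := finrank_range_le_card (R := ℝ) ![u, z1, z0]
    simp [Set.finrank] at h4 h3
    omega
  obtain ⟨a, b, h23⟩ := dec _ (lie_mem1 u' v)
  obtain ⟨c, d, h24⟩ := dec _ (lie_mem1 u' w)
  obtain ⟨e, f, h34⟩ := dec _ (lie_mem1 v w)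
  have hli' := LinearIndependent.pair_iff.1 hli
  have z1' : z1 ≠ 0 := by
    rintro rfl
    have := hli' 1 0 (by simp)
    simp at this
  have hx : Sp ![u, u', v, w, z1, z0] := by
    refine Sp.of_li hn ?_
    rw [Fintype.linearIndependent_iff]
    intro g hg
    simp [Fin.sum_univ_succ] at hg
    have a1 := congrArg (fun x => ⁅u, x⁆) hg
    simp [hu', huv, huw, h1, h0] at a1
    obtain ⟨a2, a3⟩ := hli' _ _ a1
    simp [a2, a3] at hg
    have a4 : g 1 = 0 := by
      by_contra h
      apply hu''
      refine mem_of_comb h (w := -(g 0 • u + g 4 • z1 + g 5 • z0)) ?_ ?_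
      · have := fun i => Submodule.subset_span (R := ℝ) (Set.mem_range_self (f := ![u, z1, z0]) i)
        exact Submodule.neg_mem _ (Submodule.add_mem _ (Submodule.add_mem _ (Submodule.smul_mem _ _ (this 0)) (Submodule.smul_mem _ _ (this 1))) (Submodule.smul_mem _ _ (this 2)))
      · rw [← sub_eq_zero, ← hg]; abel
    simp [a4] at hg
    have a5 := congrArg (fun x => ⁅v, x⁆) hg
    simp [flipb huv, h1, h0, z1'] at a5
    simp [a5] at hg
    obtain ⟨a6, a7⟩ := hli' _ _ hg
    intro i
    fin_cases i <;> assumption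
  have hS : Sp ![u, u' + (-(a + d) / 2) • u, v + (-f) • u, w + e • u, z1, z0] := by
    intro S hS
    simp only [Fin.forall_fin_succ] at hS
    simp only [Matrix.cons_val_zero, Matrix.cons_val_succ] at hS
    obtain ⟨m1, m2, m3, m4, m5, m6, -⟩ := hS
    have k2 := (S.add_mem_iff_left (S.smul_mem _ m1)).1 m2
    have k3 := (S.add_mem_iff_left (S.smul_mem _ m1)).1 m3
    have k4 := (S.add_mem_iff_left (S.smul_mem _ m1)).1 m4
    apply hx
    simp [Fin.forall_fin_succ, *]
  refine c64Z hn (a := (a - d) / 2) (b := b) (c := c) ?_ hS h1 h0 ?_ ?_ ?_ ?_ ?_ ?_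
  · rintro ⟨a1, rfl, rfl⟩
    have had : d = a := by linarith
    subst had
    have hc := hZ (u' + (-d) • u) (hx.central (by
      simp [Fin.forall_fin_succ, hu', flipb hu', flipb h23, flipb h24, flipb huv, flipb huw, flipb (h1 _), flipb (h0 _)]))
    obtain ⟨p, q, hpq⟩ := dec _ hc
    apply hu''
    have := fun i => Submodule.subset_span (R := ℝ) (Set.mem_range_self (f := ![u, z1, z0]) i)
    have e : u' = d • u + (p • z1 + q • z0) := by rw [← hpq]; module
    rw [e]
    exact Submodule.add_mem _ (Submodule.smul_mem _ _ (this 0)) (Submodule.add_mem _ (Submodule.smul_mem _ _ (this 1)) (Submodule.smul_mem _ _ (this 2)))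
  · simp [hu']
  · simp [huv]
  · simp [huw]
  · simp [h23, huv, flipb hu']; module
  · simp [h24, huw, flipb hu']; module
  · simp [h34, huw, flipb huv]
end

section
set_option linter.unusedSectionVars false
set_option linter.unusedSimpArgs false
variable {L : Type} [LieRing L] [LieAlgebra ℝ L]

lemma exists_engel (h : DD L 2 ≠ ⊥) : ∃ a b : L, ⁅a, ⁅a, b⁆⁆ ≠ 0 := by
  by_contra hc
  push Not at hc
  apply h
  rw [eq_bot_iff]
  have P : ∀ a c b : L, ⁅a, ⁅c, b⁆⁆ = -⁅c, ⁅a, b⁆⁆ := by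
    intro a c b
    have h1 := hc (a + c) b
    simp only [add_lie, lie_add, hc, zero_add, add_zero] at h1
    exact eq_neg_of_add_eq_zero_right h1
  have Q : ∀ x a b : L, ⁅x, ⁅a, b⁆⁆ = 0 := by
    intro x a b
    have h1 := jac x a b
    have h2 := P a b x
    have h3 : ⁅b, ⁅a, x⁆⁆ = -⁅x, ⁅a, b⁆⁆ := by
      rw [← lie_skew a x, lie_neg, P b x a, neg_neg, ← lie_skew b a, lie_neg]
    rw [h2, sub_neg_eq_add, h3] at h1
    have h4 : (3 : ℝ) • ⁅x, ⁅a, b⁆⁆ = 0 := by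
      rw [← sub_eq_zero] at h1
      rw [← h1]; module
    simpa using h4
  refine Submodule.span_le.2 ?_
  rintro z ⟨x, y, hy, rfl⟩
  have : DD L 1 ≤ LinearMap.ker (LieModule.toEnd ℝ L L x) := by
    refine Submodule.span_le.2 ?_
    rintro z ⟨a, b, -, rfl⟩
    simpa using Q x a b
  simpa using this hy

variable [Module.Finite ℝ L]

lemma c64b (hn : Module.finrank ℝ L = 6) (hN : Nilp L) (hZ : CZ L) (hd : rk L 1 = 2) (h2 : rk L 2 = 1) :
    Good L := by
  have e3 := drop hN 2 3 (by omega)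
  obtain ⟨z', mz', hz0', -, hzc', -, hdz'⟩ := gen_one h2 3 (by omega)
  obtain ⟨x1, y2, h112⟩ := exists_engel (L := L) (fun h => hz0' (by simpa [h] using mz'))
  obtain ⟨x, hx⟩ : ∃ x, ⁅x1, y2⁆ = x := ⟨_, rfl⟩
  obtain ⟨z, hz⟩ : ∃ z, ⁅x1, x⁆ = z := ⟨_, rfl⟩
  rw [hx, hz] at h112
  have mx : x ∈ DD L 1 := by rw [← hx]; exact lie_mem1 _ _
  have mz : z ∈ DD L 2 := by rw [← hz]; exact DD_lie _ mx
  have hzr : ∃ r : ℝ, z = r • z' := hdz' z mz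
  obtain ⟨r0, hr0⟩ := hzr
  have hr0' : r0 ≠ 0 := by rintro rfl; simp at hr0; exact h112 hr0
  have hzc : ∀ y : L, ⁅y, z⁆ = 0 := by intro y; rw [hr0]; simp [hzc' y]
  have hzc2 : ∀ y : L, ⁅z, y⁆ = 0 := by intro y; simp [flipb (hzc y)]
  have hdz : ∀ y ∈ DD L 2, ∃ r : ℝ, y = r • z := by
    intro y hy
    obtain ⟨r, hr⟩ := hdz' y hy
    exact ⟨r / r0, by rw [hr, hr0, smul_smul, div_mul_cancel₀ _ hr0']⟩
  obtain ⟨s, hs⟩ := hdz _ (DD_lie y2 mx)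
  obtain ⟨x2, hx2⟩ : ∃ u, u = y2 - s • x1 := ⟨_, rfl⟩
  have h12 : ⁅x1, x2⁆ = x := by rw [hx2]; simp [hx]
  have h2x : ⁅x2, x⁆ = 0 := by rw [hx2]; simp [hs, hz]
  have hx1 : ⁅x, x1⁆ = -z := flipb hz
  have hx2' : ⁅x, x2⁆ = 0 := by simp [flipb h2x]
  have mz1 : z ∈ DD L 1 := DD_anti (by norm_num) mz
  have hli : ∀ a b : ℝ, a • x + b • z = 0 → a = 0 ∧ b = 0 := by
    intro a b h
    have h1 := congrArg (fun y => ⁅x1, y⁆) h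
    simp [hz, hzc, h112] at h1
    simp [h1, h112] at h
    exact ⟨h1, h⟩
  have dec := fun y hy => dec_pair hd mx mz1 (LinearIndependent.pair_iff.2 hli) (y := y) hy
  obtain ⟨f, fz⟩ := exists_f h112
  have hfz : ∀ y ∈ DD L 2, y = f y • z := by
    intro y hy
    obtain ⟨r, rfl⟩ := hdz y hy
    simp [fz]
  -- elements of D1 killed by x1
  have kz : ∀ y ∈ DD L 1, ⁅x1, y⁆ = 0 → y = f y • z := by
    intro y hy h
    obtain ⟨a, b, rfl⟩ := dec y hy
    simp [hz, hzc, h112] at h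
    simp [h, fz]
  obtain ⟨g1, hg1⟩ : ∃ g : L →ₗ[ℝ] ℝ × DD L 1, g = (adf f x).prod ((LieModule.toEnd ℝ L L x1).codRestrict (DD L 1) (fun y => lie_mem1 x1 y)) := ⟨_, rfl⟩
  have xx : ∀ y : L, ⁅x, y⁆ = f ⁅x, y⁆ • z := by
    intro y
    apply hfz
    rw [← lie_skew]
    exact Submodule.neg_mem _ (DD_lie _ mx)
  have memN : ∀ y : L, y ∈ LinearMap.ker g1 ↔ ⁅x, y⁆ = 0 ∧ ⁅x1, y⁆ = 0 := by
    intro y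
    rw [LinearMap.mem_ker, hg1]
    constructor
    · intro h
      have h1 : f ⁅x, y⁆ = 0 := congrArg Prod.fst h
      have h3 : ⁅x1, y⁆ = 0 := congrArg (fun u => (u.2 : L)) h
      exact ⟨by rw [xx, h1, zero_smul], h3⟩
    · rintro ⟨h1, h3⟩
      refine Prod.ext ?_ (Subtype.ext h3)
      show f ⁅x, y⁆ = 0
      rw [h1, map_zero]
  have NN : ∀ y w : L, ⁅x1, y⁆ = 0 → ⁅x1, w⁆ = 0 → ⁅y, w⁆ = f ⁅y, w⁆ • z := by
    intro y w hy hw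
    apply kz _ (lie_mem1 _ _)
    rw [leibniz_lie, hy, hw]; simp
  have N2 : ∀ y : L, ⁅x, y⁆ = 0 → ⁅x1, y⁆ = 0 → ⁅x2, y⁆ = f ⁅x2, y⁆ • z := by
    intro y hy hw
    apply kz _ (lie_mem1 _ _)
    rw [leibniz_lie, h12, hy, hw]; simp
  obtain ⟨x4, x5, h4x, h14, h5x, h15, h45⟩ : ∃ x4 x5 : L, ⁅x, x4⁆ = 0 ∧ ⁅x1, x4⁆ = 0 ∧ ⁅x, x5⁆ = 0 ∧ ⁅x1, x5⁆ = 0 ∧ ⁅x4, x5⁆ = z := by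
    by_contra hc
    have comm : ∀ y w : L, ⁅x, y⁆ = 0 → ⁅x1, y⁆ = 0 → ⁅x, w⁆ = 0 → ⁅x1, w⁆ = 0 → ⁅y, w⁆ = 0 := by
      intro y w a1 a2 a3 a4
      by_contra h
      have h1 := NN y w a2 a4
      have h3 : f ⁅y, w⁆ ≠ 0 := by intro h3; rw [h3, zero_smul] at h1; exact h h1
      refine hc ⟨(f ⁅y, w⁆)⁻¹ • y, w, by simp [a1], by simp [a2], a3, a4, ?_⟩
      rw [smul_lie, h1, smul_smul]
      simp [fz, h3]
    have hK := ker_rank (n := 2) (m := 4) (g1.prod (adf f x2)) (by omega) (by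
      unfold rk at hd; simp [hd])
    have hle : LinearMap.ker (g1.prod (adf f x2)) ≤ Submodule.span ℝ {z} := by
      intro y hy
      have a0 : y ∈ LinearMap.ker g1 := congrArg Prod.fst hy
      obtain ⟨a1, a2⟩ := (memN y).1 a0
      have a3 : f ⁅x2, y⁆ = 0 := congrArg Prod.snd hy
      have a4 := N2 y a1 a2
      rw [a3, zero_smul] at a4
      have cen : ∀ w : L, ⁅w, y⁆ = 0 := by
        intro w
        obtain ⟨g, r, hgr⟩ := dec _ (lie_mem1 x1 w)
        have b1 := comm (w + f ⁅x, w⁆ • x1 - g • x2 - r • x) y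
          (by simp only [lie_sub, lie_add, lie_smul, hx1, hx2', lie_self, smul_zero, sub_zero, smul_neg, ← xx, add_neg_cancel]) (by simp [h12, hz, hgr]) a1 a2
        simpa [a1, a2, a4] using b1
      rw [kz y (hZ y cen) a2]
      exact Submodule.smul_mem _ _ (Submodule.mem_span_singleton_self z)
    have h5 := Submodule.finrank_mono hle
    rw [finrank_span_singleton h112] at h5
    omega
  have h24 := N2 x4 h4x h14
  have h25 := N2 x5 h5x h15
  obtain ⟨a, ha⟩ : ∃ a, f ⁅x2, x4⁆ = a := ⟨_, rfl⟩
  obtain ⟨b, hb⟩ : ∃ a, f ⁅x2, x5⁆ = a := ⟨_, rfl⟩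
  rw [ha] at h24
  rw [hb] at h25
  obtain ⟨w, hw⟩ : ∃ u, u = x2 + a • x5 - b • x4 := ⟨_, rfl⟩
  have h54 : ⁅x5, x4⁆ = -z := flipb h45
  have h1w : ⁅x1, w⁆ = x := by rw [hw]; simp [h12, h14, h15]
  have hwx : ⁅w, x⁆ = 0 := by rw [hw]; simp [h2x, flipb h4x, flipb h5x]
  have hw4 : ⁅w, x4⁆ = 0 := by rw [hw]; simp [h24, h54]
  have hw5 : ⁅w, x5⁆ = 0 := by rw [hw]; simp [h25, h45]
  have hS : Sp ![x1, w, x, x4, x5, z] := by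
    refine Sp.of_li hn ?_
    rw [Fintype.linearIndependent_iff]
    intro g hg
    simp [Fin.sum_univ_succ] at hg
    have a1 := congrArg (fun y => ⁅x, y⁆) hg
    simp [hx1, flipb hwx, h4x, h5x, hzc, h112] at a1
    simp [a1] at hg
    have a2 := congrArg (fun y => ⁅x1, y⁆) hg
    simp [h1w, hz, h14, h15, hzc] at a2
    obtain ⟨a2, a3⟩ := hli _ _ a2
    simp [a2, a3] at hg
    have a4 := congrArg (fun y => ⁅x4, y⁆) hg
    simp [h45, hzc, h112] at a4
    simp [a4] at hg
    have a5 := congrArg (fun y => ⁅x5, y⁆) hg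
    simp [h54, hzc, h112] at a5
    simp [a5, h112] at hg
    intro i
    fin_cases i <;> assumption
  have hx4 := h4x
  have hx5 := h5x
  clear hw hx2 ha hb
  refine T10 hn ![1,1,1] (by simp [Fin.forall_fin_succ]) _ hS (br6 ?_ ?_ ?_ ?_ ?_ ?_ ?_ ?_ ?_ ?_ ?_ ?_ ?_ ?_ ?_) <;>
    simp [tabV, Fin.sum_univ_succ, h1w, hz, h14, h15, hzc, hwx, hw4, hw5, h4x, h5x, h45]

lemma c64 (hn : Module.finrank ℝ L = 6) (hN : Nilp L) (hZ : CZ L) (hd : rk L 1 = 2) : Good L := by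
  have := drop hN 1 2 (by omega)
  obtain h | h : rk L 2 = 0 ∨ rk L 2 = 1 := by omega
  · exact c64a hn hZ hd h
  · exact c64b hn hN hZ hd h

lemma rk1_zero (h : rk L 1 = 0) : Good L := by
  refine good_abelian fun x y => ?_
  exact DD_eq_zero (rk_bot h) (lie_mem1 x y)
end

theorem classify (n : ℕ) : ∀ (L : Type) [LieRing L] [LieAlgebra ℝ L] [Module.Finite ℝ L],
    n ≤ 6 → Module.finrank ℝ L = n → Nilp L → Good L := by
  induction n with
  | zero =>
    intro L _ _ _ _ hn hN
    haveI := Module.finrank_zero_iff.1 hn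
    exact good_abelian fun x y => Subsingleton.elim _ _
  | succ n ih =>
    intro L _ _ _ h6 hn hN
    by_cases hZ : CZ L
    · have d0 : rk L 1 < n + 1 := by
        have := drop hN 0 1 (by unfold rk; rw [DD_zero_rank]; omega)
        have h2 : rk L 0 = n + 1 := by unfold rk; rw [DD_zero_rank]; omega
        omega
      by_cases h0 : rk L 1 = 0
      · exact rk1_zero h0
      by_cases h1 : rk L 1 = 1
      · exact cr1 hN hZ h1 (by omega)
      by_cases hd : rk L 1 = n
      · exact absurd (d1_imp hN (by omega)) h0
      obtain h | h | h | h | h | h : (n + 1 = 4 ∧ rk L 1 = 2) ∨ (n + 1 = 5 ∧ rk L 1 = 3) ∨ (n + 1 = 5 ∧ rk L 1 = 2) ∨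
        (n + 1 = 6 ∧ rk L 1 = 4) ∨ (n + 1 = 6 ∧ rk L 1 = 3) ∨ (n + 1 = 6 ∧ rk L 1 = 2) := by omega
      · exact c42 (by omega) hN h.2
      · exact c52 (by omega) hN h.2
      · exact c53 (by omega) hN hZ h.2
      · exact c62 (by omega) hN h.2
      · exact c63 (by omega) hN hZ h.2
      · exact c64 (by omega) hN hZ h.2
    · unfold CZ at hZ
      push Not at hZ
      obtain ⟨z, hz, hz1⟩ := hZ
      exact good_split hN z hz hz1 fun K _ _ _ hK hf => ih K (by omega) (by omega) hK

lemma lcs_le {n : ℕ} (μ : Law n) (h : IsLieLaw μ) (k : ℕ) :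
    letI := laRing μ h
    letI := laAlg μ h
    ∀ x : LA μ, x ∈ DD (LA μ) k → (x : Fin n → ℝ) ∈ lcs μ k := by
  let _ := laRing μ h
  let _ := laAlg μ h
  induction k with
  | zero => intro x _; exact Submodule.mem_top (R := ℝ) (M := Fin n → ℝ)
  | succ k ih =>
    intro x hx
    have key : DD (LA μ) (k + 1) ≤ (show Submodule ℝ (LA μ) from lcs μ (k + 1)) := by
      refine Submodule.span_le.2 ?_
      rintro z ⟨x, y, hy, rfl⟩
      exact Submodule.subset_span (R := ℝ) (M := Fin n → ℝ) ⟨x, y, ih y hy, rfl⟩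
    exact key hx

lemma good_of_law {n : ℕ} (μ : Law n) (h : IsNilpotentLaw μ) (hn : n ≤ 6) :
    @Good (LA μ) (laRing μ h.1) (laAlg μ h.1) := by
  let _ := laRing μ h.1
  let _ := laAlg μ h.1
  refine classify n (LA μ) hn (LA_finrank μ) ?_
  obtain ⟨k, hk⟩ := h.2
  refine ⟨k, ?_⟩
  rw [eq_bot_iff]
  intro x hx
  have := lcs_le μ h.1 k x hx
  rw [hk] at this
  exact this
/-- every decomposable 7-dimensional nilpotent Lie algebra is an
Einstein nilradical. -/
theorem stmt_18 (μ : Law 7) (hμ : IsNilpotentLaw μ)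
    (hdec : ∃ p q : ℕ, 0 < p ∧ 0 < q ∧ p + q = 7 ∧
      ∃ μ₁ : Law p, ∃ μ₂ : Law q, IsNilpotentLaw μ₁ ∧ IsNilpotentLaw μ₂ ∧
        ∃ T : (Fin 7 → ℝ) ≃ₗ[ℝ] (Fin p → ℝ) × (Fin q → ℝ),
          ∀ x y, T (μ x y) = (μ₁ (T x).1 (T y).1, μ₂ (T x).2 (T y).2)) :
    IsEinsteinNilradical μ := by
  obtain ⟨p, q, hp, hq, hpq, μ₁, μ₂, h₁, h₂, T, hT⟩ := hdec
  have g₁ := good_of_law μ₁ h₁ (by omega)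
  have g₂ := good_of_law μ₂ h₂ (by omega)
  refine einstein_of_good μ hμ.1 ?_
  let _ := laRing μ hμ.1
  let _ := laAlg μ hμ.1
  let _ := laRing μ₁ h₁.1
  let _ := laAlg μ₁ h₁.1
  let _ := laRing μ₂ h₂.1
  let _ := laAlg μ₂ h₂.1
  let T' : LA μ ≃ₗ[ℝ] LA μ₁ × LA μ₂ := T
  exact good_of_sum g₁ g₂ T' hT
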